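/- Let λ be a d-invariant rational lamination with real extension λ̂. For A a λ̂-class or an infinite λ-unlinked class, let δ(A) be the degree of m_d : A → m_d(A) (for unlinked classes, the degree of the induced circle covering). Then d = 1 + Σ_{C ∈ Crit(λ)} (δ(C) − 1), where Crit(λ) is the set of critical elements (classes or infinite unlinked classes with δ > 1). -/

import Mathlib

noncomputable section
open Set Function

/-- The circle `ℝ/ℤ`. -/
abbrev Circle1 := AddCircle (1 : ℝ)

/-- Multiplication by `d` on the circle. -/
def md (d : ℕ) (x : Circle1) : Circle1 := d • x

/-- The rational angles `ℚ/ℤ ⊆ ℝ/ℤ`. -/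
def ratC : Set Circle1 := {x | ∃ q : ℚ, x = ((q : ℝ) : Circle1)}

/-- `A` and `B` are unlinked: `B` is contained in a single connected
component of the complement of `A`. -/
def Unlinked (A B : Set Circle1) : Prop :=
  ∃ x ∈ Aᶜ, B ⊆ connectedComponentIn Aᶜ x

/-- `C` is a connected component of `S`. -/
def IsCompOf (C S : Set Circle1) : Prop :=
  ∃ x ∈ S, C = connectedComponentIn S x

/-- The class of `x` under a relation `r`. -/
def relClass (r : Circle1 → Circle1 → Prop) (x : Circle1) : Set Circle1 := {y | r x y}

/-- A rational lamination: a closed equivalence relation on `ℚ/ℤ` with finite,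
pairwise unlinked classes. -/
structure RatLam where
  rel : Circle1 → Circle1 → Prop
  rel_rat : ∀ x y, rel x y → x ∈ ratC ∧ y ∈ ratC
  refl : ∀ x ∈ ratC, rel x x
  symm : ∀ x y, rel x y → rel y x
  trans : ∀ x y z, rel x y → rel y z → rel x z
  closed' : ∀ x ∈ ratC, ∀ y ∈ ratC,
    (x, y) ∈ closure {p : Circle1 × Circle1 | rel p.1 p.2} → rel x y
  finiteClass : ∀ x, (relClass rel x).Finite
  unlinkedClass : ∀ x y, ¬ rel x y → Unlinked (relClass rel x) (relClass rel y)

/-- `m_d` maps `A` onto `B` in a consecutive-preserving way: the image of `A` is `B`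
and the connected components of the complement of `A` are sent to components of the
complement of `B` endpoint-wise. -/
def ConsecutiveImage (d : ℕ) (A B : Set Circle1) : Prop :=
  md d '' A = B ∧
    ∀ C, IsCompOf C Aᶜ → ∃ C', IsCompOf C' Bᶜ ∧ frontier C' = md d '' frontier C

/-- A `d`-invariant rational lamination. -/
structure InvRatLam (d : ℕ) extends RatLam where
  invariant : ∀ x ∈ ratC,
    ConsecutiveImage d (relClass rel x) (relClass rel (md d x))

/-- `m_d : A → m_d(A)` is `δ`-to-one. -/
def classDeg (d : ℕ) (A : Set Circle1) (δ : ℕ) : Prop :=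
  ∀ y ∈ md d '' A, Set.ncard {x | x ∈ A ∧ md d x = y} = δ

/-- The `λ`-unlinked relation on irrational angles: `θ ~ θ'` iff they lie in the same
connected component of the complement of every `λ`-class. -/
def UnlRel (r : Circle1 → Circle1 → Prop) (θ θ' : Circle1) : Prop :=
  θ ∉ ratC ∧ θ' ∉ ratC ∧
    (θ = θ' ∨ ∀ x ∈ ratC, θ' ∈ connectedComponentIn (relClass r x)ᶜ θ)

/-- `L` is a `λ`-unlinked class. -/
def IsUnlClass (r : Circle1 → Circle1 → Prop) (L : Set Circle1) : Prop :=
  ∃ θ, θ ∉ ratC ∧ L = {θ' | UnlRel r θ θ'}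

/-- The real extension `λ̂`: the smallest equivalence relation containing the closure
of `λ` in `(ℝ/ℤ)²`. -/
def realExt (r : Circle1 → Circle1 → Prop) : Circle1 → Circle1 → Prop :=
  Relation.EqvGen (fun a b => (a, b) ∈ closure {p : Circle1 × Circle1 | r p.1 p.2})

/-- `A` is a class of the real extension `λ̂` of `r`. -/
def IsRealClass (r : Circle1 → Circle1 → Prop) (A : Set Circle1) : Prop :=
  ∃ x, A = {y | realExt r x y}

/-- A Julia critical element: a `λ̂`-class on which `m_d` is not injective. -/
def JuliaCritElem (d : ℕ) (r : Circle1 → Circle1 → Prop) (A : Set Circle1) : Prop :=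
  IsRealClass r A ∧ ¬ Set.InjOn (md d) A

/-- A Fatou critical element: an infinite `λ`-unlinked class on which `m_d` is not
injective (i.e. of degree `> 1`). -/
def FatouCritElem (d : ℕ) (r : Circle1 → Circle1 → Prop) (L : Set Circle1) : Prop :=
  IsUnlClass r L ∧ L.Infinite ∧ ¬ Set.InjOn (md d) L

/-- A critical element of `λ`. -/
def CritElem (d : ℕ) (r : Circle1 → Circle1 → Prop) (C : Set Circle1) : Prop :=
  JuliaCritElem d r C ∨ FatouCritElem d r C

/-!
A finite family `F` of rational classes cuts the disk into `1 + ∑ (|A| - 1)` regions. Counting the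
regions of the pullback of `F` under `m_d` once directly and once above the regions of `F` gives a
Riemann–Hurwitz formula: `d - 1` is the sum of `δ(A) - 1` over the pulled back classes plus, for
each region of `F`, the number `d - N` where `N` counts the regions above it. As `F` grows, the
first sum picks up all critical rational classes, and by compactness of the circle the second one
stabilises to the contribution of the critical unlinked classes. It remains to identify the critical
elements: a finite critical unlinked class is an irrational class of the real extension, while the
real classes inside an infinite unlinked class are mapped injectively.
-/

open Filter Topology

/-! ### Counterclockwise distance and arcs -/

/-- The counterclockwise distance from `x` to `y`, normalised to lie in `(0, 1]`: the distance from
a point to itself is a full turn, not `0`. -/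
def ccwDist (x y : Circle1) : ℝ := AddCircle.equivIoc (1 : ℝ) 0 (y - x)

/-- The open arc swept counterclockwise from `x` to `y`; `arc x x` is the circle minus `x`. -/
def arc (x y : Circle1) : Set Circle1 := {t | ccwDist x t < ccwDist x y}

section Arcs

variable {x y z t a b : Circle1} {r e : ℝ}

lemma mem_arc : t ∈ arc x y ↔ ccwDist x t < ccwDist x y := Iff.rfl

lemma notMem_arc : t ∉ arc x y ↔ ccwDist x y ≤ ccwDist x t := by rw [mem_arc, not_lt]

lemma ccwDist_pos (x y : Circle1) : 0 < ccwDist x y :=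
  (AddCircle.equivIoc (1 : ℝ) 0 (y - x)).2.1

lemma ccwDist_le_one (x y : Circle1) : ccwDist x y ≤ 1 := by
  simpa [ccwDist] using (AddCircle.equivIoc (1 : ℝ) 0 (y - x)).2.2

lemma add_ccwDist (x y : Circle1) : x + (ccwDist x y : Circle1) = y := by
  rw [ccwDist, AddCircle.coe_equivIoc, add_sub_cancel]

lemma ccwDist_eq_of_add_eq (h0 : 0 < r) (h1 : r ≤ 1) (h : x + (r : Circle1) = y) :
    ccwDist x y = r := by
  rw [ccwDist, ← h, add_sub_cancel_left]
  exact AddCircle.equivIoc_coe_of_mem (by simp [h0, h1])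

lemma ccwDist_add_coe (h0 : 0 < r) (h1 : r ≤ 1) : ccwDist x (x + (r : Circle1)) = r :=
  ccwDist_eq_of_add_eq h0 h1 rfl

lemma ccwDist_add_coe_neg (h0 : 0 < r) (h1 : r ≤ 1) :
    ccwDist (x + ((-r : ℝ) : Circle1)) x = r :=
  ccwDist_eq_of_add_eq h0 h1 (by rw [AddCircle.coe_neg, neg_add_cancel_right])

lemma add_neg_ccwDist (x y : Circle1) : y + ((-ccwDist x y : ℝ) : Circle1) = x := by
  rw [AddCircle.coe_neg, ← sub_eq_add_neg, sub_eq_iff_eq_add, add_ccwDist]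

lemma ccwDist_self (x : Circle1) : ccwDist x x = 1 :=
  ccwDist_eq_of_add_eq one_pos le_rfl (by rw [AddCircle.coe_period, add_zero])

lemma ccwDist_right_injective (x : Circle1) : Injective (ccwDist x) := fun y z h => by
  rw [← add_ccwDist x y, ← add_ccwDist x z, h]

lemma ccwDist_lt_one (h : x ≠ y) : ccwDist x y < 1 :=
  (ccwDist_le_one x y).lt_of_ne fun h' =>
    h (ccwDist_right_injective x (h'.trans (ccwDist_self x).symm)).symm

lemma ccwDist_lt_of_ne_of_notMem_arc (hne : t ≠ y) (h : t ∉ arc x y) :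
    ccwDist x y < ccwDist x t :=
  (notMem_arc.1 h).lt_of_ne fun h' => hne (ccwDist_right_injective x h').symm

lemma ccwDist_add_cases (x y z : Circle1) :
    (ccwDist x y + ccwDist y z ≤ 1 ∧ ccwDist x z = ccwDist x y + ccwDist y z) ∨
    (1 < ccwDist x y + ccwDist y z ∧ ccwDist x z = ccwDist x y + ccwDist y z - 1) := by
  have hxy := ccwDist_pos x y
  have hyz := ccwDist_pos y z
  have hxy1 := ccwDist_le_one x y
  have hyz1 := ccwDist_le_one y z
  have hsum : x + ((ccwDist x y + ccwDist y z : ℝ) : Circle1) = z := by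
    rw [AddCircle.coe_add, ← add_assoc, add_ccwDist, add_ccwDist]
  rcases le_or_gt (ccwDist x y + ccwDist y z) 1 with h | h
  · exact Or.inl ⟨h, ccwDist_eq_of_add_eq (by linarith) h hsum⟩
  · refine Or.inr ⟨h, ccwDist_eq_of_add_eq (by linarith) (by linarith) ?_⟩
    rw [AddCircle.coe_sub, AddCircle.coe_period, sub_zero, hsum]

lemma ccwDist_add_of_mem_arc (h : y ∈ arc x z) :
    ccwDist x y + ccwDist y z = ccwDist x z := by
  have hlt := mem_arc.1 h
  rcases ccwDist_add_cases x y z with h' | h' <;> linarith [ccwDist_le_one y z]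

lemma mem_arc_iff_ccwDist_right_lt : y ∈ arc x z ↔ ccwDist y z < ccwDist x z := by
  refine ⟨fun h => by linarith [ccwDist_add_of_mem_arc h, ccwDist_pos x y], fun h => ?_⟩
  rw [mem_arc]
  rcases ccwDist_add_cases x y z with h' | h' <;>
    linarith [ccwDist_le_one x y, ccwDist_pos y z]

lemma ccwDist_add_swap (h : x ≠ y) : ccwDist x y + ccwDist y x = 1 := by
  have := ccwDist_lt_one h
  rcases ccwDist_add_cases x y x with h' | h' <;>
    linarith [ccwDist_self x, ccwDist_le_one y x]

lemma notMem_arc_right (x y : Circle1) : y ∉ arc x y := fun h => lt_irrefl _ (mem_arc.1 h)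

lemma notMem_arc_left (x y : Circle1) : x ∉ arc x y :=
  notMem_arc.2 ((ccwDist_le_one x y).trans_eq (ccwDist_self x).symm)

lemma arc_subset_of_mem_right (h : y ∈ arc x z) : arc x y ⊆ arc x z :=
  fun _ ht => (mem_arc.1 ht).trans h

lemma arc_subset_of_mem_left (h : y ∈ arc x z) : arc y z ⊆ arc x z := fun t ht => by
  rw [mem_arc_iff_ccwDist_right_lt] at h ht ⊢
  exact ht.trans h

lemma mem_arc_right_of_mem_arc (hy : y ∈ arc x z) (ht : t ∈ arc x y) : y ∈ arc t z := by
  have h1 := ccwDist_add_of_mem_arc hy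
  have h2 := ccwDist_add_of_mem_arc ht
  have h3 := ccwDist_add_of_mem_arc (arc_subset_of_mem_right hy ht)
  rw [mem_arc]
  linarith [ccwDist_pos y z]

lemma mem_arc_left_of_mem_arc (hy : y ∈ arc x z) (ht : t ∈ arc y z) : y ∈ arc x t := by
  have h1 := ccwDist_add_of_mem_arc hy
  have h2 := ccwDist_add_of_mem_arc ht
  have h3 := ccwDist_add_of_mem_arc (arc_subset_of_mem_left hy ht)
  rw [mem_arc]
  linarith [ccwDist_pos y t]

lemma mem_arc_rotate (h : y ∈ arc x z) (hne : x ≠ z) : z ∈ arc y x := by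
  have hyz := ccwDist_add_of_mem_arc h
  have hyx := ccwDist_add_swap (ne_of_mem_of_not_mem h (notMem_arc_left x z)).symm
  rw [mem_arc]
  linarith [ccwDist_lt_one hne]

lemma disjoint_arc_swap (h : a ≠ b) : Disjoint (arc a b) (arc b a) := by
  refine Set.disjoint_left.2 fun t hab hba => ?_
  have h1 := ccwDist_add_of_mem_arc hab
  have h2 := ccwDist_add_of_mem_arc hba
  have h3 := ccwDist_add_swap (ne_of_mem_of_not_mem hab (notMem_arc_left a b))
  linarith [ccwDist_add_swap h, ccwDist_add_swap (ne_of_mem_of_not_mem hba (notMem_arc_left b a))]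

lemma mem_arc_or_mem_arc_swap (hta : t ≠ a) (htb : t ≠ b) : t ∈ arc a b ∨ t ∈ arc b a := by
  refine or_iff_not_imp_left.2 fun h => ?_
  have hb : b ∈ arc a t := mem_arc.2 (ccwDist_lt_of_ne_of_notMem_arc htb h)
  exact mem_arc_rotate hb hta.symm

lemma exists_nat_add_ccwDist (x : Circle1) (hr : 0 < r) :
    ∃ k : ℕ, r = k + ccwDist x (x + (r : Circle1)) := by
  have hceil : 1 ≤ ⌈r⌉₊ := Nat.one_le_ceil_iff.2 hr
  have hcast : ((⌈r⌉₊ - 1 : ℕ) : ℝ) = (⌈r⌉₊ : ℝ) - 1 := by push_cast [hceil]; ring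
  have hnat : (((⌈r⌉₊ - 1 : ℕ) : ℝ) : Circle1) = 0 := by
    have := AddCircle.coe_nsmul (p := (1 : ℝ)) (n := ⌈r⌉₊ - 1) (x := 1)
    rw [AddCircle.coe_period, smul_zero, nsmul_one] at this
    exact this
  refine ⟨⌈r⌉₊ - 1, ?_⟩
  rw [ccwDist_eq_of_add_eq (r := r - (⌈r⌉₊ - 1 : ℕ))]
  · ring
  · linarith [Nat.ceil_lt_add_one hr.le]
  · linarith [Nat.le_ceil r]
  · rw [AddCircle.coe_sub, hnat, sub_zero]

lemma ccwDist_add_coe_le (x : Circle1) (hr : 0 < r) : ccwDist x (x + (r : Circle1)) ≤ r := by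
  obtain ⟨k, hk⟩ := exists_nat_add_ccwDist x hr
  linarith [k.cast_nonneg (α := ℝ)]

lemma continuous_add_coe (x : Circle1) : Continuous fun r : ℝ => x + (r : Circle1) :=
  continuous_const.add (AddCircle.continuous_mk' 1)

lemma isOpenMap_add_coe (x : Circle1) : IsOpenMap fun r : ℝ => x + (r : Circle1) :=
  (Homeomorph.addLeft x).isOpenMap.comp QuotientAddGroup.isOpenMap_coe

lemma arc_eq_image (x y : Circle1) :
    arc x y = (fun r : ℝ => x + (r : Circle1)) '' Ioo 0 (ccwDist x y) := by
  ext t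
  constructor
  · exact fun ht => ⟨ccwDist x t, ⟨ccwDist_pos _ _, ht⟩, add_ccwDist _ _⟩
  · rintro ⟨r, ⟨h0, h1⟩, rfl⟩
    exact (ccwDist_add_coe_le x h0).trans_lt h1

lemma isOpen_arc (x y : Circle1) : IsOpen (arc x y) := by
  rw [arc_eq_image]
  exact isOpenMap_add_coe x _ isOpen_Ioo

lemma isPreconnected_arc (x y : Circle1) : IsPreconnected (arc x y) := by
  rw [arc_eq_image]
  exact isPreconnected_Ioo.image _ (continuous_add_coe x).continuousOn

lemma nhds_hasBasis_ccwDist (x : Circle1) :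
    (𝓝 x).HasBasis (0 < ·) fun e : ℝ => {y | y = x ∨ ccwDist x y < e ∨ ccwDist y x < e} := by
  have hmap : map (fun r : ℝ => x + (r : Circle1)) (𝓝 0) = 𝓝 x := by
    refine le_antisymm ?_ ?_
    · simpa [ContinuousAt, Tendsto] using (continuous_add_coe x).continuousAt (x := 0)
    · simpa using (isOpenMap_add_coe x).nhds_le 0
  rw [← hmap]
  refine ((nhds_basis_Ioo_pos (0 : ℝ)).map _).congr (fun _ => Iff.rfl) fun e he => ?_
  ext y
  constructor
  · rintro ⟨r, ⟨hr1, hr2⟩, rfl⟩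
    rcases lt_trichotomy r 0 with h | rfl | h
    · have hback := ccwDist_add_coe_le (x + (r : Circle1)) (neg_pos.2 h)
      rw [AddCircle.coe_neg, add_neg_cancel_right] at hback
      exact Or.inr (Or.inr (show ccwDist (x + (r : Circle1)) x < e by linarith))
    · exact Or.inl (by simp)
    · exact Or.inr (Or.inl ((ccwDist_add_coe_le x h).trans_lt (by linarith)))
  · rintro (rfl | h | h)
    · exact ⟨0, ⟨by linarith, by linarith⟩, by simp⟩
    · exact ⟨ccwDist x y, ⟨by linarith [ccwDist_pos x y], by linarith⟩, add_ccwDist x y⟩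
    · exact ⟨-ccwDist y x, ⟨by linarith, by linarith [ccwDist_pos y x]⟩, add_neg_ccwDist y x⟩

end Arcs

/-! ### Multiplication by `d` and rational angles -/

section Multiplication

variable {d : ℕ}

lemma continuous_md (d : ℕ) : Continuous (md d) := continuous_const_smul d

lemma md_coe (d : ℕ) (r : ℝ) : md d (r : Circle1) = ((d * r : ℝ) : Circle1) := by
  rw [md, ← AddCircle.coe_nsmul, nsmul_eq_mul]

lemma md_add_coe (d : ℕ) (x : Circle1) (r : ℝ) :
    md d (x + (r : Circle1)) = md d x + ((d * r : ℝ) : Circle1) := by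
  rw [← md_coe, md, md, md, smul_add]

variable [NeZero d]

lemma exists_mul_ccwDist_eq (x y : Circle1) :
    ∃ k : ℕ, d * ccwDist x y = k + ccwDist (md d x) (md d y) := by
  have hd : (0 : ℝ) < d := Nat.cast_pos.2 (NeZero.pos d)
  have := exists_nat_add_ccwDist (md d x) (mul_pos hd (ccwDist_pos x y))
  rwa [← md_add_coe, add_ccwDist] at this

lemma ccwDist_md_le (x y : Circle1) : ccwDist (md d x) (md d y) ≤ d * ccwDist x y := by
  obtain ⟨k, hk⟩ := exists_mul_ccwDist_eq (d := d) x y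
  linarith [k.cast_nonneg (α := ℝ)]

/-- The first preimage of `c` under `md d` met when moving counterclockwise from `x`. -/
def liftAfter (d : ℕ) (x c : Circle1) : Circle1 := x + ((ccwDist (md d x) c / d : ℝ) : Circle1)

/-- The first preimage of `c` under `md d` met when moving clockwise from `x`. -/
def liftBefore (d : ℕ) (x c : Circle1) : Circle1 :=
  x + ((-(ccwDist c (md d x) / d) : ℝ) : Circle1)

lemma md_liftAfter (x c : Circle1) : md d (liftAfter d x c) = c := by
  rw [liftAfter, md_add_coe, mul_div_cancel₀ _ (Nat.cast_ne_zero.2 (NeZero.ne d)), add_ccwDist]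

lemma md_liftBefore (x c : Circle1) : md d (liftBefore d x c) = c := by
  rw [liftBefore, md_add_coe, mul_neg, mul_div_cancel₀ _ (Nat.cast_ne_zero.2 (NeZero.ne d)),
    add_neg_ccwDist]

lemma ccwDist_div_le_one (x y : Circle1) : ccwDist x y / d ≤ 1 :=
  div_le_one_of_le₀ ((ccwDist_le_one x y).trans (Nat.one_le_cast.2 (NeZero.one_le)))
    d.cast_nonneg

lemma ccwDist_div_pos (x y : Circle1) : 0 < ccwDist x y / d :=
  div_pos (ccwDist_pos x y) (Nat.cast_pos.2 (NeZero.pos d))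

lemma ccwDist_liftAfter (x c : Circle1) :
    ccwDist x (liftAfter d x c) = ccwDist (md d x) c / d :=
  ccwDist_add_coe (ccwDist_div_pos _ _) (ccwDist_div_le_one _ _)

lemma ccwDist_liftBefore (x c : Circle1) :
    ccwDist (liftBefore d x c) x = ccwDist c (md d x) / d :=
  ccwDist_add_coe_neg (ccwDist_div_pos _ _) (ccwDist_div_le_one _ _)

lemma liftAfter_mem_arc {x y c : Circle1} (h : c ∈ arc (md d x) (md d y)) :
    liftAfter d x c ∈ arc x y := by
  rw [mem_arc, ccwDist_liftAfter, div_lt_iff₀ (Nat.cast_pos.2 (NeZero.pos d)), mul_comm]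
  exact (mem_arc.1 h).trans_le (ccwDist_md_le x y)

lemma liftBefore_mem_arc {x y c : Circle1} (h : c ∈ arc (md d x) (md d y)) :
    liftBefore d y c ∈ arc x y := by
  rw [mem_arc_iff_ccwDist_right_lt] at h ⊢
  rw [ccwDist_liftBefore, div_lt_iff₀ (Nat.cast_pos.2 (NeZero.pos d)), mul_comm]
  exact h.trans_le (ccwDist_md_le x y)

lemma md_mem_arc_of_mem_arc_liftAfter {x t c : Circle1} (h : t ∈ arc x (liftAfter d x c)) :
    md d t ∈ arc (md d x) c := by
  rw [mem_arc, ccwDist_liftAfter, lt_div_iff₀' (Nat.cast_pos.2 (NeZero.pos d))] at h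
  exact (ccwDist_md_le x t).trans_lt h

lemma md_mem_arc_of_mem_arc_liftBefore {x t c : Circle1} (h : t ∈ arc (liftBefore d x c) x) :
    md d t ∈ arc c (md d x) := by
  rw [mem_arc_iff_ccwDist_right_lt] at h ⊢
  rw [ccwDist_liftBefore, lt_div_iff₀' (Nat.cast_pos.2 (NeZero.pos d))] at h
  exact (ccwDist_md_le t x).trans_lt h

lemma liftBefore_liftAfter (x c : Circle1) : liftBefore d (liftAfter d x c) (md d x) = x := by
  rw [liftBefore, md_liftAfter, liftAfter, AddCircle.coe_neg, add_neg_cancel_right]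

lemma liftAfter_liftBefore (x c : Circle1) : liftAfter d (liftBefore d x c) (md d x) = x := by
  rw [liftAfter, md_liftBefore, liftBefore, AddCircle.coe_neg, neg_add_cancel_right]

lemma coe_mem_ratC {r : ℝ} : (r : Circle1) ∈ ratC ↔ ∃ q : ℚ, r = q := by
  refine ⟨fun ⟨q, hq⟩ => ?_, fun ⟨q, hq⟩ => ⟨q, by rw [hq]⟩⟩
  obtain ⟨n, hn⟩ : ∃ n : ℤ, n • (1 : ℝ) = r - q := by
    rw [← AddCircle.coe_eq_zero_iff, AddCircle.coe_sub, hq, sub_self]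
  exact ⟨q + n, by push_cast; simp only [zsmul_eq_mul, mul_one] at hn; linarith⟩

lemma mem_ratC_iff_isOfFinAddOrder {x : Circle1} : x ∈ ratC ↔ IsOfFinAddOrder x := by
  have : Fact ((0 : ℝ) < 1) := ⟨one_pos⟩
  constructor
  · rintro ⟨q, rfl⟩
    have := AddCircle.addOrderOf_coe_rat (p := (1 : ℝ)) (q := q)
    rw [mul_one] at this
    exact addOrderOf_pos_iff.1 (this ▸ q.pos)
  · intro h
    obtain ⟨m, -, -, hm⟩ := AddCircle.exists_gcd_eq_one_of_isOfFinAddOrder h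
    exact ⟨m / addOrderOf x, by simpa using hm.symm⟩

lemma md_mem_ratC {x : Circle1} : md d x ∈ ratC ↔ x ∈ ratC := by
  rw [mem_ratC_iff_isOfFinAddOrder, mem_ratC_iff_isOfFinAddOrder, md, isOfFinAddOrder_nsmul,
    or_iff_left (NeZero.ne d)]

lemma liftAfter_mem_ratC {x c : Circle1} : liftAfter d x c ∈ ratC ↔ c ∈ ratC := by
  rw [← md_mem_ratC (d := d), md_liftAfter]

lemma liftBefore_mem_ratC {x c : Circle1} : liftBefore d x c ∈ ratC ↔ c ∈ ratC := by
  rw [← md_mem_ratC (d := d), md_liftBefore]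

lemma add_irrational_notMem_ratC {x : Circle1} (hx : x ∈ ratC) {r : ℝ} (hr : Irrational r) :
    x + (r : Circle1) ∉ ratC := by
  obtain ⟨q, rfl⟩ := hx
  rw [← AddCircle.coe_add, coe_mem_ratC]
  exact fun ⟨q', h⟩ => hr ⟨q' - q, by push_cast; linarith⟩

end Multiplication

/-! ### Gaps of a set and one-sided germs -/

/-- `x` and `y` lie in the same connected component of the complement of `A`. -/
def SameGap (A : Set Circle1) (x y : Circle1) : Prop := x ∉ A ∧ y ∈ connectedComponentIn Aᶜ x

/-- `v` is the first point of `A` counterclockwise after `u`; it is `u` itself if `A = {u}`. -/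
structure IsNext (A : Set Circle1) (u v : Circle1) : Prop where
  left_mem : u ∈ A
  right_mem : v ∈ A
  notMem_arc : ∀ a ∈ A, a ∉ arc u v

/-- Moving counterclockwise from `u`, the point `s` is met before every point of `P`. -/
def JustAfter (P : Set Circle1) (u s : Circle1) : Prop := ∀ p ∈ P, s ∈ arc u p

/-- Moving clockwise from `v`, the point `s` is met before every point of `P`. -/
def JustBefore (P : Set Circle1) (v s : Circle1) : Prop := ∀ p ∈ P, s ∈ arc p v

section Gaps

variable {A B P Q : Set Circle1} {x y z a b u v w s s' : Circle1}

namespace SameGap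

lemma left (h : SameGap A x y) : x ∉ A := h.1

lemma right (h : SameGap A x y) : y ∉ A := connectedComponentIn_subset _ _ h.2

lemma refl (h : x ∉ A) : SameGap A x x := ⟨h, mem_connectedComponentIn h⟩

lemma symm (h : SameGap A x y) : SameGap A y x :=
  ⟨h.right, connectedComponentIn_eq h.2 ▸ mem_connectedComponentIn h.1⟩

lemma trans (h : SameGap A x y) (h' : SameGap A y z) : SameGap A x z :=
  ⟨h.1, connectedComponentIn_eq h.2 ▸ h'.2⟩

end SameGap

lemma Unlinked.sameGap (h : Unlinked A B) (ha : a ∈ B) (hb : b ∈ B) : SameGap A a b := by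
  obtain ⟨x, hx, hB⟩ := h
  exact SameGap.trans (SameGap.symm ⟨hx, hB ha⟩) ⟨hx, hB hb⟩

lemma sameGap_of_notMem_arc (hx : x ∉ A) (hy : y ∉ A) (h : ∀ t ∈ A, t ∉ arc x y) :
    SameGap A x y := by
  have hpre : IsPreconnected ((fun r : ℝ => x + (r : Circle1)) '' Icc 0 (ccwDist x y)) :=
    isPreconnected_Icc.image _ (continuous_add_coe x).continuousOn
  have hpos := ccwDist_pos x y
  refine ⟨hx, hpre.subset_connectedComponentIn ⟨0, ⟨le_rfl, hpos.le⟩, by simp⟩ ?_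
    ⟨ccwDist x y, ⟨hpos.le, le_rfl⟩, add_ccwDist x y⟩⟩
  rintro _ ⟨r, ⟨h0, h1⟩, rfl⟩ hA
  rcases h0.eq_or_lt with rfl | h0
  · exact hx (by simpa using hA)
  rcases h1.eq_or_lt with rfl | h1
  · exact hy (by simpa [add_ccwDist] using hA)
  · exact h _ hA (arc_eq_image x y ▸ ⟨r, ⟨h0, h1⟩, rfl⟩)

lemma sameGap_of_mem_arc (hA : ∀ a ∈ A, a ∉ arc u v) (hs : s ∈ arc u v) (hs' : s' ∈ arc u v) :
    SameGap A s s' :=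
  ⟨fun h => hA s h hs,
    (isPreconnected_arc u v).subset_connectedComponentIn hs (fun _ ht hA' => hA _ hA' ht) hs'⟩

lemma not_sameGap_of_mem_arc (ha : a ∈ A) (hb : b ∈ A) (hxa : a ∈ arc x y) (hyb : y ∈ arc x b) :
    ¬ SameGap A x y := by
  intro hs
  have hab : a ≠ b := by
    rintro rfl
    exact lt_asymm (mem_arc.1 hxa) hyb
  have hxb : x ≠ b := fun h => hs.left (h ▸ hb)
  have hax : a ≠ x := fun h => hs.left (h ▸ ha)
  have hy : y ∈ arc a b := mem_arc_right_of_mem_arc hyb hxa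
  have hx : x ∈ arc b a :=
    mem_arc_rotate (mem_arc_rotate (arc_subset_of_mem_right hyb hxa) hxb) hax
  have hcover : connectedComponentIn Aᶜ x ⊆ arc a b ∪ arc b a := fun t ht => by
    have htA : t ∉ A := connectedComponentIn_subset _ _ ht
    exact mem_arc_or_mem_arc_swap (fun h => htA (h ▸ ha)) (fun h => htA (h ▸ hb))
  have hdisj := disjoint_arc_swap hab
  rcases isPreconnected_connectedComponentIn.subset_or_subset (isOpen_arc a b) (isOpen_arc b a)
    hdisj hcover with hsub | hsub
  · exact hdisj.notMem_of_mem_left (hsub (mem_connectedComponentIn hs.left)) hx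
  · exact hdisj.notMem_of_mem_left hy (hsub hs.2)

lemma exists_mem_arc_of_not_sameGap (hx : x ∉ A) (hy : y ∉ A) (h : ¬ SameGap A x y) :
    ∃ a ∈ A, ∃ b ∈ A, a ∈ arc x y ∧ y ∈ arc x b := by
  obtain ⟨a, ha, hxa⟩ : ∃ a ∈ A, a ∈ arc x y := by
    by_contra! hc
    exact h (sameGap_of_notMem_arc hx hy hc)
  obtain ⟨b, hb, hyb⟩ : ∃ b ∈ A, b ∈ arc y x := by
    by_contra! hc
    exact h (sameGap_of_notMem_arc hy hx hc).symm
  have hne : y ≠ x := by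
    rintro rfl
    exact h (SameGap.refl hx)
  have hby : b ≠ y := fun h => hy (h ▸ hb)
  exact ⟨a, ha, b, hb, hxa, mem_arc_rotate (mem_arc_rotate hyb hne) hby⟩

lemma SameGap.mem_arc (hs : SameGap A x y) (hu : u ∈ A) (hv : v ∈ A) (hx : x ∈ arc u v) :
    y ∈ arc u v := by
  by_contra hy
  have hyv : y ≠ v := fun h => hs.right (h ▸ hv)
  have huy : u ≠ y := fun h => hs.right (h ▸ hu)
  have hv' : v ∈ arc u y := ccwDist_lt_of_ne_of_notMem_arc hyv hy
  have hxy : x ∈ arc u y := arc_subset_of_mem_right hv' hx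
  exact not_sameGap_of_mem_arc hv hu (mem_arc_right_of_mem_arc hv' hx) (mem_arc_rotate hxy huy) hs

lemma exists_isNext_left (hA : A.Finite) (hv : v ∈ A) : ∃ u, IsNext A u v := by
  obtain ⟨u, hu, hmin⟩ := Set.exists_min_image A (ccwDist · v) hA ⟨v, hv⟩
  exact ⟨u, hu, hv, fun a ha ha' => (mem_arc_iff_ccwDist_right_lt.1 ha').not_ge (hmin a ha)⟩

lemma IsNext.left_unique (h : IsNext A u v) (h' : IsNext A w v) : u = w := by
  by_contra hne
  rcases lt_or_ge (ccwDist u v) (ccwDist w v) with hlt | hle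
  · exact h'.notMem_arc u h.left_mem (mem_arc_iff_ccwDist_right_lt.2 hlt)
  · refine h.notMem_arc w h'.left_mem (mem_arc_iff_ccwDist_right_lt.2 (hle.lt_of_ne fun he => ?_))
    exact hne (by rw [← add_neg_ccwDist u v, ← he, add_neg_ccwDist])

lemma exists_isNext_right (hA : A.Finite) (hu : u ∈ A) : ∃ v, IsNext A u v := by
  obtain ⟨v, hv, hmin⟩ := Set.exists_min_image A (ccwDist u) hA ⟨u, hu⟩
  exact ⟨v, hu, hv, fun a ha => notMem_arc.2 (hmin a ha)⟩

lemma IsNext.right_unique (h : IsNext A u v) (h' : IsNext A u w) : v = w :=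
  ccwDist_right_injective u <| le_antisymm (not_lt.1 (h.notMem_arc w h'.right_mem))
    (not_lt.1 (h'.notMem_arc v h.right_mem))

lemma exists_irrational_pos_lt {ι : Type*} {I : Set ι} (hI : I.Finite) {f : ι → ℝ}
    (hf : ∀ i ∈ I, 0 < f i) : ∃ r, Irrational r ∧ 0 < r ∧ r ≤ 1 ∧ ∀ i ∈ I, r < f i := by
  have hsmall : ∀ᶠ e in 𝓝[>] (0 : ℝ), e ≤ 1 ∧ 0 < e ∧ ∀ i ∈ I, e < f i := by
    have hlt : ∀ᶠ e in 𝓝[>] (0 : ℝ), ∀ i ∈ I, e < f i :=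
      (hI.eventually_all).2 fun i hi => by
        filter_upwards [Ioo_mem_nhdsGT (hf i hi)] with e he using he.2
    filter_upwards [Ioo_mem_nhdsGT (zero_lt_one' ℝ), hlt] with e he he'
    exact ⟨he.2.le, he.1, he'⟩
  obtain ⟨e, he1, he0, he⟩ := hsmall.exists
  obtain ⟨r, hr, hr0, hre⟩ := exists_irrational_btwn he0
  exact ⟨r, hr, hr0, hre.le.trans he1, fun i hi => hre.trans (he i hi)⟩

lemma exists_justAfter (hP : P.Finite) (hu : u ∈ ratC) : ∃ s, s ∉ ratC ∧ JustAfter P u s := by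
  obtain ⟨r, hr, hr0, hr1, hlt⟩ := exists_irrational_pos_lt hP fun p _ => ccwDist_pos u p
  refine ⟨u + (r : Circle1), add_irrational_notMem_ratC hu hr, fun p hp => ?_⟩
  rw [mem_arc, ccwDist_add_coe hr0 hr1]
  exact hlt p hp

lemma exists_justBefore (hP : P.Finite) (hv : v ∈ ratC) : ∃ s, s ∉ ratC ∧ JustBefore P v s := by
  obtain ⟨r, hr, hr0, hr1, hlt⟩ := exists_irrational_pos_lt hP fun p _ => ccwDist_pos p v
  refine ⟨v + ((-r : ℝ) : Circle1), add_irrational_notMem_ratC hv hr.neg, fun p hp => ?_⟩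
  rw [mem_arc_iff_ccwDist_right_lt, ccwDist_add_coe_neg hr0 hr1]
  exact hlt p hp

lemma JustAfter.mono (h : JustAfter Q u s) (hPQ : P ⊆ Q) : JustAfter P u s :=
  fun p hp => h p (hPQ hp)

lemma JustBefore.mono (h : JustBefore Q v s) (hPQ : P ⊆ Q) : JustBefore P v s :=
  fun p hp => h p (hPQ hp)

lemma JustAfter.notMem_arc (h : JustAfter P u s) (ha : a ∈ P) : a ∉ arc u s :=
  fun h' => lt_asymm (mem_arc.1 h') (h a ha)

lemma JustBefore.notMem_arc (h : JustBefore P v s) (ha : a ∈ P) : a ∉ arc s v := fun h' =>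
  lt_asymm (mem_arc_iff_ccwDist_right_lt.1 h') (mem_arc_iff_ccwDist_right_lt.1 (h a ha))

lemma JustAfter.sameGap (h : JustAfter A u s) (hu : u ∉ A) (hs : s ∉ A) : SameGap A u s :=
  sameGap_of_notMem_arc hu hs fun _ => h.notMem_arc

lemma JustBefore.sameGap (h : JustBefore A v s) (hv : v ∉ A) (hs : s ∉ A) : SameGap A v s :=
  (sameGap_of_notMem_arc hs hv fun _ => h.notMem_arc).symm

lemma eventually_sameGap (hA : A.Finite) (hx : x ∉ A) : ∀ᶠ y in 𝓝 x, SameGap A x y := by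
  obtain ⟨r, -, hr, -, hlt⟩ := exists_irrational_pos_lt hA
    (f := fun a => min (ccwDist x a) (ccwDist a x))
    fun a _ => lt_min (ccwDist_pos x a) (ccwDist_pos a x)
  filter_upwards [(nhds_hasBasis_ccwDist x).mem_of_mem hr, hA.isClosed.isOpen_compl.mem_nhds hx]
    with y hy hyA
  rcases hy with rfl | hy | hy
  · exact SameGap.refl hx
  · refine JustAfter.sameGap (fun a ha => ?_) hx hyA
    exact hy.trans (lt_min_iff.1 (hlt a ha)).1
  · refine JustBefore.sameGap (fun a ha => ?_) hx hyA
    exact mem_arc_iff_ccwDist_right_lt.2 (hy.trans (lt_min_iff.1 (hlt a ha)).2)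

end Gaps

/-! ### Regions cut out by a finite unlinked family -/

/-- A finite family of finite nonempty pairwise unlinked sets of rational angles. -/
structure IsUnlinkedFamily (F : Finset (Set Circle1)) : Prop where
  finite : ∀ A ∈ F, A.Finite
  nonempty : ∀ A ∈ F, A.Nonempty
  subset_ratC : ∀ A ∈ F, A ⊆ ratC
  unlinked : ∀ A ∈ F, ∀ B ∈ F, A ≠ B → Unlinked A B

/-- The points of the members of `F`. -/
def vertices (F : Finset (Set Circle1)) : Set Circle1 := {p | ∃ A ∈ F, p ∈ A}

/-- No member of `F` separates `x` from `y`. -/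
def SameRegion (F : Finset (Set Circle1)) (x y : Circle1) : Prop := ∀ A ∈ F, SameGap A x y

/-- The relation generated on irrational angles by moving along an arc free of vertices and by
jumping across a gap `(u, v)` of a member of `F`, from just before `v` to just after `u`. It
describes the regions of `F` as one walks along their boundaries. -/
inductive RegionWalk (F : Finset (Set Circle1)) : Circle1 → Circle1 → Prop
  | arc {x y : Circle1} (hx : x ∉ ratC) (hy : y ∉ ratC) (h : ∀ p ∈ vertices F, p ∉ arc x y) :
      RegionWalk F x y
  | hop {A : Set Circle1} {u v s s' : Circle1} (hA : A ∈ F) (huv : IsNext A u v)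
      (hs : s ∉ ratC) (hs' : s' ∉ ratC) (hu : JustAfter (vertices F) u s)
      (hv : JustBefore (vertices F) v s') : RegionWalk F s' s
  | refl {x : Circle1} (hx : x ∉ ratC) : RegionWalk F x x
  | symm {x y : Circle1} (h : RegionWalk F x y) : RegionWalk F y x
  | trans {x y z : Circle1} (h : RegionWalk F x y) (h' : RegionWalk F y z) : RegionWalk F x z

/-- A finite set of irrational angles meeting each region of `F` exactly once. -/
structure IsTransversal (F : Finset (Set Circle1)) (Y : Finset Circle1) : Prop where
  irrational : ∀ y ∈ Y, y ∉ ratC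
  eq_of_sameRegion : ∀ y ∈ Y, ∀ z ∈ Y, SameRegion F y z → y = z
  exists_sameRegion : ∀ x, x ∉ ratC → ∃ y ∈ Y, SameRegion F x y

section Regions

variable {F F' : Finset (Set Circle1)} {A : Set Circle1} {x y z p q u v s s' : Circle1}

namespace IsUnlinkedFamily

lemma finite_vertices (hF : IsUnlinkedFamily F) : (vertices F).Finite := by
  have : vertices F = ⋃ A ∈ (F : Set (Set Circle1)), A := by ext; simp [vertices]
  rw [this]
  exact F.finite_toSet.biUnion hF.finite

lemma vertices_subset_ratC (hF : IsUnlinkedFamily F) : vertices F ⊆ ratC :=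
  fun _ ⟨A, hA, hp⟩ => hF.subset_ratC A hA hp

lemma notMem_of_notMem_ratC (hF : IsUnlinkedFamily F) (hA : A ∈ F) (hx : x ∉ ratC) : x ∉ A :=
  fun h => hx (hF.subset_ratC A hA h)

lemma pairwiseDisjoint (hF : IsUnlinkedFamily F) : (F : Set (Set Circle1)).PairwiseDisjoint id :=
  fun A hA B hB hne => Set.disjoint_left.2 fun _ ha hb =>
    ((hF.unlinked A hA B hB hne).sameGap hb hb).left ha

end IsUnlinkedFamily

namespace SameRegion

lemma refl (hF : IsUnlinkedFamily F) (hx : x ∉ ratC) : SameRegion F x x :=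
  fun _ hA => SameGap.refl (hF.notMem_of_notMem_ratC hA hx)

lemma symm (h : SameRegion F x y) : SameRegion F y x := fun A hA => (h A hA).symm

lemma trans (h : SameRegion F x y) (h' : SameRegion F y z) : SameRegion F x z :=
  fun A hA => (h A hA).trans (h' A hA)

lemma mono (hFF' : F ⊆ F') (h : SameRegion F' x y) : SameRegion F x y :=
  fun A hA => h A (hFF' hA)

end SameRegion

lemma sameRegion_of_notMem_arc (hF : IsUnlinkedFamily F) (hx : x ∉ ratC) (hy : y ∉ ratC)
    (h : ∀ p ∈ vertices F, p ∉ arc x y) : SameRegion F x y := fun A hA =>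
  sameGap_of_notMem_arc (hF.notMem_of_notMem_ratC hA hx) (hF.notMem_of_notMem_ratC hA hy)
    fun t ht => h t ⟨A, hA, ht⟩

lemma sameRegion_of_isNext (hF : IsUnlinkedFamily F) (hA : A ∈ F) (huv : IsNext A u v)
    (hs : s ∉ ratC) (hs' : s' ∉ ratC) (hu : JustAfter (vertices F) u s)
    (hv : JustBefore (vertices F) v s') : SameRegion F s' s := by
  intro B hB
  by_cases hAB : B = A
  · subst hAB
    exact sameGap_of_mem_arc huv.notMem_arc (hv u ⟨B, hB, huv.left_mem⟩)
      (hu v ⟨B, hB, huv.right_mem⟩)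
  · have hvu : SameGap B v u :=
      (hF.unlinked B hB A hA hAB).sameGap huv.right_mem huv.left_mem
    have hBF : B ⊆ vertices F := fun b hb => ⟨B, hB, hb⟩
    have hs'v := ((hv.mono hBF).sameGap hvu.left (hF.notMem_of_notMem_ratC hB hs')).symm
    exact hs'v.trans (hvu.trans ((hu.mono hBF).sameGap hvu.right (hF.notMem_of_notMem_ratC hB hs)))

lemma RegionWalk.sameRegion (hF : IsUnlinkedFamily F) (h : RegionWalk F x y) :
    SameRegion F x y := by
  induction h with
  | arc hx hy h => exact sameRegion_of_notMem_arc hF hx hy h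
  | hop hA huv hs hs' hu hv => exact sameRegion_of_isNext hF hA huv hs hs' hu hv
  | refl hx => exact SameRegion.refl hF hx
  | symm _ ih => exact ih.symm
  | trans _ _ ih ih' => exact ih.trans ih'

lemma eventually_sameRegion (hF : IsUnlinkedFamily F) (hx : x ∉ vertices F) :
    ∀ᶠ y in 𝓝 x, SameRegion F x y :=
  (F.finite_toSet.eventually_all).2 fun A hA =>
    eventually_sameGap (hF.finite A hA) fun h => hx ⟨A, hA, h⟩

end Regions

/-! ### Counting regions -/

/-- Data from which a transversal of the regions of `F` is read off: a base point at which the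
circle is cut open, the last point of each member of `F` as seen from there, and an irrational
angle just after each vertex. -/
structure CutData (F : Finset (Set Circle1)) where
  base : Circle1
  last : Set Circle1 → Circle1
  after : Circle1 → Circle1
  base_notMem : base ∉ ratC
  last_mem : ∀ A ∈ F, last A ∈ A
  le_last : ∀ A ∈ F, ∀ a ∈ A, ccwDist base a ≤ ccwDist base (last A)
  after_notMem : ∀ p ∈ vertices F, after p ∉ ratC
  justAfter : ∀ p ∈ vertices F, JustAfter (insert base (vertices F)) p (after p)

section Counting

variable {F : Finset (Set Circle1)} {A : Set Circle1} {x y p q : Circle1}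

lemma exists_notMem_ratC : ∃ x : Circle1, x ∉ ratC := by
  obtain ⟨s, hs, -⟩ := exists_justAfter finite_empty (u := 0) ⟨0, by simp⟩
  exact ⟨s, hs⟩

lemma IsUnlinkedFamily.nonempty_cutData (hF : IsUnlinkedFamily F) : Nonempty (CutData F) := by
  obtain ⟨base, hbase⟩ := exists_notMem_ratC
  have hlast : ∀ A ∈ F, ∃ l ∈ A, ∀ a ∈ A, ccwDist base a ≤ ccwDist base l := fun A hA =>
    Set.exists_max_image A (ccwDist base) (hF.finite A hA) (hF.nonempty A hA)
  have hafter : ∀ p ∈ vertices F, ∃ s, s ∉ ratC ∧ JustAfter (insert base (vertices F)) p s :=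
    fun p hp => exists_justAfter (hF.finite_vertices.insert base) (hF.vertices_subset_ratC hp)
  choose! last hlast using hlast
  choose! after hafter using hafter
  exact ⟨base, last, after, hbase, fun A hA => (hlast A hA).1, fun A hA => (hlast A hA).2,
    fun p hp => (hafter p hp).1, fun p hp => (hafter p hp).2⟩

namespace CutData

/-- The vertices that are not the last point of their member of the family. -/
def nonLast (c : CutData F) : Set Circle1 := {p | ∃ A ∈ F, p ∈ A ∧ p ≠ c.last A}

variable (c : CutData F)

lemma mem_vertices_of_mem_nonLast (hp : p ∈ c.nonLast) : p ∈ vertices F :=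
  let ⟨A, hA, hpA, _⟩ := hp
  ⟨A, hA, hpA⟩

lemma finite_nonLast (hF : IsUnlinkedFamily F) : c.nonLast.Finite :=
  hF.finite_vertices.subset fun _ => c.mem_vertices_of_mem_nonLast

lemma ncard_nonLast (hF : IsUnlinkedFamily F) : c.nonLast.ncard = ∑ A ∈ F, (A.ncard - 1) := by
  have hUnion : c.nonLast = ⋃ A ∈ F, A \ {c.last A} := by
    ext
    simp [nonLast, and_left_comm]
  have hfin : ∀ A ∈ F, (A \ {c.last A}).Finite := fun A hA => (hF.finite A hA).sdiff
  have hdisj : (F : Set (Set Circle1)).PairwiseDisjoint fun A => A \ {c.last A} :=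
    fun A hA B hB hne => (hF.pairwiseDisjoint hA hB hne).mono sdiff_subset sdiff_subset
  have hcard : ∀ A ∈ F, (A \ {c.last A}).ncard = A.ncard - 1 := fun A hA =>
    Set.ncard_sdiff_singleton_of_mem (c.last_mem A hA)
  rw [← Finset.sum_congr rfl hcard, hUnion, ← finsum_mem_coe_finset]
  exact F.finite_toSet.ncard_biUnion hfin hdisj

lemma base_ne (hF : IsUnlinkedFamily F) (hp : p ∈ vertices F) : c.base ≠ p :=
  fun h => c.base_notMem (h ▸ hF.vertices_subset_ratC hp)

lemma after_ne (hF : IsUnlinkedFamily F) (hp : p ∈ vertices F) : c.after p ≠ p :=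
  fun h => c.after_notMem p hp (h.symm ▸ hF.vertices_subset_ratC hp)

lemma after_mem_arc (hp : p ∈ vertices F) (hq : q ∈ vertices F) : c.after p ∈ arc p q :=
  c.justAfter p hp q (mem_insert_of_mem _ hq)

lemma mem_arc_base_after (hF : IsUnlinkedFamily F) (hp : p ∈ vertices F) :
    p ∈ arc c.base (c.after p) :=
  mem_arc_rotate (mem_arc_rotate (c.justAfter p hp _ (mem_insert _ _)) (c.base_ne hF hp).symm)
    (c.after_ne hF hp)

lemma mem_arc_base_last (hA : A ∈ F) (hpA : p ∈ A) (hp : p ≠ c.last A) :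
    p ∈ arc c.base (c.last A) :=
  (c.le_last A hA p hpA).lt_of_ne fun h => hp (ccwDist_right_injective _ h)

lemma not_sameRegion_base_after (hF : IsUnlinkedFamily F) (hp : p ∈ c.nonLast) :
    ¬ SameRegion F c.base (c.after p) := by
  obtain ⟨A, hA, hpA, hpl⟩ := hp
  have hlA := c.last_mem A hA
  have hpl' := c.mem_arc_base_last hA hpA hpl
  exact fun h => not_sameGap_of_mem_arc hpA hlA (c.mem_arc_base_after hF ⟨A, hA, hpA⟩)
    (arc_subset_of_mem_left hpl' (c.after_mem_arc ⟨A, hA, hpA⟩ ⟨A, hA, hlA⟩)) (h A hA)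

lemma not_sameRegion_after_after (hF : IsUnlinkedFamily F) (hp : p ∈ c.nonLast)
    (hq : q ∈ c.nonLast) (hpq : p ∈ arc c.base q) :
    ¬ SameRegion F (c.after p) (c.after q) := by
  have hp := c.mem_vertices_of_mem_nonLast hp
  obtain ⟨A, hA, hqA, hql⟩ := hq
  have hq : q ∈ vertices F := ⟨A, hA, hqA⟩
  have hlA := c.last_mem A hA
  have hap : c.after p ∈ arc c.base q := arc_subset_of_mem_left hpq (c.after_mem_arc hp hq)
  have hqa : q ∈ arc c.base (c.after q) := c.mem_arc_base_after hF hq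
  have hal : c.after q ∈ arc c.base (c.last A) :=
    arc_subset_of_mem_left (c.mem_arc_base_last hA hqA hql) (c.after_mem_arc hq ⟨A, hA, hlA⟩)
  exact fun h => not_sameGap_of_mem_arc hqA hlA (mem_arc_right_of_mem_arc hqa hap)
    (mem_arc_right_of_mem_arc hal (arc_subset_of_mem_right hqa hap)) (h A hA)

lemma eq_of_sameRegion_after (hF : IsUnlinkedFamily F) (hp : p ∈ c.nonLast) (hq : q ∈ c.nonLast)
    (h : SameRegion F (c.after p) (c.after q)) : p = q := by
  rcases lt_trichotomy (ccwDist c.base p) (ccwDist c.base q) with hlt | heq | hlt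
  · exact absurd h (c.not_sameRegion_after_after hF hp hq hlt)
  · exact ccwDist_right_injective _ heq
  · exact absurd h.symm (c.not_sameRegion_after_after hF hq hp hlt)

lemma walk_base_or_exists_walk_after (hF : IsUnlinkedFamily F) (hx : x ∉ ratC) :
    RegionWalk F x c.base ∨ ∃ p ∈ vertices F, p ∈ arc c.base x ∧ RegionWalk F x (c.after p) := by
  by_cases hfree : ∀ p ∈ vertices F, p ∉ arc c.base x
  · exact Or.inl (RegionWalk.arc c.base_notMem hx hfree).symm
  push Not at hfree
  obtain ⟨p, ⟨hp, hpx⟩, hmax⟩ := Set.exists_max_image (vertices F ∩ arc c.base x) (ccwDist c.base)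
    (hF.finite_vertices.inter_of_left _) hfree
  have hfree : ∀ q ∈ vertices F, q ∉ arc p x := fun q hq hqx =>
    (hmax q ⟨hq, arc_subset_of_mem_left hpx hqx⟩).not_gt (mem_arc_left_of_mem_arc hpx hqx)
  refine Or.inr ⟨p, hp, hpx, ?_⟩
  have ha := c.after_notMem p hp
  rcases lt_trichotomy (ccwDist p (c.after p)) (ccwDist p x) with hlt | heq | hlt
  · exact (RegionWalk.arc ha hx fun q hq h => hfree q hq (arc_subset_of_mem_left hlt h)).symm
  · rw [ccwDist_right_injective p heq]
    exact RegionWalk.refl hx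
  · exact RegionWalk.arc hx ha fun q hq h => (c.justAfter p hp).notMem_arc
      (mem_insert_of_mem _ hq) (arc_subset_of_mem_left hlt h)

lemma isNext_last_of_forall_le (hA : A ∈ F) (hq : q ∈ A)
    (hmin : ∀ a ∈ A, ccwDist c.base q ≤ ccwDist c.base a) : IsNext A (c.last A) q := by
  refine ⟨c.last_mem A hA, hq, fun a ha hmem => ?_⟩
  have hla : a ≠ c.last A := ne_of_mem_of_not_mem hmem (notMem_arc_left _ _)
  have hqa : q ≠ a := (ne_of_mem_of_not_mem hmem (notMem_arc_right _ _)).symm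
  have hqa' : q ∈ arc c.base a :=
    (hmin a ha).lt_of_ne fun h => hqa (ccwDist_right_injective _ h)
  have hal : a ∈ arc q (c.last A) :=
    mem_arc_right_of_mem_arc (c.mem_arc_base_last hA ha hla) hqa'
  have hql : q ≠ c.last A := by
    rintro h
    exact ((mem_arc.1 hqa').trans (c.mem_arc_base_last hA ha hla)).ne (congrArg _ h)
  exact (disjoint_arc_swap hql).notMem_of_mem_left hal hmem

/-- Among the vertices from which a walk reaches `x`, take the one closest to the base point: if it
were the last point of its class, hopping over to the first point of that class would produce a
closer one. -/
lemma exists_walk_nonLast (hF : IsUnlinkedFamily F) (hx : x ∉ ratC) :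
    RegionWalk F x c.base ∨ ∃ p ∈ c.nonLast, RegionWalk F x (c.after p) := by
  refine or_iff_not_imp_left.2 fun hbase => ?_
  obtain ⟨p₀, hp₀, -, hwalk₀⟩ := (c.walk_base_or_exists_walk_after hF hx).resolve_left hbase
  obtain ⟨p, ⟨hp, hwalk⟩, hmin⟩ := Set.exists_min_image
    (vertices F ∩ {p | RegionWalk F x (c.after p)}) (ccwDist c.base)
    (hF.finite_vertices.inter_of_left _) ⟨p₀, hp₀, hwalk₀⟩
  obtain ⟨A, hA, hpA⟩ := hp
  refine ⟨p, ⟨A, hA, hpA, fun hlast => ?_⟩, hwalk⟩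
  obtain ⟨q, hqA, hqmin⟩ :=
    Set.exists_min_image A (ccwDist c.base) (hF.finite A hA) (hF.nonempty A hA)
  obtain ⟨s, hs, hsq⟩ := exists_justBefore (hF.finite_vertices.insert c.base)
    (hF.subset_ratC A hA hqA)
  have hhop : RegionWalk F s (c.after p) := by
    rw [hlast]
    have hl : c.last A ∈ vertices F := ⟨A, hA, c.last_mem A hA⟩
    exact RegionWalk.hop hA (c.isNext_last_of_forall_le hA hqA hqmin) (c.after_notMem _ hl) hs
      ((c.justAfter _ hl).mono (subset_insert _ _)) (hsq.mono (subset_insert _ _))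
  have hxs : RegionWalk F x s := hwalk.trans hhop.symm
  rcases c.walk_base_or_exists_walk_after hF hs with h | ⟨p', hp', hp's, h⟩
  · exact hbase (hxs.trans h)
  · have hsq' : s ∈ arc c.base q := hsq _ (mem_insert _ _)
    exact (hmin p' ⟨hp', hxs.trans h⟩).not_gt
      ((mem_arc.1 hp's).trans (hsq'.trans_le (hqmin p hpA)))

open Classical in
/-- The base point together with an angle just after each vertex in `nonLast`. -/
def transversal (hF : IsUnlinkedFamily F) : Finset Circle1 :=
  insert c.base ((c.finite_nonLast hF).toFinset.image c.after)

lemma mem_transversal (hF : IsUnlinkedFamily F) :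
    y ∈ c.transversal hF ↔ y = c.base ∨ ∃ p ∈ c.nonLast, c.after p = y := by
  simp [transversal]

lemma exists_mem_transversal_walk (hF : IsUnlinkedFamily F) (hx : x ∉ ratC) :
    ∃ y ∈ c.transversal hF, RegionWalk F x y := by
  rcases c.exists_walk_nonLast hF hx with h | ⟨p, hp, h⟩
  · exact ⟨c.base, (c.mem_transversal hF).2 (Or.inl rfl), h⟩
  · exact ⟨c.after p, (c.mem_transversal hF).2 (Or.inr ⟨p, hp, rfl⟩), h⟩

lemma isTransversal (hF : IsUnlinkedFamily F) : IsTransversal F (c.transversal hF) where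
  irrational y hy := by
    rcases (c.mem_transversal hF).1 hy with rfl | ⟨p, hp, rfl⟩
    · exact c.base_notMem
    · exact c.after_notMem p (c.mem_vertices_of_mem_nonLast hp)
  eq_of_sameRegion y hy z hz h := by
    rcases (c.mem_transversal hF).1 hy with rfl | ⟨p, hp, rfl⟩ <;>
      rcases (c.mem_transversal hF).1 hz with rfl | ⟨q, hq, rfl⟩
    · rfl
    · exact absurd h (c.not_sameRegion_base_after hF hq)
    · exact absurd h.symm (c.not_sameRegion_base_after hF hp)
    · rw [c.eq_of_sameRegion_after hF hp hq h]
  exists_sameRegion x hx := by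
    obtain ⟨y, hy, h⟩ := c.exists_mem_transversal_walk hF hx
    exact ⟨y, hy, h.sameRegion hF⟩

lemma card_transversal (hF : IsUnlinkedFamily F) :
    (c.transversal hF).card = 1 + ∑ A ∈ F, (A.ncard - 1) := by
  have hirr : ∀ p ∈ c.nonLast, c.after p ∉ ratC := fun p hp =>
    c.after_notMem p (c.mem_vertices_of_mem_nonLast hp)
  have hinj : InjOn c.after c.nonLast := fun p hp q hq h =>
    c.eq_of_sameRegion_after hF hp hq (h ▸ SameRegion.refl hF (hirr p hp))
  have hbase : ∀ p ∈ c.nonLast, c.after p ≠ c.base := fun p hp h =>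
    c.not_sameRegion_base_after hF hp (h.symm ▸ SameRegion.refl hF c.base_notMem)
  rw [transversal, Finset.card_insert_of_notMem (by simpa using hbase),
    Finset.card_image_of_injOn (by simpa using hinj),
    ← Set.ncard_eq_toFinset_card _ (c.finite_nonLast hF),
    c.ncard_nonLast hF, add_comm]

end CutData

lemma SameRegion.regionWalk (hF : IsUnlinkedFamily F) (hx : x ∉ ratC) (hy : y ∉ ratC)
    (h : SameRegion F x y) : RegionWalk F x y := by
  obtain ⟨c⟩ := hF.nonempty_cutData
  obtain ⟨x', hx', hxx'⟩ := c.exists_mem_transversal_walk hF hx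
  obtain ⟨y', hy', hyy'⟩ := c.exists_mem_transversal_walk hF hy
  have : x' = y' := (c.isTransversal hF).eq_of_sameRegion x' hx' y' hy'
    ((hxx'.sameRegion hF).symm.trans (h.trans (hyy'.sameRegion hF)))
  exact hxx'.trans (this ▸ hyy'.symm)

namespace IsTransversal

variable {Y Y' : Finset Circle1}

lemma card_le (h : IsTransversal F Y) (h' : IsTransversal F Y') : Y.card ≤ Y'.card := by
  choose! f hf using fun y hy => h'.exists_sameRegion y (h.irrational y hy)
  refine Finset.card_le_card_of_injOn f (fun y hy => (hf y hy).1) fun y hy z hz he => ?_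
  exact h.eq_of_sameRegion y hy z hz ((hf y hy).2.trans (he ▸ (hf z hz).2.symm))

lemma card_eq (h : IsTransversal F Y) (hF : IsUnlinkedFamily F) :
    Y.card = 1 + ∑ A ∈ F, (A.ncard - 1) := by
  obtain ⟨c⟩ := hF.nonempty_cutData
  rw [← c.card_transversal hF]
  exact (h.card_le (c.isTransversal hF)).antisymm ((c.isTransversal hF).card_le h)

end IsTransversal

open Classical in
lemma IsUnlinkedFamily.exists_isTransversal_superset (hF : IsUnlinkedFamily F)
    {Y : Finset Circle1} (hirr : ∀ y ∈ Y, y ∉ ratC)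
    (hsep : ∀ y ∈ Y, ∀ z ∈ Y, SameRegion F y z → y = z) : ∃ Y', Y ⊆ Y' ∧ IsTransversal F Y' := by
  obtain ⟨c⟩ := hF.nonempty_cutData
  have hT := c.isTransversal hF
  refine ⟨Y ∪ {t ∈ c.transversal hF | ∀ y ∈ Y, ¬ SameRegion F y t}, Finset.subset_union_left,
    ⟨fun y hy => ?_, fun y hy z hz h => ?_, fun x hx => ?_⟩⟩
  · rcases Finset.mem_union.1 hy with hy | hy
    · exact hirr y hy
    · exact hT.irrational y (Finset.mem_filter.1 hy).1
  · simp only [Finset.mem_union, Finset.mem_filter] at hy hz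
    rcases hy with hy | hy <;> rcases hz with hz | hz
    · exact hsep y hy z hz h
    · exact absurd h (hz.2 y hy)
    · exact absurd h.symm (hy.2 z hz)
    · exact hT.eq_of_sameRegion y hy.1 z hz.1 h
  · obtain ⟨t, ht, hxt⟩ := hT.exists_sameRegion x hx
    by_cases hnew : ∀ y ∈ Y, ¬ SameRegion F y t
    · exact ⟨t, Finset.mem_union_right _ (Finset.mem_filter.2 ⟨ht, hnew⟩), hxt⟩
    · push Not at hnew
      obtain ⟨y, hy, hyt⟩ := hnew
      exact ⟨y, Finset.mem_union_left _ hy, hxt.trans hyt.symm⟩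

end Counting

/-! ### Classes of a rational lamination and its real extension -/

namespace RatLam

/-- The class of `x`; it is empty if `x` is irrational. -/
def cls (lam : RatLam) (x : Circle1) : Set Circle1 := relClass lam.rel x

/-- The closure of the lamination in `(ℝ/ℤ)²`, which generates the real extension. -/
def closureRel (lam : RatLam) (x y : Circle1) : Prop :=
  (x, y) ∈ closure {p : Circle1 × Circle1 | lam.rel p.1 p.2}

variable {lam : RatLam} {x y z a b : Circle1}

lemma mem_cls : y ∈ lam.cls x ↔ lam.rel x y := Iff.rfl

lemma mem_cls_self (hx : x ∈ ratC) : x ∈ lam.cls x := lam.refl x hx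

lemma mem_ratC_of_mem_cls (h : y ∈ lam.cls x) : y ∈ ratC := (lam.rel_rat x y h).2

lemma notMem_cls (hx : x ∉ ratC) : x ∉ lam.cls z := fun h => hx (mem_ratC_of_mem_cls h)

lemma finite_cls (lam : RatLam) (x : Circle1) : (lam.cls x).Finite := lam.finiteClass x

lemma cls_eq (h : lam.rel x y) : lam.cls x = lam.cls y := by
  ext z
  exact ⟨lam.trans _ _ _ (lam.symm _ _ h), lam.trans _ _ _ h⟩

lemma rel_of_cls_eq (hy : y ∈ ratC) (h : lam.cls x = lam.cls y) : lam.rel x y := by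
  rw [← mem_cls, h]
  exact mem_cls_self hy

lemma sameGap_of_rel (hx : ¬ lam.rel x a) (hab : lam.rel a b) : SameGap (lam.cls x) a b :=
  Unlinked.sameGap (lam.unlinkedClass x a hx) (lam.refl a (lam.rel_rat a b hab).1) hab

lemma closureRel_of_rel (h : lam.rel x y) : lam.closureRel x y := subset_closure h

lemma closureRel_iff_frequently :
    lam.closureRel a b ↔ ∃ᶠ p in 𝓝 a ×ˢ 𝓝 b, lam.rel p.1 p.2 := by
  rw [closureRel, mem_closure_iff_frequently, nhds_prod_eq]
  rfl

lemma closureRel.exists_rel (h : lam.closureRel a b) {p q : Circle1 → Prop}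
    (hp : ∀ᶠ s in 𝓝 a, p s) (hq : ∀ᶠ t in 𝓝 b, q t) : ∃ s t, lam.rel s t ∧ p s ∧ q t := by
  obtain ⟨⟨s, t⟩, hst, hs, ht⟩ :=
    ((closureRel_iff_frequently.1 h).and_eventually (hp.prod_mk hq)).exists
  exact ⟨s, t, hst, hs, ht⟩

lemma closureRel.symm (h : lam.closureRel a b) : lam.closureRel b a := by
  rw [closureRel_iff_frequently] at h ⊢
  exact tendsto_prod_swap.frequently (h.mono fun _ => lam.symm _ _)

lemma closureRel.sameGap (h : lam.closureRel a b) (ha : a ∉ lam.cls x) (hb : b ∉ lam.cls x) :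
    SameGap (lam.cls x) a b := by
  obtain ⟨s, t, hst, has, hbt⟩ := h.exists_rel (eventually_sameGap (lam.finite_cls x) ha)
    (eventually_sameGap (lam.finite_cls x) hb)
  exact has.trans ((sameGap_of_rel has.right hst).trans hbt.symm)

/-- A leaf close to the chord from `x` to the middle one of three irrational limits `z₁`, `z₂`, `z₃`
would cross the chord from `x` to `z₁` or to `z₃`. -/
lemma not_closureRel_of_three {z₁ z₂ z₃ : Circle1} (hx : x ∈ ratC) (hz₁ : z₁ ∉ ratC)
    (hz₂ : z₂ ∉ ratC) (hz₃ : z₃ ∉ ratC) (h₁₂ : z₁ ∈ arc x z₂) (h₂₃ : z₂ ∈ arc x z₃)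
    (h₁ : lam.closureRel x z₁) (h₃ : lam.closureRel x z₃) : ¬ lam.closureRel x z₂ := by
  intro h₂
  have h₁₃ : z₁ ∈ arc x z₃ := arc_subset_of_mem_right h₂₃ h₁₂
  have hxz₃ : x ≠ z₃ := ne_of_mem_of_not_mem hx hz₃
  have hx₃₁ : x ∈ arc z₃ z₁ :=
    mem_arc_rotate (mem_arc_rotate h₁₃ hxz₃) (ne_of_mem_of_not_mem hx hz₁).symm
  obtain ⟨p, q, hpq, hp, hq, hxq⟩ := h₂.exists_rel ((isOpen_arc z₃ z₁).eventually_mem hx₃₁)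
    (((isOpen_arc z₁ z₃).eventually_mem (mem_arc_right_of_mem_arc h₂₃ h₁₂)).and
      ((lam.finite_cls x).isClosed.isOpen_compl.eventually_mem (notMem_cls hz₂)))
  have hxp : ¬ lam.rel x p := fun h => hxq (lam.trans _ _ _ h hpq)
  have hpp : p ∈ lam.cls p := mem_cls_self (lam.rel_rat _ _ hpq).1
  have hxp' : x ∉ lam.cls p := fun h => hxp (lam.symm _ _ h)
  rcases lt_trichotomy (ccwDist z₃ p) (ccwDist z₃ x) with hlt | heq | hlt
  · exact not_sameGap_of_mem_arc hpq hpp (arc_subset_of_mem_left h₁₃ hq)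
      (mem_arc_rotate (mem_arc_rotate hlt hxz₃.symm) (ne_of_mem_of_not_mem hpp (notMem_cls hz₃)))
      (h₃.sameGap hxp' (notMem_cls hz₃))
  · exact hxp' (ccwDist_right_injective _ heq ▸ hpp)
  · exact not_sameGap_of_mem_arc hpp hpq (mem_arc_right_of_mem_arc hp hlt)
      (mem_arc_left_of_mem_arc h₁₃ hq) (h₁.sameGap hxp' (notMem_cls hz₁))

lemma finite_closureRel_irrational (hx : x ∈ ratC) :
    {z | z ∉ ratC ∧ lam.closureRel x z}.Finite := by
  by_contra hinf
  obtain ⟨t, ht, hcard⟩ := ((Set.Infinite.image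
    (ccwDist_right_injective x).injOn hinf).exists_subset_card_eq 3)
  have hmem := fun i => ht (t.orderEmbOfFin_mem hcard i)
  choose z hz hzt using hmem
  have hlt : ∀ i j, i < j → z i ∈ arc x (z j) := fun i j hij => by
    rw [mem_arc, hzt, hzt]
    exact (t.orderEmbOfFin hcard).strictMono hij
  exact not_closureRel_of_three hx (hz 0).1 (hz 1).1 (hz 2).1 (hlt 0 1 (by decide))
    (hlt 1 2 (by decide)) (hz 0).2 (hz 2).2 (hz 1).2

end RatLam

section UnlinkedRelation

variable {lam : RatLam} {x y z : Circle1}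

lemma RatLam.unlRel_iff : UnlRel lam.rel x y ↔ ∀ z ∈ ratC, SameGap (lam.cls z) x y := by
  constructor
  · rintro ⟨hx, -, rfl | h⟩
    · exact fun z _ => SameGap.refl (RatLam.notMem_cls hx)
    · exact fun z hz => ⟨RatLam.notMem_cls hx, h z hz⟩
  · exact fun h => ⟨fun hx => (h x hx).left (RatLam.mem_cls_self hx),
      fun hy => (h y hy).right (RatLam.mem_cls_self hy), Or.inr fun z hz => (h z hz).2⟩

namespace UnlRel

lemma left (h : UnlRel lam.rel x y) : x ∉ ratC := h.1

lemma right (h : UnlRel lam.rel x y) : y ∉ ratC := h.2.1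

lemma sameGap (h : UnlRel lam.rel x y) (hz : z ∈ ratC) : SameGap (lam.cls z) x y :=
  RatLam.unlRel_iff.1 h z hz

lemma refl (hx : x ∉ ratC) : UnlRel lam.rel x x := ⟨hx, hx, Or.inl rfl⟩

lemma symm (h : UnlRel lam.rel x y) : UnlRel lam.rel y x :=
  RatLam.unlRel_iff.2 fun _ hz => (h.sameGap hz).symm

lemma trans (h : UnlRel lam.rel x y) (h' : UnlRel lam.rel y z) : UnlRel lam.rel x z :=
  RatLam.unlRel_iff.2 fun _ hw => (h.sameGap hw).trans (h'.sameGap hw)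

end UnlRel

end UnlinkedRelation

namespace InvRatLam

variable {d : ℕ} {lam : InvRatLam d} {x y a b : Circle1}

lemma image_md_cls (hx : x ∈ ratC) : md d '' lam.cls x = lam.cls (md d x) := (lam.invariant x hx).1

lemma rel_md (h : lam.rel x y) : lam.rel (md d x) (md d y) := by
  rw [← RatLam.mem_cls, ← image_md_cls (lam.rel_rat x y h).1]
  exact mem_image_of_mem _ h

lemma closureRel_md (h : lam.closureRel a b) : lam.closureRel (md d a) (md d b) := by
  rw [RatLam.closureRel_iff_frequently] at h ⊢
  exact ((continuous_md d).tendsto a |>.prodMap ((continuous_md d).tendsto b)).frequently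
    (h.mono fun _ => rel_md)

lemma closureRel_pow_smul (h : lam.closureRel a b) (n : ℕ) :
    lam.closureRel (d ^ n • a) (d ^ n • b) := by
  induction n with
  | zero => simpa using h
  | succ n ih => simpa only [md, smul_smul, ← pow_succ'] using closureRel_md ih

variable [d.AtLeastTwo]

/-- The orbit of `x` is finite and that of `y` is infinite, so some point of the orbit of `x` would
be related to infinitely many points of the orbit of `y`. -/
lemma not_closureRel_of_mem_ratC (hx : x ∈ ratC) (hy : y ∉ ratC) : ¬ lam.closureRel x y := by
  intro h
  rw [mem_ratC_iff_isOfFinAddOrder] at hx hy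
  have : Finite (AddSubmonoid.multiples x) := hx.finite_multiples
  obtain ⟨⟨x₀, hx₀⟩, hinf⟩ := Finite.exists_infinite_fiber
    fun n : ℕ => (⟨d ^ n • x, d ^ n, rfl⟩ : AddSubmonoid.multiples x)
  have hx₀ : x₀ ∈ ratC := by
    obtain ⟨n, rfl⟩ := hx₀
    exact mem_ratC_iff_isOfFinAddOrder.2 hx.nsmul
  have hinj : Injective fun n : ℕ => d ^ n • y :=
    (injective_nsmul_iff_not_isOfFinAddOrder.2 hy).comp
      (Nat.pow_right_injective Nat.AtLeastTwo.prop)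
  refine (((Set.infinite_coe_iff.1 hinf).image hinj.injOn).mono ?_)
    (RatLam.finite_closureRel_irrational (lam := lam.toRatLam) hx₀)
  rintro _ ⟨n, hn, rfl⟩
  have hn : d ^ n • x = x₀ := congrArg Subtype.val hn
  refine ⟨fun hr => ?_, hn ▸ closureRel_pow_smul h n⟩
  exact hy ((mem_ratC_iff_isOfFinAddOrder.1 hr).of_nsmul (pow_ne_zero n (NeZero.ne d)))

lemma mem_ratC_iff_of_closureRel (h : lam.closureRel x y) : x ∈ ratC ↔ y ∈ ratC :=
  ⟨fun hx => by_contra fun hy => not_closureRel_of_mem_ratC hx hy h,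
    fun hy => by_contra fun hx => not_closureRel_of_mem_ratC hy hx h.symm⟩

lemma mem_ratC_iff_of_realExt (h : realExt lam.rel x y) : x ∈ ratC ↔ y ∈ ratC := by
  induction h with
  | rel x y h => exact mem_ratC_iff_of_closureRel h
  | refl x => exact Iff.rfl
  | symm x y _ ih => exact ih.symm
  | trans x y z _ _ ih₁ ih₂ => exact ih₁.trans ih₂

lemma rel_of_realExt (h : realExt lam.rel x y) (hx : x ∈ ratC) : lam.rel x y := by
  induction h with
  | rel x y h => exact lam.closed' x hx y ((mem_ratC_iff_of_closureRel h).1 hx) h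
  | refl x => exact lam.refl x hx
  | symm x y h ih => exact lam.symm _ _ (ih ((mem_ratC_iff_of_realExt h).2 hx))
  | trans x y z h _ ih₁ ih₂ =>
    exact lam.trans _ _ _ (ih₁ hx) (ih₂ ((mem_ratC_iff_of_realExt h).1 hx))

lemma setOf_realExt_eq_cls (hx : x ∈ ratC) : {y | realExt lam.rel x y} = lam.cls x := by
  ext y
  exact ⟨fun h => rel_of_realExt h hx,
    fun h => Relation.EqvGen.rel _ _ (RatLam.closureRel_of_rel h)⟩

lemma unlRel_of_realExt (h : realExt lam.rel x y) (hx : x ∉ ratC) : UnlRel lam.rel x y := by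
  induction h with
  | rel x y h =>
    have hy : y ∉ ratC := (mem_ratC_iff_of_closureRel h).not.1 hx
    exact RatLam.unlRel_iff.2 fun z _ =>
      RatLam.closureRel.sameGap h (RatLam.notMem_cls hx) (RatLam.notMem_cls hy)
  | refl x => exact UnlRel.refl hx
  | symm x y h ih => exact (ih ((mem_ratC_iff_of_realExt h).not.2 hx)).symm
  | trans x y z _ _ ih₁ ih₂ => exact (ih₁ hx).trans (ih₂ (ih₁ hx).right)

end InvRatLam

/-! ### Pulling back classes -/

section Fiber

variable {d : ℕ} [NeZero d] {c t : Circle1}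

open Classical in
/-- The `d` preimages of `c` under `md d`, as translates of one of them. -/
def fiber (d : ℕ) (c : Circle1) : Finset Circle1 :=
  (Finset.range d).image fun k : ℕ => liftAfter d 0 c + (((k + 1) / d : ℝ) : Circle1)

lemma mem_fiber : t ∈ fiber d c ↔ md d t = c := by
  have hd : (0 : ℝ) < d := Nat.cast_pos.2 (NeZero.pos d)
  rw [fiber, Finset.mem_image]
  constructor
  · rintro ⟨k, -, rfl⟩
    have hk : (((k : ℝ) + 1 : ℝ) : Circle1) = 0 :=
      AddCircle.coe_eq_zero_iff 1 |>.2 ⟨k + 1, by simp⟩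
    rw [md_add_coe, md_liftAfter, mul_div_cancel₀ _ hd.ne', hk, add_zero]
  · intro h
    obtain ⟨k, hk⟩ := exists_mul_ccwDist_eq (d := d) (liftAfter d 0 c) t
    rw [md_liftAfter, h, ccwDist_self] at hk
    refine ⟨k, Finset.mem_range.2 ?_, by rw [← hk, mul_div_cancel_left₀ _ hd.ne', add_ccwDist]⟩
    have : (k : ℝ) + 1 ≤ d := by nlinarith [ccwDist_le_one (liftAfter d 0 c) t]
    exact_mod_cast this

lemma card_fiber (c : Circle1) : (fiber d c).card = d := by
  have hd : (0 : ℝ) < d := Nat.cast_pos.2 (NeZero.pos d)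
  have hdist : ∀ k ∈ Finset.range d, ccwDist (liftAfter d 0 c)
      (liftAfter d 0 c + (((k + 1) / d : ℝ) : Circle1)) = (k + 1) / d := fun k hk =>
    ccwDist_add_coe (by positivity)
      ((div_le_one hd).2 (by exact_mod_cast Nat.succ_le_of_lt (Finset.mem_range.1 hk)))
  rw [fiber, Finset.card_image_of_injOn, Finset.card_range]
  intro k hk j hj hkj
  have h : ((k : ℝ) + 1) / d = (j + 1) / d := by
    rw [← hdist k hk, ← hdist j hj]
    exact congrArg _ hkj
  exact_mod_cast add_right_cancel ((div_left_inj' hd.ne').1 h)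

lemma mem_ratC_of_mem_fiber (hc : c ∈ ratC) (ht : t ∈ fiber d c) : t ∈ ratC :=
  md_mem_ratC.1 ((mem_fiber.1 ht).symm ▸ hc)

end Fiber

section Families

/-- The members of `F` are classes of `lam`. -/
def RatLam.IsFamily (lam : RatLam) (F : Finset (Set Circle1)) : Prop :=
  ∀ A ∈ F, ∃ x ∈ ratC, lam.cls x = A

namespace RatLam.IsFamily

variable {lam : RatLam} {F : Finset (Set Circle1)} {A : Set Circle1} {p a : Circle1}

lemma isUnlinkedFamily (hF : lam.IsFamily F) : IsUnlinkedFamily F where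
  finite A hA := by
    obtain ⟨x, -, rfl⟩ := hF A hA
    exact lam.finite_cls x
  nonempty A hA := by
    obtain ⟨x, hx, rfl⟩ := hF A hA
    exact ⟨x, mem_cls_self hx⟩
  subset_ratC A hA := by
    obtain ⟨x, -, rfl⟩ := hF A hA
    exact fun _ => mem_ratC_of_mem_cls
  unlinked A hA B hB hne := by
    obtain ⟨x, -, rfl⟩ := hF A hA
    obtain ⟨y, -, rfl⟩ := hF B hB
    exact lam.unlinkedClass x y fun h => hne (cls_eq h)

lemma cls_eq (hF : lam.IsFamily F) (hA : A ∈ F) (ha : a ∈ A) : lam.cls a = A := by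
  obtain ⟨x, -, rfl⟩ := hF A hA
  exact (RatLam.cls_eq ha).symm

lemma mem_vertices (hF : lam.IsFamily F) : p ∈ vertices F ↔ p ∈ ratC ∧ lam.cls p ∈ F := by
  constructor
  · rintro ⟨A, hA, hp⟩
    exact ⟨hF.isUnlinkedFamily.subset_ratC A hA hp, (hF.cls_eq hA hp).symm ▸ hA⟩
  · exact fun ⟨hp, hF⟩ => ⟨_, hF, mem_cls_self hp⟩

end RatLam.IsFamily

end Families

namespace InvRatLam

/-- `md d` has a well-defined degree on each class. -/
def IsUniform {d : ℕ} (lam : InvRatLam d) : Prop := ∀ x ∈ ratC, ∃ δ, classDeg d (lam.cls x) δ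

variable {d : ℕ} [NeZero d] {lam : InvRatLam d} {F : Finset (Set Circle1)} {A : Set Circle1}
  {x y c c' t u v p : Circle1}

open Classical in
lemma IsUniform.card_filter_rel_fiber (h : lam.IsUniform) (ht : t ∈ ratC)
    (hc : lam.rel (md d t) c) (hcc' : lam.rel c c') :
    {s ∈ fiber d c | lam.rel t s}.card = {s ∈ fiber d c' | lam.rel t s}.card := by
  obtain ⟨δ, hδ⟩ := h t ht
  have key : ∀ e, lam.rel (md d t) e → {s ∈ fiber d e | lam.rel t s}.card = δ := fun e he => by
    rw [← hδ e ((image_md_cls ht).symm ▸ he), ← Set.ncard_coe_finset]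
    congr 1
    ext s
    simp only [Finset.coe_filter, mem_fiber, mem_ofPred_eq, RatLam.mem_cls, and_comm]
  rw [key c hc, key c' (lam.trans _ _ _ hc hcc')]

open Classical in
lemma IsUniform.card_filter_fiber (h : lam.IsUniform) {P : Circle1 → Prop}
    (hP : ∀ s t, P s → lam.rel s t → P t) (hcc' : lam.rel c c') :
    {s ∈ fiber d c | P s}.card = {s ∈ fiber d c' | P s}.card := by
  have hmaps : ∀ e ∈ ({c, c'} : Set Circle1), ∀ s ∈ {s ∈ fiber d e | P s},
      lam.cls s ∈ (fiber d c ∪ fiber d c').image lam.cls := by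
    rintro e (rfl | rfl) s hs <;>
    exact Finset.mem_image_of_mem _ (by simp [Finset.mem_of_mem_filter s hs])
  rw [Finset.card_eq_sum_card_fiberwise (hmaps c (by simp)),
    Finset.card_eq_sum_card_fiberwise (hmaps c' (by simp))]
  refine Finset.sum_congr rfl fun A hA => ?_
  obtain ⟨t, ht, rfl⟩ := Finset.mem_image.1 hA
  obtain ⟨hc, hc'⟩ := lam.rel_rat _ _ hcc'
  obtain ⟨htr, htc⟩ : t ∈ ratC ∧ lam.rel (md d t) c := by
    rcases Finset.mem_union.1 ht with ht | ht
    · exact ⟨mem_ratC_of_mem_fiber hc ht, (mem_fiber.1 ht).symm ▸ lam.refl c hc⟩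
    · exact ⟨mem_ratC_of_mem_fiber hc' ht, (mem_fiber.1 ht).symm ▸ lam.symm _ _ hcc'⟩
  have hfilter : ∀ e ∈ ratC, {s ∈ {s ∈ fiber d e | P s} | lam.cls s = lam.cls t} =
      if P t then {s ∈ fiber d e | lam.rel t s} else ∅ := fun e he => by
    have hrel : ∀ s ∈ fiber d e, lam.cls s = lam.cls t ↔ lam.rel t s := fun s hs =>
      ⟨fun hst => RatLam.rel_of_cls_eq (mem_ratC_of_mem_fiber he hs) hst.symm,
        fun hts => (RatLam.cls_eq hts).symm⟩
    ext s
    split_ifs with hPt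
    · simp only [Finset.mem_filter]
      exact ⟨fun ⟨⟨hs, _⟩, hst⟩ => ⟨hs, (hrel s hs).1 hst⟩,
        fun ⟨hs, hts⟩ => ⟨⟨hs, hP t s hPt hts⟩, (hrel s hs).2 hts⟩⟩
    · simp only [Finset.mem_filter, Finset.notMem_empty, iff_false]
      exact fun ⟨⟨hs, hPs⟩, hst⟩ => hPt (hP s t hPs (lam.symm _ _ ((hrel s hs).1 hst)))
  rw [hfilter c hc, hfilter c' hc']
  split_ifs
  · exact h.card_filter_rel_fiber htr htc hcc'
  · rfl

/-- A class point `b` strictly between the images would have one more preimage in the gap `(u, v)`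
than `md d v` has, since every preimage of `md d v` in `(u, v]` is preceded by one of `b`. -/
lemma IsUniform.isNext_md (h : lam.IsUniform) (huv : IsNext (lam.cls u) u v) :
    IsNext (lam.cls (md d u)) (md d u) (md d v) := by
  classical
  have hu : u ∈ ratC := RatLam.mem_ratC_of_mem_cls huv.left_mem
  refine ⟨RatLam.mem_cls_self (md_mem_ratC.2 hu), rel_md huv.right_mem, fun b hb hbarc => ?_⟩
  have hsat : ∀ s t, s ∈ arc u v → lam.rel s t → t ∈ arc u v := fun s t hs hst =>
    (RatLam.sameGap_of_rel (fun hus => huv.notMem_arc s hus hs) hst).mem_arc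
      huv.left_mem huv.right_mem hs
  have hcard := h.card_filter_fiber hsat (lam.trans _ _ _ (lam.symm _ _ (rel_md huv.right_mem)) hb)
  have hv : v ∉ {s ∈ fiber d (md d v) | s ∈ arc u v} := fun hv =>
    notMem_arc_right u v (Finset.mem_filter.1 hv).2
  have hle : (insert v {s ∈ fiber d (md d v) | s ∈ arc u v}).card ≤
      {s ∈ fiber d b | s ∈ arc u v}.card := by
    have hmd : ∀ s ∈ insert v {s ∈ fiber d (md d v) | s ∈ arc u v}, md d s = md d v := by
      intro s hs
      rcases Finset.mem_insert.1 hs with rfl | hs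
      exacts [rfl, mem_fiber.1 (Finset.mem_filter.1 hs).1]
    refine Finset.card_le_card_of_injOn (liftBefore d · b) (fun s hs => ?_) fun s hs t ht hst => ?_
    · refine Finset.mem_filter.2 ⟨mem_fiber.2 (md_liftBefore _ _), ?_⟩
      have hbs : liftBefore d s b ∈ arc u s := liftBefore_mem_arc ((hmd s hs).symm ▸ hbarc)
      rcases Finset.mem_insert.1 hs with rfl | hs
      exacts [hbs, arc_subset_of_mem_right (Finset.mem_filter.1 hs).2 hbs]
    · simpa only [liftBefore, hmd s hs, hmd t ht, add_left_inj] using hst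
  rw [Finset.card_insert_of_notMem hv] at hle
  omega

lemma finite_setOf_cls_md_mem (lam : InvRatLam d) (F : Finset (Set Circle1)) :
    {x | x ∈ ratC ∧ lam.cls (md d x) ∈ F}.Finite := by
  have hsub : {x | x ∈ ratC ∧ lam.cls (md d x) ∈ F} ⊆
      ⋃ A ∈ {A ∈ (F : Set (Set Circle1)) | A.Finite}, ⋃ p ∈ A, (fiber d p : Set Circle1) := by
    rintro x ⟨hx, hxF⟩
    simp only [mem_iUnion]
    exact ⟨_, ⟨hxF, lam.finite_cls _⟩, md d x, RatLam.mem_cls_self (md_mem_ratC.2 hx),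
      mem_fiber.2 rfl⟩
  refine Finite.subset ?_ hsub
  exact (F.finite_toSet.sep _).biUnion fun A hA =>
    hA.2.biUnion fun p _ => (fiber d p).finite_toSet

/-- The classes of `lam` that `md d` maps to members of `F`. -/
def pullback (lam : InvRatLam d) (F : Finset (Set Circle1)) : Finset (Set Circle1) :=
  ((finite_setOf_cls_md_mem lam F).image lam.cls).toFinset

lemma mem_pullback :
    A ∈ lam.pullback F ↔ ∃ x, (x ∈ ratC ∧ lam.cls (md d x) ∈ F) ∧ lam.cls x = A := by
  rw [pullback, Finite.mem_toFinset]
  rfl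

lemma isFamily_pullback : lam.IsFamily (lam.pullback F) := fun A hA => by
  obtain ⟨x, ⟨hx, -⟩, rfl⟩ := mem_pullback.1 hA
  exact ⟨x, hx, rfl⟩

lemma cls_mem_pullback (hx : x ∈ ratC) : lam.cls x ∈ lam.pullback F ↔ lam.cls (md d x) ∈ F := by
  refine ⟨fun h => ?_, fun h => mem_pullback.2 ⟨x, ⟨hx, h⟩, rfl⟩⟩
  obtain ⟨z, ⟨-, hzF⟩, hzx⟩ := mem_pullback.1 h
  rwa [← RatLam.cls_eq (rel_md (RatLam.rel_of_cls_eq hx hzx))]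

lemma mem_vertices_pullback (hF : lam.IsFamily F) :
    p ∈ vertices (lam.pullback F) ↔ md d p ∈ vertices F := by
  rw [isFamily_pullback.mem_vertices, hF.mem_vertices, md_mem_ratC]
  exact and_congr_right cls_mem_pullback

section Regions

variable {s s' : Circle1}

lemma justAfter_md (hF : lam.IsFamily F) (h : JustAfter (vertices (lam.pullback F)) u s) :
    JustAfter (vertices F) (md d u) (md d s) := fun p hp =>
  md_mem_arc_of_mem_arc_liftAfter
    (h _ ((mem_vertices_pullback hF).2 (by rwa [md_liftAfter])))

lemma justBefore_md (hF : lam.IsFamily F) (h : JustBefore (vertices (lam.pullback F)) v s) :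
    JustBefore (vertices F) (md d v) (md d s) := fun p hp =>
  md_mem_arc_of_mem_arc_liftBefore
    (h _ ((mem_vertices_pullback hF).2 (by rwa [md_liftBefore])))

lemma IsUniform.regionWalk_md (h : lam.IsUniform) (hF : lam.IsFamily F)
    (hxy : RegionWalk (lam.pullback F) x y) : RegionWalk F (md d x) (md d y) := by
  induction hxy with
  | arc hx hy hfree =>
    refine .arc (md_mem_ratC.not.2 hx) (md_mem_ratC.not.2 hy) fun p hp hp' => ?_
    exact hfree _ ((mem_vertices_pullback hF).2 (by rwa [md_liftAfter]))
      (liftAfter_mem_arc hp')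
  | @hop A u v s s' hA huv hs hs' hu hv =>
    obtain rfl := isFamily_pullback.cls_eq hA huv.left_mem
    have hur : u ∈ ratC := RatLam.mem_ratC_of_mem_cls huv.left_mem
    exact .hop ((cls_mem_pullback hur).1 hA) (h.isNext_md huv) (md_mem_ratC.not.2 hs)
      (md_mem_ratC.not.2 hs') (justAfter_md hF hu) (justBefore_md hF hv)
  | refl hx => exact .refl (md_mem_ratC.not.2 hx)
  | symm _ ih => exact ih.symm
  | trans _ _ ih ih' => exact ih.trans ih'

lemma IsUniform.sameRegion_md (h : lam.IsUniform) (hF : lam.IsFamily F) (hx : x ∉ ratC)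
    (hy : y ∉ ratC) (hxy : SameRegion (lam.pullback F) x y) : SameRegion F (md d x) (md d y) :=
  (h.regionWalk_md hF (hxy.regionWalk isFamily_pullback.isUnlinkedFamily hx hy)).sameRegion
    hF.isUnlinkedFamily

lemma sameRegion_liftAfter (hF : lam.IsFamily F) (hx : x ∉ ratC) (hc : c ∉ ratC)
    (hfree : ∀ p ∈ vertices F, p ∉ arc (md d x) c) :
    SameRegion (lam.pullback F) x (liftAfter d x c) :=
  sameRegion_of_notMem_arc isFamily_pullback.isUnlinkedFamily hx
    (liftAfter_mem_ratC.not.2 hc) fun _ hp hp' =>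
      hfree _ ((mem_vertices_pullback hF).1 hp) (md_mem_arc_of_mem_arc_liftAfter hp')

lemma sameRegion_liftBefore (hF : lam.IsFamily F) (hx : x ∉ ratC) (hc : c ∉ ratC)
    (hfree : ∀ p ∈ vertices F, p ∉ arc c (md d x)) :
    SameRegion (lam.pullback F) x (liftBefore d x c) :=
  (sameRegion_of_notMem_arc isFamily_pullback.isUnlinkedFamily
    (liftBefore_mem_ratC.not.2 hc) hx fun _ hp hp' =>
      hfree _ ((mem_vertices_pullback hF).1 hp) (md_mem_arc_of_mem_arc_liftBefore hp')).symm

lemma sameRegion_liftBefore_liftAfter (hF : lam.IsFamily F) (hA : lam.cls (md d u) ∈ F)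
    (huv : IsNext (lam.cls u) u v) (hs : s ∉ ratC) (hs' : s' ∉ ratC)
    (hu : JustAfter (vertices F) (md d u) s) (hv : JustBefore (vertices F) (md d v) s') :
    SameRegion (lam.pullback F) (liftBefore d v s') (liftAfter d u s) :=
  sameRegion_of_isNext isFamily_pullback.isUnlinkedFamily
    ((cls_mem_pullback (RatLam.mem_ratC_of_mem_cls huv.left_mem)).2 hA) huv
    (liftAfter_mem_ratC.not.2 hs)
    (liftBefore_mem_ratC.not.2 hs')
    (fun _ hp => liftAfter_mem_arc (hu _ ((mem_vertices_pullback hF).1 hp)))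
    (fun _ hp => liftBefore_mem_arc (hv _ ((mem_vertices_pullback hF).1 hp)))

/-- The region of `lam.pullback F` of each preimage of `a` contains a preimage of `b`. -/
def LiftsAlong (lam : InvRatLam d) (F : Finset (Set Circle1)) (a b : Circle1) : Prop :=
  ∀ x, md d x = a → ∃ y, md d y = b ∧ SameRegion (lam.pullback F) x y

lemma IsUniform.liftsAlong_hop (h : lam.IsUniform) (hF : lam.IsFamily F) (hA : A ∈ F)
    (huv : IsNext A u v) (hs : s ∉ ratC) (hs' : s' ∉ ratC) (hu : JustAfter (vertices F) u s)
    (hv : JustBefore (vertices F) v s') : lam.LiftsAlong F s' s ∧ lam.LiftsAlong F s s' := by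
  have hAu : lam.cls u = A := hF.cls_eq hA huv.left_mem
  have hAv : lam.cls v = A := hF.cls_eq hA huv.right_mem
  constructor
  · rintro x rfl
    have hmd : md d (liftAfter d x v) = v := md_liftAfter x v
    obtain ⟨w, hw⟩ := exists_isNext_left (lam.finite_cls (liftAfter d x v)) <|
      RatLam.mem_cls_self
        (liftAfter_mem_ratC.2 (hF.isUnlinkedFamily.subset_ratC A hA huv.right_mem))
    rw [RatLam.cls_eq hw.left_mem] at hw
    have hwmd := h.isNext_md hw
    have hAw : lam.cls (md d w) = A := by rw [RatLam.cls_eq hwmd.right_mem, hmd, hAv]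
    rw [hAw, hmd] at hwmd
    obtain rfl := hwmd.left_unique huv
    refine ⟨liftAfter d w s, md_liftAfter w s, ?_⟩
    have key := sameRegion_liftBefore_liftAfter hF (hAw.symm ▸ hA) hw hs hs' hu (hmd.symm ▸ hv)
    rwa [liftBefore_liftAfter] at key
  · rintro x rfl
    have hmd : md d (liftBefore d x u) = u := md_liftBefore x u
    obtain ⟨w, hw⟩ := exists_isNext_right (lam.finite_cls (liftBefore d x u)) <|
      RatLam.mem_cls_self
        (liftBefore_mem_ratC.2 (hF.isUnlinkedFamily.subset_ratC A hA huv.left_mem))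
    have hwmd := h.isNext_md hw
    rw [hmd, hAu] at hwmd
    obtain rfl := hwmd.right_unique huv
    refine ⟨liftBefore d w s', md_liftBefore w s', ?_⟩
    have key := sameRegion_liftBefore_liftAfter hF (by rwa [hmd, hAu]) hw hs hs' (hmd.symm ▸ hu) hv
    rw [liftAfter_liftBefore] at key
    exact key.symm

lemma LiftsAlong.trans {a b : Circle1} (hab : lam.LiftsAlong F a b) (hbc : lam.LiftsAlong F b c) :
    lam.LiftsAlong F a c := fun x hx => by
  obtain ⟨y, hy, hxy⟩ := hab x hx
  obtain ⟨z, hz, hyz⟩ := hbc y hy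
  exact ⟨z, hz, hxy.trans hyz⟩

lemma IsUniform.liftsAlong_of_regionWalk (h : lam.IsUniform) (hF : lam.IsFamily F) {a b : Circle1}
    (hab : RegionWalk F a b) : lam.LiftsAlong F a b ∧ lam.LiftsAlong F b a := by
  induction hab with
  | arc ha hb hfree =>
    constructor
    · rintro x rfl
      exact ⟨_, md_liftAfter x _, sameRegion_liftAfter hF (md_mem_ratC.not.1 ha) hb hfree⟩
    · rintro x rfl
      exact ⟨_, md_liftBefore x _, sameRegion_liftBefore hF (md_mem_ratC.not.1 hb) ha hfree⟩
  | hop hA huv hs hs' hu hv => exact h.liftsAlong_hop hF hA huv hs hs' hu hv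
  | @refl a ha =>
    have hrefl : lam.LiftsAlong F a a := by
      rintro x rfl
      exact ⟨x, rfl, .refl isFamily_pullback.isUnlinkedFamily (md_mem_ratC.not.1 ha)⟩
    exact ⟨hrefl, hrefl⟩
  | symm _ ih => exact ih.symm
  | trans _ _ ih ih' => exact ⟨ih.1.trans ih'.1, ih'.2.trans ih.2⟩

lemma IsUniform.exists_sameRegion_pullback (h : lam.IsUniform) (hF : lam.IsFamily F)
    (hx : x ∉ ratC) (hc : c ∉ ratC) (hxc : SameRegion F (md d x) c) :
    ∃ y, md d y = c ∧ SameRegion (lam.pullback F) x y :=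
  (h.liftsAlong_of_regionWalk hF
    (hxc.regionWalk hF.isUnlinkedFamily (md_mem_ratC.not.2 hx) hc)).1 x rfl

end Regions

end InvRatLam

/-! ### The Riemann–Hurwitz formula for a family -/

section ClassCount

/-- `E` is a partial equivalence relation that is reflexive at the irrational angles. -/
structure IsIrrationalEquiv (E : Circle1 → Circle1 → Prop) : Prop where
  refl : ∀ x, x ∉ ratC → E x x
  symm : ∀ x y, E x y → E y x
  trans : ∀ x y z, E x y → E y z → E x z

/-- The number of `E`-classes that meet the fiber of `md d` over `y`. -/
def classCount (d : ℕ) (E : Circle1 → Circle1 → Prop) (y : Circle1) : ℕ :=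
  open Classical in ((fiber d y).image fun x => {x' | E x x'}).card

variable {d : ℕ} [NeZero d] {E E' : Circle1 → Circle1 → Prop} {x y : Circle1}

lemma IsIrrationalEquiv.setOf_eq_iff (hE : IsIrrationalEquiv E) (hy : y ∉ ratC) :
    {x' | E x x'} = {x' | E y x'} ↔ E x y := by
  constructor
  · intro h
    have : y ∈ {x' | E y x'} := hE.refl y hy
    rwa [← h] at this
  · exact fun h => ext fun z => ⟨hE.trans _ _ _ (hE.symm _ _ h), hE.trans _ _ _ h⟩

lemma IsUnlinkedFamily.isIrrationalEquiv {F : Finset (Set Circle1)} (hF : IsUnlinkedFamily F) :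
    IsIrrationalEquiv (SameRegion F) :=
  ⟨fun _ hx => SameRegion.refl hF hx, fun _ _ h => h.symm, fun _ _ _ h h' => h.trans h'⟩

lemma RatLam.isIrrationalEquiv_unlRel (lam : RatLam) : IsIrrationalEquiv (UnlRel lam.rel) :=
  ⟨fun _ hx => UnlRel.refl hx, fun _ _ h => h.symm, fun _ _ _ h h' => h.trans h'⟩

lemma notMem_ratC_of_mem_fiber (hy : y ∉ ratC) (hx : x ∈ fiber d y) : x ∉ ratC :=
  fun h => hy (mem_fiber.1 hx ▸ md_mem_ratC.2 h)

lemma classCount_le (E : Circle1 → Circle1 → Prop) (y : Circle1) : classCount d E y ≤ d :=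
  Finset.card_image_le.trans (card_fiber y).le

lemma classCount_le_classCount (hE : IsIrrationalEquiv E) (hE' : IsIrrationalEquiv E')
    (hy : y ∉ ratC) (h : ∀ x ∈ fiber d y, ∀ x' ∈ fiber d y, E x x' → E' x x') :
    classCount d E' y ≤ classCount d E y := by
  classical
  have himage : ((fiber d y).image fun x => {x' | E' x x'}) =
      ((fiber d y).image fun x => {x' | E x x'}).image
        fun C => {z | ∃ x' ∈ C, x' ∈ fiber d y ∧ E' x' z} := by
    rw [Finset.image_image]
    refine Finset.image_congr fun x hx => ext fun z => ⟨fun hz => ?_, ?_⟩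
    · exact ⟨x, hE.refl x (notMem_ratC_of_mem_fiber hy hx), hx, hz⟩
    · rintro ⟨x', hxx', hx', hz⟩
      exact hE'.trans _ _ _ (h x hx x' hx' hxx') hz
  rw [classCount, himage]
  exact Finset.card_image_le

lemma classCount_congr (hE : IsIrrationalEquiv E) (hE' : IsIrrationalEquiv E') (hy : y ∉ ratC)
    (h : ∀ x ∈ fiber d y, ∀ x' ∈ fiber d y, E x x' ↔ E' x x') :
    classCount d E y = classCount d E' y :=
  le_antisymm (classCount_le_classCount hE' hE hy fun x hx x' hx' => (h x hx x' hx').2)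
    (classCount_le_classCount hE hE' hy fun x hx x' hx' => (h x hx x' hx').1)

lemma classCount_eq_iff (hE : IsIrrationalEquiv E) (hy : y ∉ ratC) :
    classCount d E y = d ↔ ∀ x ∈ fiber d y, ∀ x' ∈ fiber d y, E x x' → x = x' := by
  classical
  nth_rewrite 2 [← card_fiber (d := d) y]
  rw [classCount, Finset.card_image_iff]
  refine forall₂_congr fun x _ => forall₂_congr fun x' hx' => ?_
  exact imp_congr_left (hE.setOf_eq_iff (notMem_ratC_of_mem_fiber hy hx'))

end ClassCount

lemma classDeg_pos {d n : ℕ} {C : Set Circle1} (h : classDeg d C n) (hfin : C.Finite)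
    (hC : C.Nonempty) : 0 < n := by
  obtain ⟨x, hx⟩ := hC
  rw [← h (md d x) (mem_image_of_mem _ hx)]
  exact (ncard_pos (hfin.subset fun _ => And.left)).2 ⟨x, hx, rfl⟩

lemma classDeg.ncard_eq {d n : ℕ} {C : Set Circle1} (h : classDeg d C n) (hC : C.Finite) :
    C.ncard = n * (md d '' C).ncard := by
  classical
  lift C to Finset Circle1 using hC
  have hfiber : ∀ y ∈ C.image (md d), {x ∈ C | md d x = y}.card = n := fun y hy => by
    rw [← h y (by rwa [← Finset.coe_image]), ← ncard_coe_finset, Finset.coe_filter]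
    rfl
  rw [← Finset.coe_image, ncard_coe_finset, ncard_coe_finset, mul_comm,
    Finset.card_eq_sum_card_image (md d) C, Finset.sum_const_nat hfiber]

namespace InvRatLam

/-- `δ` assigns to each class the degree of `md d` on it. -/
def IsDegreeFun {d : ℕ} (lam : InvRatLam d) (δ : Set Circle1 → ℕ) : Prop :=
  ∀ x ∈ ratC, classDeg d (lam.cls x) (δ (lam.cls x))

variable {d : ℕ} {lam : InvRatLam d} {F F' : Finset (Set Circle1)} {X Y : Finset Circle1}
  {A B : Set Circle1} {δ : Set Circle1 → ℕ} {y y' : Circle1}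

lemma IsDegreeFun.isUniform (hδ : lam.IsDegreeFun δ) : lam.IsUniform := fun x hx => ⟨_, hδ x hx⟩

lemma IsDegreeFun.classDeg (hδ : lam.IsDegreeFun δ) (hF : lam.IsFamily F) (hA : A ∈ F) :
    classDeg d A (δ A) := by
  obtain ⟨x, hx, rfl⟩ := hF A hA
  exact hδ x hx

variable [NeZero d]

lemma isIrrationalEquiv_pullback :
    IsIrrationalEquiv (SameRegion (lam.pullback F)) :=
  isFamily_pullback.isUnlinkedFamily.isIrrationalEquiv

lemma IsUniform.classCount_eq_of_sameRegion (h : lam.IsUniform) (hF : lam.IsFamily F)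
    (hy : y ∉ ratC) (hy' : y' ∉ ratC) (hyy' : SameRegion F y y') :
    classCount d (SameRegion (lam.pullback F)) y =
      classCount d (SameRegion (lam.pullback F)) y' := by
  classical
  have hle : ∀ {y y'}, y ∉ ratC → y' ∉ ratC → SameRegion F y y' →
      classCount d (SameRegion (lam.pullback F)) y ≤
        classCount d (SameRegion (lam.pullback F)) y' := by
    intro y y' hy hy' hyy'
    refine Finset.card_le_card fun C hC => ?_
    obtain ⟨x, hx, rfl⟩ := Finset.mem_image.1 hC
    obtain ⟨x', hx', hxx'⟩ := h.exists_sameRegion_pullback hF (notMem_ratC_of_mem_fiber hy hx) hy'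
      ((mem_fiber.1 hx).symm ▸ hyy')
    rw [← mem_fiber] at hx'
    exact Finset.mem_image.2 ⟨x', hx', ((isIrrationalEquiv_pullback.setOf_eq_iff
      (notMem_ratC_of_mem_fiber hy' hx')).2 hxx').symm⟩
  exact le_antisymm (hle hy hy' hyy') (hle hy' hy hyy'.symm)

open Classical in
lemma IsUniform.classCount_eq_card_filter (h : lam.IsUniform) (hF : lam.IsFamily F)
    (hX : IsTransversal (lam.pullback F) X) (hy : y ∉ ratC) :
    classCount d (SameRegion (lam.pullback F)) y = {x ∈ X | SameRegion F (md d x) y}.card := by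
  have hE := isIrrationalEquiv_pullback (lam := lam) (F := F)
  have himage : ((fiber d y).image fun x => {x' | SameRegion (lam.pullback F) x x'}) =
      {x ∈ X | SameRegion F (md d x) y}.image fun x => {x' | SameRegion (lam.pullback F) x x'} := by
    ext C
    rw [Finset.mem_image, Finset.mem_image]
    constructor
    · rintro ⟨x, hx, rfl⟩
      have hxr := notMem_ratC_of_mem_fiber hy hx
      obtain ⟨x', hx', hxx'⟩ := hX.exists_sameRegion x hxr
      refine ⟨x', Finset.mem_filter.2 ⟨hx', ?_⟩, (hE.setOf_eq_iff hxr).2 hxx'.symm⟩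
      exact mem_fiber.1 hx ▸ h.sameRegion_md hF (hX.irrational x' hx') hxr hxx'.symm
    · rintro ⟨x, hx, rfl⟩
      obtain ⟨hxX, hxy⟩ := Finset.mem_filter.1 hx
      obtain ⟨x', hx', hxx'⟩ := h.exists_sameRegion_pullback hF (hX.irrational x hxX) hy hxy
      rw [← mem_fiber] at hx'
      exact ⟨x', hx', ((hE.setOf_eq_iff (notMem_ratC_of_mem_fiber hy hx')).2 hxx').symm⟩
  rw [classCount, himage, Finset.card_image_of_injOn]
  intro x hx x' hx' hxx'
  have hx'X := (Finset.mem_filter.1 hx').1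
  exact hX.eq_of_sameRegion x (Finset.mem_filter.1 hx).1 x' hx'X
    ((hE.setOf_eq_iff (hX.irrational x' hx'X)).1 hxx')

lemma IsUniform.sum_classCount (h : lam.IsUniform) (hF : lam.IsFamily F) (hY : IsTransversal F Y) :
    ∑ y ∈ Y, classCount d (SameRegion (lam.pullback F)) y =
      1 + ∑ A ∈ lam.pullback F, (A.ncard - 1) := by
  classical
  have hpull : IsUnlinkedFamily (lam.pullback F) := isFamily_pullback.isUnlinkedFamily
  obtain ⟨X, -, hX⟩ := hpull.exists_isTransversal_superset (Y := ∅) (by simp) (by simp)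
  rw [← hX.card_eq hpull, Finset.sum_congr rfl fun y hy =>
    h.classCount_eq_card_filter hF hX (hY.irrational y hy), ← Finset.card_biUnion]
  · congr 1
    ext x
    simp only [Finset.mem_biUnion, Finset.mem_filter]
    refine ⟨fun ⟨_, _, hx, _⟩ => hx, fun hx => ?_⟩
    obtain ⟨y, hy, hxy⟩ := hY.exists_sameRegion (md d x) (md_mem_ratC.not.2 (hX.irrational x hx))
    exact ⟨y, hy, hx, hxy⟩
  · refine fun y hy z hz hne => Finset.disjoint_left.2 fun x hxy hxz => hne ?_
    exact hY.eq_of_sameRegion y hy z hz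
      ((Finset.mem_filter.1 hxy).2.symm.trans (Finset.mem_filter.1 hxz).2)

open Classical in
lemma IsDegreeFun.sum_over (hδ : lam.IsDegreeFun δ) (hF : lam.IsFamily F)
    (hB : B ∈ F) : ∑ A ∈ lam.pullback F with md d '' A = B, δ A = d := by
  obtain ⟨c, hc, rfl⟩ := hF B hB
  have hmaps : ∀ t ∈ fiber d c,
      lam.cls t ∈ {A ∈ lam.pullback F | md d '' A = lam.cls c} := fun t ht => by
    have htr := mem_ratC_of_mem_fiber hc ht
    rw [mem_fiber] at ht
    exact Finset.mem_filter.2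
      ⟨(cls_mem_pullback htr).2 (ht.symm ▸ hB), by rw [image_md_cls htr, ht]⟩
  conv_rhs => rw [← card_fiber (d := d) c, Finset.card_eq_sum_card_fiberwise hmaps]
  refine Finset.sum_congr rfl fun A hA => ?_
  obtain ⟨hA, himage⟩ := Finset.mem_filter.1 hA
  rw [← hδ.classDeg isFamily_pullback hA c (himage ▸ RatLam.mem_cls_self hc),
    ← Set.ncard_coe_finset]
  congr 1
  ext t
  simp only [Finset.coe_filter, mem_ofPred_eq, and_comm, mem_fiber]
  refine and_congr_right fun ht => ⟨isFamily_pullback.cls_eq hA, ?_⟩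
  rintro rfl
  exact RatLam.mem_cls_self (md_mem_ratC.1 (ht ▸ hc))

lemma image_md_mem_of_mem_pullback (hA : A ∈ lam.pullback F) : md d '' A ∈ F := by
  obtain ⟨x, ⟨hx, hF⟩, rfl⟩ := mem_pullback.1 hA
  rwa [image_md_cls hx]

lemma IsDegreeFun.sum_ncard_sub_one (hδ : lam.IsDegreeFun δ) (hF : lam.IsFamily F) :
    ∑ A ∈ lam.pullback F, (A.ncard - 1) =
      ∑ A ∈ lam.pullback F, (δ A - 1) + d * ∑ B ∈ F, (B.ncard - 1) := by
  classical
  have hpull : IsUnlinkedFamily (lam.pullback F) := isFamily_pullback.isUnlinkedFamily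
  have hncard : ∀ A ∈ lam.pullback F,
      A.ncard - 1 = (δ A - 1) + δ A * ((md d '' A).ncard - 1) := fun A hA => by
    have hfin := hpull.finite A hA
    have hA' := hδ.classDeg isFamily_pullback hA
    have hδpos := classDeg_pos hA' hfin (hpull.nonempty A hA)
    have himage := (ncard_pos (hfin.image (md d))).2 ((hpull.nonempty A hA).image _)
    rw [hA'.ncard_eq hfin, Nat.mul_sub_one]
    have := Nat.le_mul_of_pos_right (δ A) himage
    omega
  have hfiberwise : ∑ A ∈ lam.pullback F, δ A * ((md d '' A).ncard - 1) =
      d * ∑ B ∈ F, (B.ncard - 1) := by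
    rw [Finset.mul_sum, ← Finset.sum_fiberwise_of_maps_to (g := (md d '' ·))
      fun A hA => image_md_mem_of_mem_pullback hA]
    refine Finset.sum_congr rfl fun B hB => ?_
    rw [Finset.sum_congr rfl fun A hA => by rw [(Finset.mem_filter.1 hA).2], ← Finset.sum_mul,
      hδ.sum_over hF hB]
  rw [Finset.sum_congr rfl hncard, Finset.sum_add_distrib, hfiberwise]

theorem IsDegreeFun.riemann_hurwitz (hδ : lam.IsDegreeFun δ) (hF : lam.IsFamily F)
    (hY : IsTransversal F Y) :
    d = 1 + ∑ A ∈ lam.pullback F, (δ A - 1) +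
      ∑ y ∈ Y, (d - classCount d (SameRegion (lam.pullback F)) y) := by
  have hsum : ∑ y ∈ Y, (d - classCount d (SameRegion (lam.pullback F)) y) +
      (1 + ∑ A ∈ lam.pullback F, (A.ncard - 1)) = (1 + ∑ A ∈ F, (A.ncard - 1)) * d := by
    rw [← hδ.isUniform.sum_classCount hF hY, ← Finset.sum_add_distrib,
      Finset.sum_congr rfl fun y _ => Nat.sub_add_cancel (classCount_le _ y), Finset.sum_const,
      hY.card_eq hF.isUnlinkedFamily, smul_eq_mul]
  rw [hδ.sum_ncard_sub_one hF] at hsum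
  linarith

lemma IsDegreeFun.sum_sub_classCount_le (hδ : lam.IsDegreeFun δ) (hF : lam.IsFamily F)
    (hY : ∀ y ∈ Y, y ∉ ratC) (hsep : ∀ y ∈ Y, ∀ z ∈ Y, SameRegion F y z → y = z) :
    1 + ∑ A ∈ lam.pullback F, (δ A - 1) +
      ∑ y ∈ Y, (d - classCount d (SameRegion (lam.pullback F)) y) ≤ d := by
  obtain ⟨Y', hYY', hY'⟩ := hF.isUnlinkedFamily.exists_isTransversal_superset hY hsep
  conv_rhs => rw [hδ.riemann_hurwitz hF hY']
  exact Nat.add_le_add_left (Finset.sum_le_sum_of_subset hYY') _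

end InvRatLam

/-! ### Unlinked classes as limits of regions -/

lemma UnlRel.sameRegion {lam : RatLam} {F : Finset (Set Circle1)} {x y : Circle1}
    (h : UnlRel lam.rel x y) (hF : lam.IsFamily F) : SameRegion F x y := fun A hA => by
  obtain ⟨z, hz, rfl⟩ := hF A hA
  exact h.sameGap hz

lemma RatLam.isFamily_singleton {lam : RatLam} {z : Circle1} (hz : z ∈ ratC) :
    lam.IsFamily {lam.cls z} :=
  fun _ hA => ⟨z, hz, (Finset.mem_singleton.1 hA).symm⟩

open Classical in
lemma RatLam.IsFamily.union {lam : RatLam} {F F' : Finset (Set Circle1)} (hF : lam.IsFamily F)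
    (hF' : lam.IsFamily F') : lam.IsFamily (F ∪ F') :=
  fun A hA => (Finset.mem_union.1 hA).elim (hF A) (hF' A)

namespace InvRatLam

variable {d : ℕ} [NeZero d] {lam : InvRatLam d} {F F' : Finset (Set Circle1)} {x x' y : Circle1}

lemma pullback_mono (h : F ⊆ F') : lam.pullback F ⊆ lam.pullback F' := fun A hA => by
  obtain ⟨x, ⟨hx, hF⟩, rfl⟩ := mem_pullback.1 hA
  exact mem_pullback.2 ⟨x, ⟨hx, h hF⟩, rfl⟩

lemma classCount_pullback_mono (h : F ⊆ F') (hy : y ∉ ratC) :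
    classCount d (SameRegion (lam.pullback F)) y ≤ classCount d (SameRegion (lam.pullback F')) y :=
  classCount_le_classCount isIrrationalEquiv_pullback isIrrationalEquiv_pullback hy
    fun _ _ _ _ hxx' => hxx'.mono (pullback_mono h)

lemma classCount_pullback_eq_of_subset (h : F ⊆ F') (hy : y ∉ ratC)
    (hF : classCount d (SameRegion (lam.pullback F)) y = d) :
    classCount d (SameRegion (lam.pullback F')) y = d :=
  le_antisymm (classCount_le _ y) (hF.ge.trans (classCount_pullback_mono h hy))

lemma IsUniform.unlRel_md (h : lam.IsUniform) (hxx' : UnlRel lam.rel x x') :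
    UnlRel lam.rel (md d x) (md d x') := by
  refine RatLam.unlRel_iff.2 fun z hz => ?_
  exact h.sameRegion_md (RatLam.isFamily_singleton hz) hxx'.left hxx'.right
    (hxx'.sameRegion isFamily_pullback) _ (Finset.mem_singleton_self _)

lemma exists_family_separating (lam : InvRatLam d) (P : Finset Circle1) :
    ∃ F, lam.IsFamily F ∧ (∀ x ∈ P, ∀ x' ∈ P, SameRegion F x x' → UnlRel lam.rel x x') ∧
      ∀ x ∈ P, ∀ x' ∈ P, SameRegion (lam.pullback F) x x' → UnlRel lam.rel x x' := by
  classical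
  have hsep : ∀ p : Circle1 × Circle1, ∃ z ∈ ratC,
      SameGap (lam.cls z) p.1 p.2 → UnlRel lam.rel p.1 p.2 := fun ⟨x, x'⟩ => by
    by_contra! hc
    exact (hc 0 ⟨0, by simp⟩).2 (RatLam.unlRel_iff.2 fun z hz => (hc z hz).1)
  choose f hf hsep using hsep
  have hmem : ∀ {x x'}, x ∈ P → x' ∈ P → (x, x') ∈ P ×ˢ P := fun hx hx' =>
    Finset.mem_product.2 ⟨hx, hx'⟩
  refine ⟨(P ×ˢ P).image (fun p => lam.cls (f p)) ∪ (P ×ˢ P).image (fun p => lam.cls (md d (f p))),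
    ?_, fun x hx x' hx' h => hsep (x, x') (h _ ?_),
    fun x hx x' hx' h => hsep (x, x') (h _ ?_)⟩
  · refine RatLam.IsFamily.union (fun A hA => ?_) fun A hA => ?_ <;>
      obtain ⟨p, -, rfl⟩ := Finset.mem_image.1 hA
    exacts [⟨_, hf p, rfl⟩, ⟨_, md_mem_ratC.2 (hf p), rfl⟩]
  · exact Finset.mem_union_left _ (Finset.mem_image.2 ⟨_, hmem hx hx', rfl⟩)
  · exact (cls_mem_pullback (hf _)).2
      (Finset.mem_union_right _ (Finset.mem_image.2 ⟨_, hmem hx hx', rfl⟩))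

lemma IsUniform.exists_unlRel_of_unlRel_md (h : lam.IsUniform) (hxy : UnlRel lam.rel (md d x) y) :
    ∃ x', md d x' = y ∧ UnlRel lam.rel x x' := by
  classical
  have hx : x ∉ ratC := md_mem_ratC.not.1 hxy.left
  obtain ⟨F, hF, -, hsep⟩ := lam.exists_family_separating (insert x (fiber d y))
  obtain ⟨x', hx', hxx'⟩ := h.exists_sameRegion_pullback hF hx hxy.right (hxy.sameRegion hF)
  exact ⟨x', hx', hsep x (Finset.mem_insert_self _ _) x'
    (Finset.mem_insert_of_mem (mem_fiber.2 hx')) hxx'⟩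

end InvRatLam

/-! ### Leaves inside an arc -/

lemma exists_not_accPt_of_countable {α : Type*} [MetricSpace α] [CompleteSpace α] {K : Set α}
    (hK : IsClosed K) (hne : K.Nonempty) (hcount : K.Countable) : ∃ s ∈ K, ¬ AccPt s (𝓟 K) := by
  by_contra! hacc
  obtain ⟨f, hf, -, hinj⟩ := Perfect.exists_nat_bool_injection ⟨hK, hacc⟩ hne
  have : Countable (range f) := hcount.mono hf
  have : Countable (ℕ → Bool) := hinj.codRestrict (fun c => mem_range_self c) |>.countable
  have hle := Cardinal.mk_le_aleph0 (α := ℕ → Bool)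
  rw [← Cardinal.power_def, Cardinal.mk_bool, Cardinal.mk_nat] at hle
  exact hle.not_gt (Cardinal.cantor _)

section Isolated

variable {α : Type*} [LinearOrder α] [TopologicalSpace α] [OrderTopology α] {K : Set α} {s t : α}

lemma exists_next_of_not_accPt (hK : IsCompact K) (hs : ¬ AccPt s (𝓟 K)) (ht : t ∈ K)
    (hst : s < t) : ∃ s' ∈ K, s < s' ∧ Disjoint (Ioo s s') K := by
  rw [accPt_iff_frequently, not_frequently] at hs
  obtain ⟨U, hU, hUo, hsU⟩ := eventually_nhds_iff.1 hs
  have hcompact : IsCompact (K ∩ Ioi s) := by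
    convert (hK.diff hUo).inter_right (isClosed_Ici (a := s)) using 1
    ext y
    exact ⟨fun hy => ⟨⟨hy.1, fun hyU => hU y hyU ⟨hy.2.ne', hy.1⟩⟩, hy.2.le⟩,
      fun hy => ⟨hy.1.1, hy.2.lt_of_ne fun h => hy.1.2 (h ▸ hsU)⟩⟩
  obtain ⟨s', hs', hleast⟩ := hcompact.exists_isLeast ⟨t, ht, hst⟩
  exact ⟨s', hs'.1, hs'.2, Set.disjoint_left.2 fun y hy hyK => hy.2.not_ge (hleast ⟨hyK, hy.1⟩)⟩

lemma exists_prev_of_not_accPt (hK : IsCompact K) (hs : ¬ AccPt s (𝓟 K)) (ht : t ∈ K)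
    (hts : t < s) : ∃ s' ∈ K, s' < s ∧ Disjoint (Ioo s' s) K := by
  obtain ⟨s', hs', hlt, hdisj⟩ := exists_next_of_not_accPt (α := αᵒᵈ) (s := .toDual s) hK hs ht hts
  exact ⟨s', hs', hlt,
    Set.disjoint_left.2 fun _ hy => Set.disjoint_left.1 hdisj ⟨hy.2, hy.1⟩⟩

end Isolated

namespace RatLam

/-- The distances from `u` of the points of `arc u v` lying strictly under a leaf of the lamination
whose far end is in `arc u v`. -/
def coveredDist (lam : RatLam) (u v : Circle1) : Set ℝ :=
  {s | ∃ p q, lam.rel p q ∧ ccwDist u p < s ∧ s < ccwDist u q ∧ q ∈ arc u v}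

/-- The complement of `RatLam.coveredDist` in the closed arc from `u` to `v`, both ends included. -/
def exposedDist (lam : RatLam) (u v : Circle1) : Set ℝ :=
  Icc 0 (ccwDist u v) \ lam.coveredDist u v

/-- The chord from `u` to `v` is a limit of leaves with both ends in `arc u v`. -/
def IsInnerLimit (lam : RatLam) (u v : Circle1) : Prop :=
  ∀ r₁ r₂ : ℝ, 0 < r₁ → r₂ < ccwDist u v →
    ∃ p q, lam.rel p q ∧ ccwDist u p < r₁ ∧ r₂ < ccwDist u q ∧ q ∈ arc u v

variable {lam : RatLam} {u v p q p' q' : Circle1} {s s₁ s₂ r₁ r₂ : ℝ}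

lemma rel_of_crossing (h : lam.rel p q) (h' : lam.rel p' q') (hpp' : p ∈ arc u p')
    (hp'q : p' ∈ arc u q) (hqq' : q ∈ arc u q') : lam.rel p p' := by
  by_contra hn
  have hp_arc : p' ∈ arc u q' := arc_subset_of_mem_right hqq' hp'q
  have hne : p ≠ q' :=
    ne_of_mem_of_not_mem (arc_subset_of_mem_right hp_arc hpp') (notMem_arc_right u q')
  exact not_sameGap_of_mem_arc h (mem_cls_self (lam.rel_rat _ _ h).1)
    (mem_arc_right_of_mem_arc hqq' hp'q)
    (mem_arc_rotate (mem_arc_right_of_mem_arc hp_arc hpp') hne) (sameGap_of_rel hn h')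

lemma isOpen_coveredDist (lam : RatLam) (u v : Circle1) : IsOpen (lam.coveredDist u v) := by
  rw [isOpen_iff_mem_nhds]
  rintro s ⟨p, q, hpq, hps, hsq, hq⟩
  filter_upwards [Ioo_mem_nhds hps hsq] with t ht
  exact ⟨p, q, hpq, ht.1, ht.2, hq⟩

/-- Two leaves covering a common point either are nested or cross, in which case they belong to one
class; either way a single leaf covers what they cover together. -/
lemma exists_rel_covering_both {t₁ t₂ t₃ : ℝ}
    (h₁₂ : ∃ p q, lam.rel p q ∧ ccwDist u p < min t₁ t₂ ∧ max t₁ t₂ < ccwDist u q ∧ q ∈ arc u v)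
    (h₂₃ : ∃ p q, lam.rel p q ∧ ccwDist u p < min t₂ t₃ ∧ max t₂ t₃ < ccwDist u q ∧ q ∈ arc u v) :
    ∃ p q, lam.rel p q ∧ ccwDist u p < min t₁ t₃ ∧ max t₁ t₃ < ccwDist u q ∧ q ∈ arc u v := by
  obtain ⟨p, q, hpq, hp, hq, hqv⟩ := h₁₂
  obtain ⟨p', q', hpq', hp', hq', hqv'⟩ := h₂₃
  simp only [lt_min_iff, max_lt_iff] at hp hq hp' hq' ⊢
  rcases lt_or_ge (ccwDist u p) (ccwDist u p') with hpp' | hpp' <;>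
    rcases lt_or_ge (ccwDist u q) (ccwDist u q') with hqq' | hqq'
  · have hrel := rel_of_crossing hpq hpq' hpp' (hp'.1.trans hq.2) hqq'
    exact ⟨p, q', lam.trans _ _ _ hrel hpq', by constructor <;> linarith,
      by constructor <;> linarith, hqv'⟩
  · exact ⟨p, q, hpq, by constructor <;> linarith, by constructor <;> linarith, hqv⟩
  · exact ⟨p', q', hpq', by constructor <;> linarith, by constructor <;> linarith, hqv'⟩
  · have hrel : lam.rel p' p := by
      rcases hpp'.eq_or_lt with heq | hlt
      · exact ccwDist_right_injective u heq ▸ lam.refl _ (lam.rel_rat _ _ hpq').1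
      rcases hqq'.eq_or_lt with heq | hlt'
      · exact lam.trans _ _ _ hpq' (lam.symm _ _ (ccwDist_right_injective u heq ▸ hpq))
      · exact rel_of_crossing hpq' hpq hlt (hp.2.trans hq'.1) hlt'
    exact ⟨p', q, lam.trans _ _ _ hrel hpq, by constructor <;> linarith,
      by constructor <;> linarith, hqv⟩

lemma exists_rel_covering_Icc (hs : s₁ ≤ s₂) (h : Icc s₁ s₂ ⊆ lam.coveredDist u v) :
    ∃ p q, lam.rel p q ∧ ccwDist u p < s₁ ∧ s₂ < ccwDist u q ∧ q ∈ arc u v := by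
  have hjoint := isPreconnected_Icc.induction₂
    (fun t₁ t₂ => ∃ p q, lam.rel p q ∧ ccwDist u p < min t₁ t₂ ∧ max t₁ t₂ < ccwDist u q ∧
      q ∈ arc u v) (fun t ht => ?_) (fun _ _ _ _ _ _ => exists_rel_covering_both)
    (fun t₁ t₂ _ _ => by rw [min_comm, max_comm]; exact id)
    (left_mem_Icc.2 hs) (right_mem_Icc.2 hs)
  · simpa only [min_eq_left hs, max_eq_right hs] using hjoint
  · obtain ⟨p, q, hpq, hp, hq, hqv⟩ := h ht
    filter_upwards [mem_nhdsWithin_of_mem_nhds (Ioo_mem_nhds hp hq)] with t' ht'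
    exact ⟨p, q, hpq, lt_min hp ht'.1, max_lt hq ht'.2, hqv⟩

lemma exists_rel_near_ends (h₁ : s₁ ∉ lam.coveredDist u v) (h₂ : s₂ ∉ lam.coveredDist u v)
    (hlt : s₁ < s₂) (hsub : Ioo s₁ s₂ ⊆ lam.coveredDist u v) (hr₁ : s₁ < r₁) (hr₂ : r₂ < s₂) :
    ∃ p q, lam.rel p q ∧ ccwDist u p ∈ Ico s₁ r₁ ∧ ccwDist u q ∈ Ioc r₂ s₂ ∧ q ∈ arc u v := by
  obtain ⟨t₁, hst₁, ht₁⟩ := exists_between (lt_min hr₁ hlt)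
  obtain ⟨t₂, ht₂, hts₂⟩ := exists_between (max_lt hr₂ (ht₁.trans_le (min_le_right _ _)))
  simp only [lt_min_iff, max_lt_iff] at ht₁ ht₂
  obtain ⟨p, q, hpq, hp, hq, hqv⟩ := exists_rel_covering_Icc (u := u) ht₂.2.le
    fun t ht => hsub ⟨hst₁.trans_le ht.1, ht.2.trans_lt hts₂⟩
  refine ⟨p, q, hpq, ⟨?_, hp.trans ht₁.1⟩, ⟨ht₂.1.trans hq, ?_⟩, hqv⟩
  · by_contra! hlt'
    exact h₁ ⟨p, q, hpq, hlt', by linarith, hqv⟩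
  · by_contra! hlt'
    exact h₂ ⟨p, q, hpq, by linarith, hlt', hqv⟩

lemma closureRel_of_Ioo_subset (h₁ : s₁ ∉ lam.coveredDist u v) (h₂ : s₂ ∉ lam.coveredDist u v)
    (hlt : s₁ < s₂) (hsub : Ioo s₁ s₂ ⊆ lam.coveredDist u v) :
    lam.closureRel (u + (s₁ : Circle1)) (u + (s₂ : Circle1)) := by
  have hfreq : ∃ᶠ r in 𝓝[≥] s₁ ×ˢ 𝓝[≤] s₂, lam.rel (u + (r.1 : Circle1)) (u + (r.2 : Circle1)) := by
    refine ((nhdsGE_basis s₁).prod (nhdsLE_basis s₂)).frequently_iff.2 fun r hr => ?_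
    obtain ⟨p, q, hpq, hp, hq, -⟩ := exists_rel_near_ends h₁ h₂ hlt hsub hr.1 hr.2
    refine ⟨(ccwDist u p, ccwDist u q), ⟨hp, hq⟩, ?_⟩
    simpa only [add_ccwDist] using hpq
  rw [closureRel_iff_frequently]
  exact ((continuous_add_coe u).tendsto s₁ |>.prodMap
    ((continuous_add_coe u).tendsto s₂)).frequently
    (hfreq.filter_mono (prod_mono nhdsWithin_le_nhds nhdsWithin_le_nhds))

lemma isCompact_exposedDist (lam : RatLam) (u v : Circle1) : IsCompact (lam.exposedDist u v) :=
  isCompact_Icc.diff (lam.isOpen_coveredDist u v)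

lemma zero_mem_exposedDist (lam : RatLam) (u v : Circle1) : 0 ∈ lam.exposedDist u v :=
  ⟨⟨le_rfl, (ccwDist_pos u v).le⟩, fun ⟨p, _, _, hp, _⟩ => (ccwDist_pos u p).not_gt hp⟩

lemma ccwDist_mem_exposedDist (lam : RatLam) (u v : Circle1) :
    ccwDist u v ∈ lam.exposedDist u v :=
  ⟨⟨(ccwDist_pos u v).le, le_rfl⟩, fun ⟨_, _, _, _, hlt, hq⟩ => lt_asymm hlt hq⟩

lemma Ioo_subset_coveredDist (h₁ : s₁ ∈ lam.exposedDist u v) (h₂ : s₂ ∈ lam.exposedDist u v)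
    (hdisj : Disjoint (Ioo s₁ s₂) (lam.exposedDist u v)) : Ioo s₁ s₂ ⊆ lam.coveredDist u v :=
  fun _ ht => by_contra fun hn => Set.disjoint_left.1 hdisj ht
    ⟨⟨h₁.1.1.trans ht.1.le, ht.2.le.trans h₂.1.2⟩, hn⟩

lemma add_coe_mem_ratC_of_mem_exposedDist
    (hcov : ∀ t ∈ arc u v, t ∉ ratC → ccwDist u t ∈ lam.coveredDist u v)
    (hs : s ∈ lam.exposedDist u v) (h0 : 0 < s) (hv : s < ccwDist u v) :
    u + (s : Circle1) ∈ ratC := by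
  by_contra hr
  have hdist : ccwDist u (u + (s : Circle1)) = s :=
    ccwDist_add_coe h0 (hv.le.trans (ccwDist_le_one u v))
  exact hs.2 (hdist ▸ hcov _ (mem_arc.2 (hdist.trans_lt hv)) hr)

lemma countable_ratC : ratC.Countable := by
  refine (countable_range fun q : ℚ => ((q : ℝ) : Circle1)).mono ?_
  rintro _ ⟨q, rfl⟩
  exact mem_range_self q

lemma countable_exposedDist
    (hcov : ∀ t ∈ arc u v, t ∉ ratC → ccwDist u t ∈ lam.coveredDist u v) :
    (lam.exposedDist u v).Countable := by
  refine ((countable_singleton (ccwDist u v)).insert 0 |>.union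
    (countable_ratC.image (ccwDist u))).mono fun s hs => ?_
  rcases hs.1.1.eq_or_lt with rfl | h0
  · exact .inl (.inl rfl)
  rcases hs.1.2.eq_or_lt with rfl | hv
  · exact .inl (.inr rfl)
  · exact .inr ⟨_, add_coe_mem_ratC_of_mem_exposedDist hcov hs h0 hv,
      ccwDist_add_coe h0 (hv.le.trans (ccwDist_le_one u v))⟩

end RatLam

namespace InvRatLam

variable {d : ℕ} [d.AtLeastTwo] {lam : InvRatLam d} {u v : Circle1} {s₁ s₂ : ℝ}

lemma rel_of_closureRel {x y : Circle1} (hx : x ∈ ratC) (h : lam.closureRel x y) : lam.rel x y :=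
  lam.closed' x hx y ((mem_ratC_iff_of_closureRel h).1 hx) h

lemma rel_of_consecutive_exposedDist
    (hcov : ∀ t ∈ arc u v, t ∉ ratC → ccwDist u t ∈ lam.coveredDist u v)
    (hu : ∀ p, lam.rel u p → p ∉ arc u v) (hv : ∀ p, lam.rel v p → p ∉ arc u v)
    (hlim : ¬ lam.IsInnerLimit u v) (h₁ : s₁ ∈ lam.exposedDist u v)
    (h₂ : s₂ ∈ lam.exposedDist u v) (hlt : s₁ < s₂)
    (hdisj : Disjoint (Ioo s₁ s₂) (lam.exposedDist u v)) :
    0 < s₁ ∧ s₂ < ccwDist u v ∧ lam.rel (u + (s₁ : Circle1)) (u + (s₂ : Circle1)) := by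
  have hsub := RatLam.Ioo_subset_coveredDist h₁ h₂ hdisj
  have hcl := RatLam.closureRel_of_Ioo_subset h₁.2 h₂.2 hlt hsub
  have hmem : ∀ s, 0 < s → s < ccwDist u v → u + (s : Circle1) ∈ arc u v := fun s h0 hs =>
    mem_arc.2 ((ccwDist_add_coe h0 (hs.le.trans (ccwDist_le_one u v))).trans_lt hs)
  rcases h₁.1.1.eq_or_lt with rfl | h0 <;> rcases h₂.1.2.eq_or_lt with rfl | hl
  · refine absurd (fun r₁ r₂ hr₁ hr₂ => ?_) hlim
    obtain ⟨p, q, hpq, hp, hq, hqv⟩ := RatLam.exists_rel_near_ends h₁.2 h₂.2 hlt hsub hr₁ hr₂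
    exact ⟨p, q, hpq, hp.2, hq.1, hqv⟩
  · rw [AddCircle.coe_zero, add_zero] at hcl
    have hrat := RatLam.add_coe_mem_ratC_of_mem_exposedDist hcov h₂ hlt hl
    exact absurd (hmem _ hlt hl)
      (hu _ (rel_of_closureRel ((mem_ratC_iff_of_closureRel hcl).2 hrat) hcl))
  · rw [add_ccwDist] at hcl
    have hrat := RatLam.add_coe_mem_ratC_of_mem_exposedDist hcov h₁ h0 hlt
    exact absurd (hmem _ h0 hlt) (hv _ (lam.symm _ _ (rel_of_closureRel hrat hcl)))
  · exact ⟨h0, hl, rel_of_closureRel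
      (RatLam.add_coe_mem_ratC_of_mem_exposedDist hcov h₁ h0 (hlt.trans hl)) hcl⟩

/-- Otherwise the countable compact set of exposed distances has an isolated point, which the leaf
joining its two neighbours covers. -/
lemma isInnerLimit_of_covered
    (hcov : ∀ t ∈ arc u v, t ∉ ratC → ccwDist u t ∈ lam.coveredDist u v)
    (hu : ∀ p, lam.rel u p → p ∉ arc u v) (hv : ∀ p, lam.rel v p → p ∉ arc u v) :
    lam.IsInnerLimit u v := by
  by_contra hlim
  have hK := lam.isCompact_exposedDist u v
  have h0 := lam.zero_mem_exposedDist u v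
  obtain ⟨s, hs, hiso⟩ := exists_not_accPt_of_countable hK.isClosed ⟨0, h0⟩
    (RatLam.countable_exposedDist hcov)
  have hprev : 0 < s → ∃ s₁, 0 < s₁ ∧ s₁ < s ∧ s < ccwDist u v ∧
      lam.rel (u + (s₁ : Circle1)) (u + (s : Circle1)) := fun hpos => by
    obtain ⟨s₁, hs₁, hlt, hdisj⟩ := exists_prev_of_not_accPt hK hiso h0 hpos
    obtain ⟨h0, hl, hrel⟩ := rel_of_consecutive_exposedDist hcov hu hv hlim hs₁ hs hlt hdisj
    exact ⟨s₁, h0, hlt, hl, hrel⟩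
  have hsl : s < ccwDist u v := hs.1.2.lt_of_ne fun heq => by
    obtain ⟨s₁, -, -, hl, -⟩ := hprev (heq ▸ ccwDist_pos u v)
    exact hl.ne heq
  obtain ⟨s₂, hs₂, hlt₂, hdisj⟩ :=
    exists_next_of_not_accPt hK hiso (lam.ccwDist_mem_exposedDist u v) hsl
  obtain ⟨hpos, hl, hrel₂⟩ := rel_of_consecutive_exposedDist hcov hu hv hlim hs hs₂ hlt₂ hdisj
  obtain ⟨s₁, hpos₁, hlt₁, -, hrel₁⟩ := hprev hpos
  have hdist : ∀ r, 0 < r → r ≤ s₂ → ccwDist u (u + (r : Circle1)) = r := fun r h0 hr =>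
    ccwDist_add_coe h0 (hr.trans (hl.le.trans (ccwDist_le_one u v)))
  have hdist₂ := hdist s₂ (hpos.trans hlt₂) le_rfl
  refine hs.2 ⟨_, _, lam.trans _ _ _ hrel₁ hrel₂, ?_, ?_, mem_arc.2 (hdist₂.trans_lt hl)⟩
  · rwa [hdist s₁ hpos₁ (hlt₁.trans hlt₂).le]
  · rwa [hdist₂]

end InvRatLam

/-! ### The real extension inside an unlinked class -/

namespace RatLam

/-- `b` follows `a` in an unlinked class, the chord from `a` to `b` being a limit of leaves in
`arc a b`; the class thus lies on the other side of that chord. -/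
def IsBoundaryChord (lam : RatLam) (a b : Circle1) : Prop :=
  UnlRel lam.rel a b ∧ lam.IsInnerLimit a b

variable {lam : RatLam} {a b c z : Circle1}

lemma IsInnerLimit.closureRel (h : lam.IsInnerLimit a b) : lam.closureRel a b := by
  refine closureRel_iff_frequently.2 <|
    ((nhds_hasBasis_ccwDist a).prod (nhds_hasBasis_ccwDist b)).frequently_iff.2 fun e he => ?_
  obtain ⟨p, q, hpq, hp, hq, hqb⟩ := h e.1 (ccwDist a b - e.2) he.1 (sub_lt_self _ he.2)
  have hadd := ccwDist_add_of_mem_arc hqb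
  exact ⟨(p, q), ⟨.inr (.inl hp), .inr (.inr (by linarith : ccwDist q b < e.2))⟩, hpq⟩

lemma IsInnerLimit.notMem_arc (h : lam.IsInnerLimit a b) (hz : UnlRel lam.rel a z) :
    z ∉ arc a b := by
  intro hzb
  obtain ⟨p, q, hpq, hp, hq, -⟩ := h _ _ (ccwDist_pos a z) hzb
  have hpr := (lam.rel_rat _ _ hpq).1
  exact not_sameGap_of_mem_arc (mem_cls_self hpr) hpq hp hq (hz.sameGap hpr)

lemma isInnerLimit_of_frequently (hab : a ≠ b)
    (h : ∃ᶠ p in 𝓝 a ×ˢ 𝓝 b, lam.rel p.1 p.2 ∧ p.1 ∈ arc a b ∧ p.2 ∈ arc a b) :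
    lam.IsInnerLimit a b := by
  intro r₁ r₂ hr₁ hr₂
  have hdisj := Set.disjoint_left.1 (disjoint_arc_swap hab)
  have hba := ccwDist_pos b a
  have hnear_a : ∀ᶠ p in 𝓝 a, p ∈ arc a b → ccwDist a p < r₁ := by
    refine (nhds_hasBasis_ccwDist a).eventually_iff.2 ⟨_, lt_min hr₁ hba, fun p hp hpb => ?_⟩
    rcases hp with rfl | hp | hp
    · exact absurd hpb (notMem_arc_left _ _)
    · exact hp.trans_le (min_le_left _ _)
    · exact absurd (mem_arc_iff_ccwDist_right_lt.2 (hp.trans_le (min_le_right _ _))) (hdisj hpb)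
  have hnear_b : ∀ᶠ q in 𝓝 b, q ∈ arc a b → r₂ < ccwDist a q := by
    refine (nhds_hasBasis_ccwDist b).eventually_iff.2
      ⟨_, lt_min (sub_pos.2 hr₂) hba, fun q hq hqb => ?_⟩
    rcases hq with rfl | hq | hq
    · exact absurd hqb (notMem_arc_right _ _)
    · exact absurd (mem_arc.2 (hq.trans_le (min_le_right _ _))) (hdisj hqb)
    · linarith [hq.trans_le (min_le_left _ _), ccwDist_add_of_mem_arc hqb]
  obtain ⟨⟨p, q⟩, ⟨hpq, hp, hq⟩, hpr, hqr⟩ := (h.and_eventually (hnear_a.prod_mk hnear_b)).exists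
  exact ⟨p, q, hpq, hpr hp, hqr hq, hq⟩

lemma mem_arc_of_rel_of_sameGap {p q : Circle1} (hne : a ≠ b) (hpq : lam.rel p q)
    (hab : SameGap (lam.cls p) a b) (hp : p ∈ arc a b) : q ∈ arc a b := by
  have hqa : q ≠ a := fun h => hab.left (h ▸ hpq)
  have hqb : q ≠ b := fun h => hab.right (h ▸ hpq)
  refine (mem_arc_or_mem_arc_swap hqa hqb).resolve_right fun hq => ?_
  exact not_sameGap_of_mem_arc (mem_cls_self (lam.rel_rat _ _ hpq).1) hpq hp
    (mem_arc_rotate (mem_arc_rotate hq hne.symm) hqb) hab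

lemma closureRel.isInnerLimit_or (h : lam.closureRel a b) (ha : a ∉ ratC) (hb : b ∉ ratC)
    (hab : a ≠ b) : lam.IsInnerLimit a b ∨ lam.IsInnerLimit b a := by
  have hside : ∀ p q, lam.rel p q →
      (lam.rel p q ∧ p ∈ arc a b ∧ q ∈ arc a b) ∨ (lam.rel q p ∧ q ∈ arc b a ∧ p ∈ arc b a) := by
    intro p q hpq
    have hp := (lam.rel_rat _ _ hpq).1
    have hgap : SameGap (lam.cls p) a b := h.sameGap (notMem_cls ha) (notMem_cls hb)
    exact (mem_arc_or_mem_arc_swap (ne_of_mem_of_not_mem hp ha) (ne_of_mem_of_not_mem hp hb)).imp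
      (fun h => ⟨hpq, h, mem_arc_of_rel_of_sameGap hab hpq hgap h⟩)
      (fun h => ⟨lam.symm _ _ hpq, mem_arc_of_rel_of_sameGap hab.symm hpq hgap.symm h, h⟩)
  rcases frequently_or_distrib.1 ((closureRel_iff_frequently.1 h).mono fun r => hside r.1 r.2)
    with hfreq | hfreq
  · exact .inl (isInnerLimit_of_frequently hab hfreq)
  · exact .inr (isInnerLimit_of_frequently hab.symm (tendsto_prod_swap.frequently hfreq))

namespace IsBoundaryChord

lemma rightUnique : Relator.RightUnique lam.IsBoundaryChord := fun a _ _ hb hc =>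
  ccwDist_right_injective a (le_antisymm (notMem_arc.1 (hb.2.notMem_arc hc.1))
    (notMem_arc.1 (hc.2.notMem_arc hb.1)))

lemma leftUnique : Relator.LeftUnique lam.IsBoundaryChord := fun a b c ha hb => by
  have hab := ha.2.notMem_arc (ha.1.trans hb.1.symm)
  have hba := hb.2.notMem_arc (hb.1.trans ha.1.symm)
  rw [mem_arc_iff_ccwDist_right_lt, not_lt] at hab hba
  rw [← add_neg_ccwDist a c, le_antisymm hab hba, add_neg_ccwDist]

lemma eq_or_ccwDist_lt (h : lam.IsBoundaryChord a b) (hz : UnlRel lam.rel a z) :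
    z = b ∨ ccwDist b z < ccwDist a z := by
  refine or_iff_not_imp_left.2 fun hne => mem_arc_iff_ccwDist_right_lt.1 ?_
  exact mem_arc.2 (ccwDist_lt_of_ne_of_notMem_arc hne (h.2.notMem_arc hz))

lemma unlRel_of_transGen (h : Relation.TransGen lam.IsBoundaryChord a b) : UnlRel lam.rel a b := by
  induction h with
  | single h => exact h.1
  | tail _ h ih => exact ih.trans h.1

/-- Along a chain of boundary chords the distance to a point `z` of the class decreases until the
chain reaches `z`. -/
lemma exists_finite_of_transGen (h : Relation.TransGen lam.IsBoundaryChord a b) :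
    ∃ Φ : Set Circle1, Φ.Finite ∧
      ∀ z, UnlRel lam.rel a z → z ∈ Φ ∨ ccwDist b z < ccwDist a z := by
  induction h with
  | single h => exact ⟨{_}, finite_singleton _, fun _ => h.eq_or_ccwDist_lt⟩
  | @tail b c hab hbc ih =>
    obtain ⟨Φ, hΦ, hlt⟩ := ih
    refine ⟨insert c Φ, hΦ.insert c, fun z hz => ?_⟩
    rcases hlt z hz with hz' | hz'
    · exact .inl (.inr hz')
    · exact (hbc.eq_or_ccwDist_lt ((unlRel_of_transGen hab).symm.trans hz)).imp .inl hz'.trans'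

lemma finite_unlRel_of_transGen_self (h : Relation.TransGen lam.IsBoundaryChord a a) :
    {z | UnlRel lam.rel a z}.Finite := by
  obtain ⟨Φ, hΦ, hlt⟩ := exists_finite_of_transGen h
  exact hΦ.subset fun z hz => (hlt z hz).resolve_right (lt_irrefl _)

end IsBoundaryChord

lemma ccwDist_mem_coveredDist {t : Circle1} (ht : t ∉ ratC) (hab : UnlRel lam.rel a b)
    (htb : t ∈ arc a b) (hat : ¬ UnlRel lam.rel a t) : ccwDist a t ∈ lam.coveredDist a b := by
  rw [unlRel_iff] at hat
  push Not at hat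
  obtain ⟨z, hz, hgap⟩ := hat
  obtain ⟨p, hp, q, hq, hpt, htq⟩ :=
    exists_mem_arc_of_not_sameGap (notMem_cls hab.left) (notMem_cls ht) hgap
  refine ⟨p, q, lam.trans _ _ _ (lam.symm _ _ hp) hq, hpt, htq, by_contra fun hqb => ?_⟩
  have hne : q ≠ b := ne_of_mem_of_not_mem (mem_ratC_of_mem_cls hq) hab.right
  exact not_sameGap_of_mem_arc hp hq (arc_subset_of_mem_right htb hpt)
    (mem_arc.2 (ccwDist_lt_of_ne_of_notMem_arc hne hqb)) (hab.sameGap hz)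

end RatLam

namespace InvRatLam

section AtLeastTwo

variable {d : ℕ} [d.AtLeastTwo] {lam : InvRatLam d} {a b : Circle1}

lemma reflTransGen_isBoundaryChord_or (h : realExt lam.rel a b) (ha : a ∉ ratC) :
    Relation.ReflTransGen lam.IsBoundaryChord a b ∨
      Relation.ReflTransGen lam.IsBoundaryChord b a := by
  induction h with
  | rel x y h =>
    rcases eq_or_ne x y with rfl | hxy
    · exact .inl .refl
    have hunl : UnlRel lam.rel x y := unlRel_of_realExt (.rel _ _ h) ha
    exact (RatLam.closureRel.isInnerLimit_or h ha hunl.right hxy).imp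
      (fun h => .single ⟨hunl, h⟩) (fun h => .single ⟨hunl.symm, h⟩)
  | refl x => exact .inl .refl
  | symm x y h ih => exact (ih ((mem_ratC_iff_of_realExt h).not.2 ha)).symm
  | trans x y z hxy _ ih₁ ih₂ =>
    rcases ih₁ ha with hp | hp <;> rcases ih₂ ((mem_ratC_iff_of_realExt hxy).not.1 ha) with hq | hq
    · exact .inl (hp.trans hq)
    · have hswap : Relator.RightUnique (swap lam.IsBoundaryChord) :=
        fun _ _ _ hb hc => RatLam.IsBoundaryChord.leftUnique hb hc
      exact (Relation.ReflTransGen.total_of_right_unique hswap (Relation.reflTransGen_swap.2 hp)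
        (Relation.reflTransGen_swap.2 hq)).symm.imp
        Relation.reflTransGen_swap.1 Relation.reflTransGen_swap.1
    · exact Relation.ReflTransGen.total_of_right_unique RatLam.IsBoundaryChord.rightUnique hp hq
    · exact .inr (hq.trans hp)

lemma closureRel_of_notMem_arc (hab : UnlRel lam.rel a b)
    (harc : ∀ z, UnlRel lam.rel a z → z ∉ arc a b) : lam.closureRel a b :=
  (isInnerLimit_of_covered
    (fun t htb ht => RatLam.ccwDist_mem_coveredDist ht hab htb fun hat => harc t hat htb)
    (fun _ h => absurd (lam.rel_rat _ _ h).1 hab.left)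
    (fun _ h => absurd (lam.rel_rat _ _ h).1 hab.right)).closureRel

lemma realExt_of_finite (hfin : {z | UnlRel lam.rel a z}.Finite) (hab : UnlRel lam.rel a b) :
    realExt lam.rel a b := by
  induction hn : ({z | UnlRel lam.rel a z} ∩ arc a b).ncard using Nat.strong_induction_on
    generalizing a b with
  | _ n ih =>
  by_cases hempty : ∀ z, UnlRel lam.rel a z → z ∉ arc a b
  · exact .rel _ _ (closureRel_of_notMem_arc hab hempty)
  push Not at hempty
  obtain ⟨w, haw, hwb⟩ := hempty
  have hcls : {z | UnlRel lam.rel w z} = {z | UnlRel lam.rel a z} :=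
    ext fun _ => ⟨haw.trans, haw.symm.trans⟩
  have hfin' := hfin.inter_of_left (arc a b)
  refine .trans _ w _ (ih _ ?_ hfin haw rfl) (ih _ ?_ (hcls ▸ hfin) (haw.symm.trans hab) rfl)
  · rw [← hn]
    exact ncard_lt_ncard ⟨inter_subset_inter_right _ (arc_subset_of_mem_right hwb),
      fun hsub => notMem_arc_right a w (hsub ⟨haw, hwb⟩).2⟩ hfin'
  · rw [← hn, hcls]
    exact ncard_lt_ncard ⟨inter_subset_inter_right _ (arc_subset_of_mem_left hwb),
      fun hsub => notMem_arc_left w b (hsub ⟨haw, hwb⟩).2⟩ hfin'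

end AtLeastTwo

section NeZero

variable {d : ℕ} [NeZero d] {lam : InvRatLam d} {a b : Circle1}

lemma isInnerLimit_md (h : lam.IsInnerLimit a b) : lam.IsInnerLimit (md d a) (md d b) := by
  have hd : (0 : ℝ) < d := Nat.cast_pos.2 (NeZero.pos d)
  intro r₁ r₂ hr₁ hr₂
  have hpos := ccwDist_pos (md d a) (md d b)
  obtain ⟨e, he, hle⟩ := exists_between (lt_min hpos (sub_pos.2 hr₂))
  simp only [lt_min_iff] at hle
  obtain ⟨p, q, hpq, hp, hq, hqb⟩ := h (r₁ / d) (ccwDist a b - e / d) (div_pos hr₁ hd)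
    (sub_lt_self _ (div_pos he hd))
  have hqe : ccwDist q b < e / d := by linarith [ccwDist_add_of_mem_arc hqb]
  rw [lt_div_iff₀' hd] at hp hqe
  have hmem : md d q ∈ arc (md d a) (md d b) :=
    mem_arc_iff_ccwDist_right_lt.2 (by linarith [ccwDist_md_le (d := d) q b])
  exact ⟨_, _, rel_md hpq, (ccwDist_md_le a p).trans_lt hp,
    by linarith [ccwDist_md_le (d := d) q b, ccwDist_add_of_mem_arc hmem], hmem⟩

lemma IsUniform.finite_unlRel_of_md (h : lam.IsUniform)
    (hfin : {z | UnlRel lam.rel (md d a) z}.Finite) : {z | UnlRel lam.rel a z}.Finite :=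
  (hfin.biUnion fun p _ => (fiber d p).finite_toSet).subset fun _ hz =>
    mem_biUnion (h.unlRel_md hz) (mem_fiber.2 rfl)

lemma IsUniform.transGen_isBoundaryChord_md (h : lam.IsUniform)
    (hab : Relation.TransGen lam.IsBoundaryChord a b) :
    Relation.TransGen lam.IsBoundaryChord (md d a) (md d b) :=
  hab.lift (md d) fun _ _ hxy => ⟨h.unlRel_md hxy.1, isInnerLimit_md hxy.2⟩

end NeZero

variable {d : ℕ} [d.AtLeastTwo] {lam : InvRatLam d} {a b x : Circle1} {C : Set Circle1}

/-- A chain of boundary chords from `a` to `b` would be mapped to a closed chain, which makes the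
class of `md d a`, hence that of `a`, finite. -/
lemma IsUniform.eq_of_realExt (h : lam.IsUniform) (ha : a ∉ ratC)
    (hinf : {z | UnlRel lam.rel a z}.Infinite) (hab : realExt lam.rel a b)
    (hmd : md d a = md d b) : a = b := by
  by_contra hne
  have hcycle : Relation.TransGen lam.IsBoundaryChord (md d a) (md d a) := by
    rcases reflTransGen_isBoundaryChord_or hab ha with hchain | hchain <;>
      rcases Relation.reflTransGen_iff_eq_or_transGen.1 hchain with heq | htrans
    · exact absurd heq.symm hne
    · simpa only [← hmd] using h.transGen_isBoundaryChord_md htrans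
    · exact absurd heq hne
    · simpa only [← hmd] using h.transGen_isBoundaryChord_md htrans
  exact hinf (h.finite_unlRel_of_md
    (RatLam.IsBoundaryChord.finite_unlRel_of_transGen_self hcycle))

lemma setOf_realExt_eq_of_finite (hx : x ∉ ratC) (hfin : {z | UnlRel lam.rel x z}.Finite) :
    {z | realExt lam.rel x z} = {z | UnlRel lam.rel x z} :=
  ext fun _ => ⟨fun h => unlRel_of_realExt h hx, realExt_of_finite hfin⟩

lemma IsUniform.injOn_of_infinite (h : lam.IsUniform) (hx : x ∉ ratC)
    (hinf : {z | UnlRel lam.rel x z}.Infinite) : InjOn (md d) {z | realExt lam.rel x z} := by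
  intro a ha b hb hab
  have hxa := unlRel_of_realExt ha hx
  have hcls : {z | UnlRel lam.rel a z} = {z | UnlRel lam.rel x z} :=
    ext fun _ => ⟨hxa.trans, hxa.symm.trans⟩
  exact h.eq_of_realExt hxa.right (hcls ▸ hinf) (.trans _ _ _ (.symm _ _ ha) hb) hab

lemma IsUniform.critElem_iff (h : lam.IsUniform) : CritElem d lam.rel C ↔
    ((∃ x ∈ ratC, C = lam.cls x) ∨ IsUnlClass lam.rel C) ∧ ¬ InjOn (md d) C := by
  constructor
  · rintro (⟨⟨x, rfl⟩, hinj⟩ | ⟨hC, -, hinj⟩)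
    · refine ⟨?_, hinj⟩
      by_cases hx : x ∈ ratC
      · exact .inl ⟨x, hx, setOf_realExt_eq_cls hx⟩
      · have hfin : {z | UnlRel lam.rel x z}.Finite :=
          not_infinite.1 fun hinf => hinj (h.injOn_of_infinite hx hinf)
        exact .inr ⟨x, hx, setOf_realExt_eq_of_finite hx hfin⟩
    · exact ⟨.inr hC, hinj⟩
  · rintro ⟨⟨x, hx, rfl⟩ | ⟨x, hx, rfl⟩, hinj⟩
    · exact .inl ⟨⟨x, (setOf_realExt_eq_cls hx).symm⟩, hinj⟩
    · by_cases hfin : {z | UnlRel lam.rel x z}.Finite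
      · exact .inl ⟨⟨x, (setOf_realExt_eq_of_finite hx hfin).symm⟩, hinj⟩
      · exact .inr ⟨⟨x, hx, rfl⟩, hfin, hinj⟩

end InvRatLam

/-! ### Germs of irrational angles -/

/-- The irrational angles that follow `x` counterclockwise arbitrarily closely. -/
def germAfter (x : Circle1) : Filter Circle1 := comap (ccwDist x) (𝓝[>] 0) ⊓ 𝓟 ratCᶜ

/-- The irrational angles that precede `x` counterclockwise arbitrarily closely. -/
def germBefore (x : Circle1) : Filter Circle1 := comap (ccwDist · x) (𝓝[>] 0) ⊓ 𝓟 ratCᶜ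

section Germs

variable {x x' y t w z : Circle1} {p : Circle1 → Prop} {P A : Set Circle1}

lemma eventually_germAfter :
    (∀ᶠ y in germAfter x, p y) ↔ ∃ e > 0, ∀ y ∉ ratC, ccwDist x y < e → p y := by
  simp only [germAfter, eventually_inf_principal,
    ((nhdsGT_basis 0).comap (ccwDist x)).eventually_iff,
    mem_preimage, mem_Ioo, ccwDist_pos, true_and, mem_compl_iff]
  exact exists_congr fun e => and_congr_right fun _ => forall_congr' fun y => Imp.swap

lemma eventually_germBefore :
    (∀ᶠ y in germBefore x, p y) ↔ ∃ e > 0, ∀ y ∉ ratC, ccwDist y x < e → p y := by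
  simp only [germBefore, eventually_inf_principal,
    ((nhdsGT_basis 0).comap (ccwDist · x)).eventually_iff, mem_preimage, mem_Ioo, ccwDist_pos,
    true_and, mem_compl_iff]
  exact exists_congr fun e => and_congr_right fun _ => forall_congr' fun y => Imp.swap

lemma eventually_germAfter_notMem_ratC : ∀ᶠ y in germAfter x, y ∉ ratC :=
  eventually_germAfter.2 ⟨1, one_pos, fun _ hy _ => hy⟩

lemma eventually_germBefore_notMem_ratC : ∀ᶠ y in germBefore x, y ∉ ratC :=
  eventually_germBefore.2 ⟨1, one_pos, fun _ hy _ => hy⟩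

lemma eventually_justAfter (hP : P.Finite) : ∀ᶠ y in germAfter x, JustAfter P x y :=
  hP.eventually_all.2 fun p _ => eventually_germAfter.2 ⟨_, ccwDist_pos x p, fun _ _ hy => hy⟩

lemma eventually_justBefore (hP : P.Finite) : ∀ᶠ y in germBefore x, JustBefore P x y :=
  hP.eventually_all.2 fun p _ => eventually_germBefore.2
    ⟨_, ccwDist_pos p x, fun _ _ hy => mem_arc_iff_ccwDist_right_lt.2 hy⟩

lemma neBot_germAfter (hx : x ∈ ratC) : (germAfter x).NeBot := by
  refine frequently_true_iff_neBot _ |>.1 fun h => ?_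
  obtain ⟨e, he, h⟩ := eventually_germAfter.1 h
  obtain ⟨r, hr, hr0, hr1, hre⟩ :=
    exists_irrational_pos_lt (finite_singleton e) (f := id) (by simpa)
  refine h _ (add_irrational_notMem_ratC hx hr) ?_ trivial
  rw [ccwDist_add_coe hr0 hr1]
  exact hre e rfl

lemma nhdsWithin_compl_ratC_le (hx : x ∈ ratC) : 𝓝[ratCᶜ] x ≤ germAfter x ⊔ germBefore x := by
  intro s hs
  obtain ⟨e₁, he₁, hs₁⟩ := eventually_germAfter.1 hs.1
  obtain ⟨e₂, he₂, hs₂⟩ := eventually_germBefore.1 hs.2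
  refine mem_nhdsWithin_iff_eventually.2 ?_
  filter_upwards [(nhds_hasBasis_ccwDist x).mem_of_mem (lt_min he₁ he₂)] with y hy hyr
  rcases hy with rfl | hy | hy
  · exact absurd hx hyr
  · exact hs₁ y hyr (hy.trans_le (min_le_left _ _))
  · exact hs₂ y hyr (hy.trans_le (min_le_right _ _))

lemma germAfter_le_nhds : germAfter x ≤ 𝓝 x := by
  intro s hs
  obtain ⟨e, he, hes⟩ := (nhds_hasBasis_ccwDist x).mem_iff.1 hs
  exact eventually_germAfter.2 ⟨e, he, fun y _ hy => hes (.inr (.inl hy))⟩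

lemma exists_notMem_ratC_of_eventually (h : ∀ᶠ y in 𝓝 x, p y) : ∃ y, y ∉ ratC ∧ p y := by
  by_cases hx : x ∈ ratC
  · have := neBot_germAfter hx
    exact (eventually_germAfter_notMem_ratC.and (germAfter_le_nhds h)).exists
  · exact ⟨x, hx, h.self_of_nhds⟩

lemma tendsto_liftAfter {d : ℕ} [NeZero d] (x : Circle1) :
    Tendsto (liftAfter d x) (germAfter (md d x)) (germAfter x) := by
  have hd : (0 : ℝ) < d := Nat.cast_pos.2 (NeZero.pos d)
  intro s hs
  obtain ⟨e, he, hs⟩ := eventually_germAfter.1 hs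
  refine eventually_germAfter.2 ⟨d * e, mul_pos hd he, fun y hy hye => ?_⟩
  refine hs _ (liftAfter_mem_ratC.not.2 hy) ?_
  rwa [ccwDist_liftAfter, div_lt_iff₀' hd]

lemma JustAfter.sameGap_of_justAfter {s s' : Circle1} (hs : JustAfter A x s)
    (hs' : JustAfter A x s') (hsA : s ∉ A) (hsA' : s' ∉ A) : SameGap A s s' := by
  wlog hlt : s ∈ arc x s' generalizing s s'
  · rcases eq_or_ne s s' with rfl | hne
    · exact SameGap.refl hsA
    · exact (this hs' hs hsA' hsA (ccwDist_lt_of_ne_of_notMem_arc hne hlt)).symm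
  exact sameGap_of_notMem_arc hsA hsA' fun a ha hmem =>
    hs'.notMem_arc ha (arc_subset_of_mem_left hlt hmem)

lemma eventually_sameGap_or_not (hA : A.Finite) (hAr : A ⊆ ratC) (x x' : Circle1) :
    (∀ᶠ p in germAfter x ×ˢ germAfter x', SameGap A p.1 p.2) ∨
      ∀ᶠ p in germAfter x ×ˢ germAfter x', ¬ SameGap A p.1 p.2 := by
  have hA' : ∀ y, ∀ᶠ s in germAfter y, s ∉ A ∧ JustAfter A y s := fun y =>
    (eventually_germAfter_notMem_ratC.mono fun _ h hs => h (hAr hs)).and (eventually_justAfter hA)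
  refine or_iff_not_imp_right.2 fun hfreq => ?_
  obtain ⟨⟨s, s'⟩, hss', ⟨hsA, hs⟩, hs'A, hs'⟩ :=
    ((not_eventually.1 hfreq).and_eventually ((hA' x).prod_mk (hA' x'))).exists
  filter_upwards [(hA' x).prod_mk (hA' x')] with ⟨r, r'⟩ ⟨⟨hrA, hr⟩, hr'A, hr'⟩
  exact (hr.sameGap_of_justAfter hs hrA hsA).trans
    ((not_not.1 hss').trans (hs'.sameGap_of_justAfter hr' hs'A hr'A))

end Germs

section Separation

variable {A A' : Set Circle1} {x x' : Circle1}

lemma sameGap_of_separates (hx : x ∉ A) (hx' : x' ∉ A) (h : ¬ SameGap A x x')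
    (h' : SameGap A' x x') (hA : ∀ a ∈ A, ∀ b ∈ A, SameGap A' a b) {a : Circle1} (ha : a ∈ A) :
    SameGap A' x a := by
  obtain ⟨b, hb, c, hc, hxb, hxc⟩ := exists_mem_arc_of_not_sameGap hx hx' h
  refine SameGap.trans ?_ (hA b hb a ha)
  by_contra hsep
  obtain ⟨p, hp, q, hq, hpb, hbq⟩ := exists_mem_arc_of_not_sameGap h'.left (hA b hb b hb).left hsep
  have hqc : q ∈ arc x c := by
    by_contra hqc
    exact not_sameGap_of_mem_arc hp hq (arc_subset_of_mem_right hxb hpb)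
      ((mem_arc.1 hxc).trans_le (notMem_arc.1 hqc)) h'
  have hbc : b ∈ arc x c := (mem_arc.1 hxb).trans hxc
  have hpc : p ≠ c := by
    rintro rfl
    exact notMem_arc_right x p (arc_subset_of_mem_right hbc hpb)
  exact not_sameGap_of_mem_arc hq hp (mem_arc_right_of_mem_arc hqc hbq)
    (mem_arc_rotate (mem_arc_right_of_mem_arc hbc hpb) hpc) (hA b hb c hc)

end Separation

/-! ### Growing the family -/

open Classical in
lemma RatLam.IsFamily.sameRegion_of_separates {lam : RatLam}
    {F : Finset (Set Circle1)} {B : Set Circle1} {t y : Circle1} (hF : lam.IsFamily (insert B F))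
    (ht : t ∉ ratC) (hy : y ∉ ratC) (hyt : SameRegion F y t)
    (hsep : ¬ SameRegion (insert B F) y t) :
    ∀ b ∈ B, SameRegion F t b := by
  intro b hb A hA
  have hB := Finset.mem_insert_self B F
  have hBsep : ¬ SameGap B t y := fun h => hsep fun A hA =>
    (Finset.mem_insert.1 hA).elim (fun heq => heq ▸ h.symm) (hyt A)
  have hBA : B ≠ A := fun h => hBsep (h ▸ (hyt A hA).symm)
  have hF := hF.isUnlinkedFamily
  exact sameGap_of_separates (hF.notMem_of_notMem_ratC hB ht) (hF.notMem_of_notMem_ratC hB hy) hBsep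
    (hyt A hA).symm (fun _ ha _ hb => (hF.unlinked A (Finset.mem_insert_of_mem hA) B hB
      hBA.symm).sameGap ha hb) hb

namespace InvRatLam

variable {d : ℕ} [NeZero d] {lam : InvRatLam d} {F F₀ : Finset (Set Circle1)} {B : Set Circle1}
  {δ : Set Circle1 → ℕ} {t w x y : Circle1}

lemma IsUniform.sameRegion_md_of_sameRegion (h : lam.IsUniform) (hF : lam.IsFamily F)
    (hx : x ∉ ratC) (hxw : SameRegion (lam.pullback F) x w) : SameRegion F (md d x) (md d w) := by
  have hw : w ∉ vertices (lam.pullback F) := fun ⟨A, hA, hwA⟩ => (hxw A hA).right hwA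
  obtain ⟨s, hs, hws, hmd⟩ := exists_notMem_ratC_of_eventually
    ((eventually_sameRegion isFamily_pullback.isUnlinkedFamily hw).and
      ((continuous_md d).continuousAt.eventually (eventually_sameRegion hF.isUnlinkedFamily
        ((mem_vertices_pullback hF).not.1 hw))))
  exact (h.sameRegion_md hF hx hs (hxw.trans hws)).trans hmd.symm

open Classical in
/-- A new class only affects what lies above the region containing it. -/
lemma IsUniform.classCount_pullback_insert (h : lam.IsUniform) (hF : lam.IsFamily F)
    (hB : ∀ b ∈ B, SameRegion F t b) (hy : y ∉ ratC) (hyt : ¬ SameRegion F y t) :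
    classCount d (SameRegion (lam.pullback (insert B F))) y =
      classCount d (SameRegion (lam.pullback F)) y := by
  have hmono : lam.pullback F ⊆ lam.pullback (insert B F) :=
    pullback_mono (Finset.subset_insert _ _)
  refine classCount_congr isIrrationalEquiv_pullback isIrrationalEquiv_pullback hy
    fun x hx x' hx' => ⟨fun hxx' => hxx'.mono hmono, fun hxx' A hA => ?_⟩
  by_cases hAF : A ∈ lam.pullback F
  · exact hxx' A hAF
  by_contra hsep
  have hpull := (isFamily_pullback (lam := lam) (F := insert B F)).isUnlinkedFamily
  have hxr := notMem_ratC_of_mem_fiber hy hx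
  have hx'r := notMem_ratC_of_mem_fiber hy hx'
  obtain ⟨w, ⟨hw, hwB⟩, rfl⟩ := mem_pullback.1 hA
  have hwB : lam.cls (md d w) = B := (Finset.mem_insert.1 hwB).resolve_right fun hwF =>
    hAF ((cls_mem_pullback hw).2 hwF)
  have hxw : SameRegion (lam.pullback F) x w := fun A' hA' =>
    sameGap_of_separates (hpull.notMem_of_notMem_ratC hA hxr) (hpull.notMem_of_notMem_ratC hA hx'r)
      hsep (hxx' A' hA') (fun _ ha _ hb => (hpull.unlinked A' (hmono hA') _ hA
        fun heq => hAF (heq ▸ hA')).sameGap ha hb) (RatLam.mem_cls_self hw)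
  have hyw := h.sameRegion_md_of_sameRegion hF hxr hxw
  rw [mem_fiber.1 hx] at hyw
  exact hyt (hyw.trans (hB _ (hwB ▸ RatLam.mem_cls_self (md_mem_ratC.2 hw))).symm)

open Classical in
lemma IsDegreeFun.classCount_pullback_insert_eq (hδ : lam.IsDegreeFun δ) (hF : lam.IsFamily F)
    (hF' : lam.IsFamily (insert B F))
    (hsum : ∑ A ∈ lam.pullback (insert B F), (δ A - 1) = ∑ A ∈ lam.pullback F, (δ A - 1))
    (ht : t ∉ ratC) (hy : y ∉ ratC)
    (hcount : classCount d (SameRegion (lam.pullback (insert B F))) t =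
      classCount d (SameRegion (lam.pullback F)) t)
    (hyt : SameRegion F y t) (hsep : ¬ SameRegion (insert B F) y t) :
    classCount d (SameRegion (lam.pullback (insert B F))) y = d := by
  have hsub : F ⊆ insert B F := Finset.subset_insert _ _
  obtain ⟨Y, htY, hY⟩ := hF.isUnlinkedFamily.exists_isTransversal_superset (Y := {t})
    (by simpa using ht) (by simp)
  rw [Finset.singleton_subset_iff] at htY
  have hcountY : ∀ z ∈ Y, classCount d (SameRegion (lam.pullback (insert B F))) z =
      classCount d (SameRegion (lam.pullback F)) z := fun z hz => by
    by_cases hzt : SameRegion F z t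
    · rwa [hY.eq_of_sameRegion z hz t htY hzt]
    · exact hδ.isUniform.classCount_pullback_insert hF
        (RatLam.IsFamily.sameRegion_of_separates hF' ht hy hyt hsep) (hY.irrational z hz) hzt
  have hyz : ∀ z ∈ Y, ¬ SameRegion (insert B F) y z := fun z hz h =>
    hsep (hY.eq_of_sameRegion t htY z hz (hyt.symm.trans (h.mono hsub)) ▸ h)
  have hyY : y ∉ Y := fun h => hyz y h (.refl hF'.isUnlinkedFamily hy)
  have heq := hδ.riemann_hurwitz hF hY
  have hle := hδ.sum_sub_classCount_le hF' (Y := insert y Y)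
    (Finset.forall_mem_insert .. |>.2 ⟨hy, hY.irrational⟩) (by
      simp only [Finset.forall_mem_insert]
      exact ⟨⟨fun _ => trivial, fun z hz h => absurd h (hyz z hz)⟩, fun z hz =>
        ⟨fun h => absurd h.symm (hyz z hz),
          fun z' hz' h => hY.eq_of_sameRegion z hz z' hz' (h.mono hsub)⟩⟩)
  have hsumY : ∑ z ∈ Y, (d - classCount d (SameRegion (lam.pullback (insert B F))) z) =
      ∑ z ∈ Y, (d - classCount d (SameRegion (lam.pullback F)) z) :=
    Finset.sum_congr rfl fun z hz => by rw [hcountY z hz]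
  rw [Finset.sum_insert hyY, hsumY, hsum] at hle
  have := classCount_le (d := d) (SameRegion (lam.pullback (insert B F))) y
  omega

open Classical in
lemma IsDegreeFun.classCount_pullback_eq_of_not_sameRegion (hδ : lam.IsDegreeFun δ)
    (hF₀ : lam.IsFamily F₀)
    (hsum : ∀ F, lam.IsFamily F → F₀ ⊆ F →
      ∑ A ∈ lam.pullback F, (δ A - 1) = ∑ A ∈ lam.pullback F₀, (δ A - 1))
    (ht : t ∉ ratC) (hy : y ∉ ratC)
    (hcount : ∀ F, lam.IsFamily F → F₀ ⊆ F → classCount d (SameRegion (lam.pullback F)) t =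
      classCount d (SameRegion (lam.pullback F₀)) t)
    (hyt : SameRegion F₀ y t) (hF : lam.IsFamily F) (hsub : F₀ ⊆ F) (hsep : ¬ SameRegion F y t) :
    classCount d (SameRegion (lam.pullback F)) y = d := by
  suffices main : ∀ G, lam.IsFamily G → ¬ SameRegion (F₀ ∪ G) y t →
      classCount d (SameRegion (lam.pullback (F₀ ∪ G))) y = d by
    have hmain := main F hF
    rw [Finset.union_eq_right.2 hsub] at hmain
    exact hmain hsep
  intro G
  induction G using Finset.induction_on with
  | empty => exact fun _ hsep => absurd hyt (Finset.union_empty F₀ ▸ hsep)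
  | insert B G _ ih =>
    intro hG hsep
    have hFG : lam.IsFamily (F₀ ∪ G) := hF₀.union fun A hA => hG A (Finset.mem_insert_of_mem hA)
    have hFG' := hF₀.union hG
    have hsub : F₀ ⊆ F₀ ∪ G := Finset.subset_union_left
    have hsub' : F₀ ⊆ F₀ ∪ insert B G := Finset.subset_union_left
    have hsum' := (hsum _ hFG' hsub').trans (hsum _ hFG hsub).symm
    have hcount' := (hcount _ hFG' hsub').trans (hcount _ hFG hsub).symm
    rw [Finset.union_insert] at hsep hFG' hsum' hcount' ⊢
    by_cases hyt' : SameRegion (F₀ ∪ G) y t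
    · exact hδ.classCount_pullback_insert_eq hFG hFG' hsum' ht hy hcount' hyt' hsep
    · exact classCount_pullback_eq_of_subset (Finset.subset_insert _ _) hy
        (ih (fun A hA => hG A (Finset.mem_insert_of_mem hA)) hyt')

end InvRatLam

namespace RatLam

/-- No class of the lamination separates the germs of angles just after `x` and just after `x'`. -/
def GermsLinked (lam : RatLam) (x x' : Circle1) : Prop :=
  ∀ z ∈ ratC, ∀ᶠ p in germAfter x ×ˢ germAfter x', SameGap (lam.cls z) p.1 p.2

variable {lam : RatLam} {F : Finset (Set Circle1)} {t w x x' : Circle1}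

lemma exists_eventually_not_sameGap (h : ¬ lam.GermsLinked x x') :
    ∃ z ∈ ratC, ∀ᶠ p in germAfter x ×ˢ germAfter x', ¬ SameGap (lam.cls z) p.1 p.2 := by
  simp only [GermsLinked, not_forall] at h
  obtain ⟨z, hz, h⟩ := h
  exact ⟨z, hz, (eventually_sameGap_or_not (lam.finite_cls z) (fun _ => mem_ratC_of_mem_cls)
    x x').resolve_left h⟩

lemma GermsLinked.eventually_sameRegion (h : lam.GermsLinked x x') (hF : lam.IsFamily F) :
    ∀ᶠ p in germAfter x ×ˢ germAfter x', SameRegion F p.1 p.2 :=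
  F.finite_toSet.eventually_all.2 fun A hA => by
    obtain ⟨z, hz, rfl⟩ := hF A hA
    exact h z hz

lemma GermsLinked.mem_arc_of_isNext (h : lam.GermsLinked x x') (hx : x ∈ ratC) (hx' : x' ∈ ratC)
    (hne : x ≠ x') (hw : IsNext (lam.cls x) x w) : x' ∈ arc x w := by
  have := neBot_germAfter hx
  have := neBot_germAfter hx'
  obtain ⟨⟨s, s'⟩, hss', hs, hs'⟩ :=
    ((h x hx).and ((eventually_justAfter (lam.finite_cls x)).prod_mk
    (eventually_justAfter (finite_singleton x)))).exists
  have hs'w : s' ∈ arc x w := hss'.mem_arc hw.left_mem hw.right_mem (hs w hw.right_mem)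
  have hs'x : s' ∈ arc x' x := hs' x rfl
  have hs_ne : s' ≠ x' := by
    rintro rfl
    exact notMem_arc_left s' x hs'x
  exact (mem_arc.1 (mem_arc_rotate (mem_arc_rotate hs'x hne.symm) hs_ne)).trans hs'w

lemma GermsLinked.not_isInnerLimit (h : lam.GermsLinked x x') (hx : x ∈ ratC) (hx' : x' ∈ ratC)
    (hx'w : x' ∈ arc x w) : ¬ lam.IsInnerLimit x w := by
  intro hlim
  obtain ⟨p, q, hpq, hpx', hx'q, -⟩ := hlim _ _ (ccwDist_pos x x') hx'w
  have := neBot_germAfter hx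
  have := neBot_germAfter hx'
  have hp := (lam.rel_rat p q hpq).1
  obtain ⟨⟨s, s'⟩, hss', hs, hs'⟩ := ((h p hp).and
    ((eventually_justAfter (finite_singleton p)).prod_mk
      (eventually_justAfter (finite_singleton q)))).exists
  have hsp : s ∈ arc x p := hs p rfl
  have hs'q : s' ∈ arc x' q := hs' q rfl
  have hps' : p ∈ arc x s' := (mem_arc.1 hpx').trans (mem_arc_left_of_mem_arc hx'q hs'q)
  exact not_sameGap_of_mem_arc (mem_cls_self hp) hpq (mem_arc_right_of_mem_arc hps' hsp)
    (mem_arc_right_of_mem_arc (arc_subset_of_mem_left hx'q hs'q) ((mem_arc.1 hsp).trans hps')) hss'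

lemma eventually_sameRegion_of_notMem_coveredDist (hw : IsNext (lam.cls x) x w) (ht : t ∈ arc x w)
    (htr : t ∉ ratC) (hcov : ccwDist x t ∉ lam.coveredDist x w) (hF : lam.IsFamily F) :
    ∀ᶠ s in germAfter x, SameRegion F s t := by
  refine F.finite_toSet.eventually_all.2 fun A hA => ?_
  obtain ⟨v, -, rfl⟩ := hF A hA
  filter_upwards [eventually_germAfter_notMem_ratC, eventually_justAfter (lam.finite_cls v),
    eventually_justAfter (finite_singleton t)] with s hs hsv hst
  by_contra hsep
  obtain ⟨p, hp, q, hq, hpt, htq⟩ :=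
    exists_mem_arc_of_not_sameGap (notMem_cls hs) (notMem_cls htr) hsep
  have hpq : lam.rel p q := lam.trans _ _ _ (lam.symm _ _ hp) hq
  have hxpt : p ∈ arc x t := arc_subset_of_mem_left (hst t rfl) hpt
  have hpw : p ∈ arc x w := (mem_arc.1 hxpt).trans ht
  have hqw : q ∈ arc x w := (sameGap_of_rel (fun hxp => hw.notMem_arc p hxp hpw) hpq).mem_arc
    hw.left_mem hw.right_mem hpw
  exact hcov ⟨p, q, hpq, hxpt, arc_subset_of_mem_left (hsv q hq) htq, hqw⟩

end RatLam

/-! ### Stabilisation of the counts -/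

namespace InvRatLam

variable {d : ℕ} [NeZero d] {lam : InvRatLam d} {F F₀ : Finset (Set Circle1)} {T : Finset Circle1}
  {l l' : Filter Circle1} {t x x' y z : Circle1}

lemma exists_family_classCount_eq (lam : InvRatLam d) {P : Finset Circle1}
    (hP : ∀ y ∈ P, y ∉ ratC) :
    ∃ F, lam.IsFamily F ∧ (∀ y ∈ P, ∀ y' ∈ P, SameRegion F y y' → UnlRel lam.rel y y') ∧
      ∀ y ∈ P, ∀ F', F ⊆ F' →
        classCount d (SameRegion (lam.pullback F')) y = classCount d (UnlRel lam.rel) y := by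
  classical
  obtain ⟨F, hF, hsep, hsep'⟩ := lam.exists_family_separating (P ∪ P.biUnion (fiber d))
  refine ⟨F, hF, fun y hy y' hy' => hsep y (Finset.mem_union_left _ hy) y'
    (Finset.mem_union_left _ hy'), fun y hy F' hFF' => ?_⟩
  have hmem : ∀ x ∈ fiber d y, x ∈ P ∪ P.biUnion (fiber d) := fun x hx =>
    Finset.mem_union_right _ (Finset.mem_biUnion.2 ⟨y, hy, hx⟩)
  exact classCount_congr isIrrationalEquiv_pullback lam.isIrrationalEquiv_unlRel (hP y hy)
    fun x hx x' hx' => ⟨fun h => hsep' x (hmem x hx) x' (hmem x' hx') (h.mono (pullback_mono hFF')),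
      fun h => h.sameRegion isFamily_pullback⟩

lemma eventually_classCount_ne_of_germsLinked (h : lam.GermsLinked x x') (hne : x ≠ x')
    (hmd : md d x' = md d x) :
    ∀ᶠ y in germAfter (md d x), classCount d (SameRegion (lam.pullback F)) y ≠ d := by
  have hlift : Tendsto (fun y => (liftAfter d x y, liftAfter d x' y)) (germAfter (md d x))
      (germAfter x ×ˢ germAfter x') :=
    (tendsto_liftAfter x).prodMk (hmd ▸ tendsto_liftAfter x')
  filter_upwards [hlift.eventually (h.eventually_sameRegion isFamily_pullback),
    eventually_germAfter_notMem_ratC] with y hreg hy hcount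
  have heq := (classCount_eq_iff isIrrationalEquiv_pullback hy).1 hcount _
    (mem_fiber.2 (md_liftAfter ..)) _ (mem_fiber.2 (md_liftAfter ..)) hreg
  apply hne
  rw [← liftBefore_liftAfter (d := d) x y, heq, ← hmd, liftBefore_liftAfter]

lemma IsUniform.eventually_sameRegion_md (h : lam.IsUniform) (hF : lam.IsFamily F) (ht : t ∉ ratC)
    (hev : ∀ᶠ s in germAfter x, SameRegion (lam.pullback F) s t) :
    ∀ᶠ y in germAfter (md d x), SameRegion F y (md d t) := by
  filter_upwards [(tendsto_liftAfter x).eventually hev, eventually_germAfter_notMem_ratC]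
    with y hreg hy
  simpa only [md_liftAfter] using h.sameRegion_md hF (liftAfter_mem_ratC.not.2 hy) ht hreg

/-- Two linked germs above the same angle lie in a common critical unlinked class. -/
lemma IsUniform.exists_classCount_ne_of_germsLinked [d.AtLeastTwo] (h : lam.IsUniform)
    (hlink : lam.GermsLinked x x') (hx : x ∈ ratC) (hx' : x' ∈ ratC) (hne : x ≠ x')
    (hmd : md d x' = md d x) :
    ∃ y ∉ ratC, classCount d (UnlRel lam.rel) y ≠ d ∧
      ∀ F, lam.IsFamily F → ∀ᶠ s in germAfter (md d x), SameRegion F s y := by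
  obtain ⟨w, hw⟩ := exists_isNext_right (lam.finite_cls x) (RatLam.mem_cls_self hx)
  have hrel : lam.cls x = lam.cls w := RatLam.cls_eq hw.right_mem
  have hexposed : ¬ ∀ t ∈ arc x w, t ∉ ratC → ccwDist x t ∈ lam.coveredDist x w := fun hcov =>
    hlink.not_isInnerLimit hx hx' (hlink.mem_arc_of_isNext hx hx' hne hw)
      (isInnerLimit_of_covered hcov hw.notMem_arc fun p hp =>
        hw.notMem_arc p (hrel ▸ (RatLam.mem_cls.2 hp)))
  push Not at hexposed
  obtain ⟨t, htw, ht, hcov⟩ := hexposed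
  have hgerm : ∀ F, lam.IsFamily F → ∀ᶠ s in germAfter (md d x), SameRegion F s (md d t) :=
    fun F hF => h.eventually_sameRegion_md hF ht
      (RatLam.eventually_sameRegion_of_notMem_coveredDist hw htw ht hcov isFamily_pullback)
  have hmdt : md d t ∉ ratC := md_mem_ratC.not.2 ht
  refine ⟨md d t, hmdt, fun hcount => ?_, hgerm⟩
  obtain ⟨F, hF, -, hcountF⟩ :=
    lam.exists_family_classCount_eq (P := {md d t}) (by simpa using hmdt)
  have := neBot_germAfter (md_mem_ratC (d := d).2 hx)
  obtain ⟨s, hs, hst, hscount⟩ := (eventually_germAfter_notMem_ratC.and ((hgerm F hF).and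
    (eventually_classCount_ne_of_germsLinked (F := F) hlink hne hmd))).exists
  rw [h.classCount_eq_of_sameRegion hF hs hmdt hst, hcountF _ (Finset.mem_singleton_self _) F
    subset_rfl] at hscount
  exact hscount hcount

/-- Along `l`, some family larger than `F₀` splits every fiber completely, except above the regions
of `F₀` that meet `T`. -/
def IsResolved (lam : InvRatLam d) (F₀ : Finset (Set Circle1)) (T : Finset Circle1)
    (l : Filter Circle1) : Prop :=
  ∃ F, lam.IsFamily F ∧ F₀ ⊆ F ∧ ∀ᶠ y in l, y ∉ ratC →
    classCount d (SameRegion (lam.pullback F)) y = d ∨ ∃ t ∈ T, SameRegion F₀ y t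

lemma IsResolved.mono (h : lam.IsResolved F₀ T l) (hl : l' ≤ l) : lam.IsResolved F₀ T l' :=
  let ⟨F, hF, hsub, hev⟩ := h
  ⟨F, hF, hsub, hl hev⟩

lemma IsResolved.sup (h : lam.IsResolved F₀ T l) (h' : lam.IsResolved F₀ T l') :
    lam.IsResolved F₀ T (l ⊔ l') := by
  classical
  obtain ⟨F, hF, hsub, hev⟩ := h
  obtain ⟨F', hF', -, hev'⟩ := h'
  refine ⟨F ∪ F', hF.union hF', hsub.trans Finset.subset_union_left, eventually_sup.2 ⟨?_, ?_⟩⟩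
  · filter_upwards [hev] with y hres hy
    exact (hres hy).imp_left (classCount_pullback_eq_of_subset Finset.subset_union_left hy)
  · filter_upwards [hev'] with y hres hy
    exact (hres hy).imp_left (classCount_pullback_eq_of_subset Finset.subset_union_right hy)

lemma exists_family_separating_germs (lam : InvRatLam d) {P : Finset Circle1}
    (hP : ∀ x ∈ P, ∀ x' ∈ P, x ≠ x' → ¬ lam.GermsLinked x x') :
    ∃ F, lam.IsFamily F ∧ ∀ x ∈ P, ∀ x' ∈ P, x ≠ x' →
      ∀ᶠ p in germAfter x ×ˢ germAfter x', ¬ SameRegion (lam.pullback F) p.1 p.2 := by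
  classical
  have hsep : ∀ x x', ∃ z ∈ ratC, x ∈ P → x' ∈ P → x ≠ x' →
      ∀ᶠ p in germAfter x ×ˢ germAfter x', ¬ SameGap (lam.cls z) p.1 p.2 := fun x x' => by
    by_cases hlink : lam.GermsLinked x x'
    · exact ⟨0, ⟨0, by simp⟩, fun hx hx' hne => absurd hlink (hP x hx x' hx' hne)⟩
    · obtain ⟨z, hz, hsep⟩ := RatLam.exists_eventually_not_sameGap hlink
      exact ⟨z, hz, fun _ _ _ => hsep⟩
  choose z hz hsep using hsep
  refine ⟨(P ×ˢ P).image fun p => lam.cls (md d (z p.1 p.2)), fun A hA => ?_,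
    fun x hx x' hx' hne => ?_⟩
  · obtain ⟨p, -, rfl⟩ := Finset.mem_image.1 hA
    exact ⟨_, md_mem_ratC.2 (hz _ _), rfl⟩
  · filter_upwards [hsep x x' hx hx' hne] with p hp hreg
    exact hp (hreg _ ((cls_mem_pullback (hz x x')).2
      (Finset.mem_image.2 ⟨(x, x'), Finset.mk_mem_product hx hx', rfl⟩)))

lemma exists_family_eventually_classCount_eq
    (hlink : ∀ x ∈ fiber d z, ∀ x' ∈ fiber d z, x ≠ x' → ¬ lam.GermsLinked x x') :
    ∃ F, lam.IsFamily F ∧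
      ∀ᶠ y in germAfter z, classCount d (SameRegion (lam.pullback F)) y = d := by
  obtain ⟨F, hF, hsep⟩ := lam.exists_family_separating_germs hlink
  have hlift : ∀ x ∈ fiber d z, Tendsto (liftAfter d x) (germAfter z) (germAfter x) :=
    fun x hx => mem_fiber.1 hx ▸ tendsto_liftAfter x
  have hlifts : ∀ᶠ y in germAfter z, ∀ x ∈ fiber d z, ∀ x' ∈ fiber d z, x ≠ x' →
      ¬ SameRegion (lam.pullback F) (liftAfter d x y) (liftAfter d x' y) := by
    simp only [Finset.eventually_all, eventually_imp_distrib_left]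
    exact fun x hx x' hx' hne =>
      ((hlift x hx).prodMk (hlift x' hx')).eventually (hsep x hx x' hx' hne)
  refine ⟨F, hF, ?_⟩
  filter_upwards [hlifts, eventually_germAfter_notMem_ratC] with y hlifts hy
  refine (classCount_eq_iff isIrrationalEquiv_pullback hy).2 fun s hs s' hs' hss' => ?_
  by_contra hne
  have hback : ∀ s ∈ fiber d y, liftAfter d (liftBefore d s z) y = s := fun s hs => by
    rw [← mem_fiber.1 hs, liftAfter_liftBefore]
  refine hlifts (liftBefore d s z) (mem_fiber.2 (md_liftBefore ..)) (liftBefore d s' z)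
    (mem_fiber.2 (md_liftBefore ..)) (fun heq => hne ?_) (by rwa [hback s hs, hback s' hs'])
  rw [← hback s hs, heq, hback s' hs']

section Resolution

variable (h : lam.IsUniform) (hF₀ : lam.IsFamily F₀)
  (hT : ∀ y ∉ ratC, classCount d (UnlRel lam.rel) y ≠ d → ∃ t ∈ T, UnlRel lam.rel y t)
include h hF₀ hT

lemma IsUniform.isResolved_germAfter [d.AtLeastTwo] (hz : z ∈ ratC) :
    lam.IsResolved F₀ T (germAfter z) := by
  classical
  by_cases hlink : ∀ x ∈ fiber d z, ∀ x' ∈ fiber d z, x ≠ x' → ¬ lam.GermsLinked x x'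
  · obtain ⟨F, hF, hev⟩ := exists_family_eventually_classCount_eq hlink
    refine ⟨F₀ ∪ F, hF₀.union hF, Finset.subset_union_left, ?_⟩
    filter_upwards [hev] with y hcount hy
    exact .inl (classCount_pullback_eq_of_subset Finset.subset_union_right hy hcount)
  · push Not at hlink
    obtain ⟨x, hx, x', hx', hne, hlink⟩ := hlink
    obtain ⟨y, hy, hcount, hev⟩ := h.exists_classCount_ne_of_germsLinked hlink
      (mem_ratC_of_mem_fiber hz hx) (mem_ratC_of_mem_fiber hz hx') hne
      ((mem_fiber.1 hx').trans (mem_fiber.1 hx).symm)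
    rw [mem_fiber.1 hx] at hev
    obtain ⟨t, ht, hyt⟩ := hT y hy hcount
    refine ⟨F₀, hF₀, subset_rfl, ?_⟩
    filter_upwards [hev F₀ hF₀] with s hs _
    exact .inr ⟨t, ht, hs.trans (hyt.sameRegion hF₀)⟩

/-- The region just before `z` is the one just after the vertex preceding `z` in its class. -/
lemma IsUniform.isResolved_germBefore [d.AtLeastTwo] (hz : z ∈ ratC) :
    lam.IsResolved F₀ T (germBefore z) := by
  classical
  obtain ⟨u, hu⟩ := exists_isNext_left (lam.finite_cls z) (RatLam.mem_cls_self hz)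
  have hur := RatLam.mem_ratC_of_mem_cls hu.left_mem
  obtain ⟨F, hF, hsub, hev⟩ := h.isResolved_germAfter hF₀ hT hur
  have hG := hF.union (RatLam.isFamily_singleton hz)
  set G := F ∪ {lam.cls z}
  have hFG : F ⊆ G := Finset.subset_union_left
  have hzG : lam.cls z ∈ G := Finset.mem_union_right _ (Finset.mem_singleton_self _)
  have hfin := hG.isUnlinkedFamily.finite_vertices
  have := neBot_germAfter hur
  obtain ⟨s, hs, hsr, hsu⟩ := (hev.and
    (eventually_germAfter_notMem_ratC.and (eventually_justAfter hfin))).exists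
  refine ⟨G, hG, hsub.trans hFG, ?_⟩
  filter_upwards [eventually_justBefore hfin, eventually_germBefore_notMem_ratC] with s' hs'z hs'r _
  have hss' := sameRegion_of_isNext hG.isUnlinkedFamily hzG hu hsr hs'r hsu hs'z
  refine (hs hsr).imp (fun hcount => ?_) fun ⟨t, ht, hst⟩ =>
    ⟨t, ht, (hss'.mono (hsub.trans hFG)).trans hst⟩
  rw [h.classCount_eq_of_sameRegion hG hs'r hsr hss']
  exact classCount_pullback_eq_of_subset hFG hsr hcount

lemma IsUniform.isResolved_nhds_of_notMem_ratC (hz : z ∉ ratC) : lam.IsResolved F₀ T (𝓝 z) := by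
  classical
  by_cases hcount : classCount d (UnlRel lam.rel) z = d
  · obtain ⟨F, hF, -, hcountF⟩ := lam.exists_family_classCount_eq (P := {z}) (by simpa using hz)
    have hG := hF₀.union hF
    have hGu := hG.isUnlinkedFamily
    refine ⟨F₀ ∪ F, hG, Finset.subset_union_left, ?_⟩
    filter_upwards [eventually_sameRegion hGu fun hmem => hz (hGu.vertices_subset_ratC hmem)]
      with y hzy hy
    rw [← h.classCount_eq_of_sameRegion hG hz hy hzy, hcountF z (Finset.mem_singleton_self z) _
      Finset.subset_union_right]
    exact .inl hcount
  · obtain ⟨t, ht, hzt⟩ := hT z hz hcount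
    have hFu := hF₀.isUnlinkedFamily
    refine ⟨F₀, hF₀, subset_rfl, ?_⟩
    filter_upwards [eventually_sameRegion hFu fun hmem => hz (hFu.vertices_subset_ratC hmem)]
      with y hzy _
    exact .inr ⟨t, ht, hzy.symm.trans (hzt.sameRegion hF₀)⟩

lemma IsUniform.isResolved_nhds [d.AtLeastTwo] (z : Circle1) : lam.IsResolved F₀ T (𝓝 z) := by
  by_cases hz : z ∈ ratC
  · obtain ⟨F, hF, hsub, hev⟩ := ((h.isResolved_germAfter hF₀ hT hz).sup
      (h.isResolved_germBefore hF₀ hT hz)).mono (nhdsWithin_compl_ratC_le hz)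
    refine ⟨F, hF, hsub, ?_⟩
    filter_upwards [eventually_nhdsWithin_iff.1 hev] with y hres hy
    exact hres hy hy
  · exact h.isResolved_nhds_of_notMem_ratC hF₀ hT hz

lemma IsUniform.isResolved_top [d.AtLeastTwo] : lam.IsResolved F₀ T ⊤ := by
  rw [← principal_univ]
  refine isCompact_univ.induction_on (p := fun s => lam.IsResolved F₀ T (𝓟 s))
    ⟨F₀, hF₀, subset_rfl, by simp⟩ (fun s s' hs hs' => hs'.mono (principal_mono.2 hs))
    (fun s s' hs hs' => sup_principal (s := s) (t := s') ▸ hs.sup hs') fun z _ => ?_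
  obtain ⟨F, hF, hsub, hev⟩ := h.isResolved_nhds hF₀ hT z
  exact ⟨_, mem_nhdsWithin_of_mem_nhds hev, F, hF, hsub, eventually_principal.2 fun _ hy => hy⟩

end Resolution

end InvRatLam

/-! ### The degree formula -/

lemma classDeg_one_of_injOn {d : ℕ} {C : Set Circle1} (h : InjOn (md d) C) : classDeg d C 1 := by
  rintro _ ⟨x, hx, rfl⟩
  refine ncard_eq_one.2 ⟨x, ext fun y => ⟨fun hy => h hy.1 hx hy.2, ?_⟩⟩
  rintro rfl
  exact ⟨hx, rfl⟩

open Classical in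
lemma sub_classCount_eq_sum {d : ℕ} [NeZero d] {E : Circle1 → Circle1 → Prop} {y : Circle1}
    (hE : IsIrrationalEquiv E) (hy : y ∉ ratC) :
    d - classCount d E y =
      ∑ K ∈ (fiber d y).image fun x => {x' | E x x'}, ({x | x ∈ K ∧ md d x = y}.ncard - 1) := by
  have hcard : ∀ K ∈ (fiber d y).image fun x => {x' | E x x'},
      {x | x ∈ K ∧ md d x = y}.ncard = {x ∈ fiber d y | {x' | E x x'} = K}.card := fun K hK => by
    obtain ⟨z, -, rfl⟩ := Finset.mem_image.1 hK
    rw [← ncard_coe_finset]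
    congr 1
    ext x
    simp only [Finset.coe_filter, mem_fiber, mem_ofPred_eq, and_comm (a := E z x)]
    exact and_congr_right fun hx =>
      eq_comm.trans (hE.setOf_eq_iff (notMem_ratC_of_mem_fiber hy (mem_fiber.2 hx))) |>.symm
  have hpos : ∀ K ∈ (fiber d y).image fun x => {x' | E x x'},
      1 ≤ {x ∈ fiber d y | {x' | E x x'} = K}.card := fun K hK => by
    obtain ⟨z, hz, rfl⟩ := Finset.mem_image.1 hK
    exact Finset.card_pos.2 ⟨z, Finset.mem_filter.2 ⟨hz, rfl⟩⟩
  rw [Finset.sum_congr rfl fun K hK => by rw [hcard K hK], Finset.sum_tsub_distrib _ hpos,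
    ← Finset.card_eq_sum_card_image, card_fiber, Finset.sum_const, smul_eq_mul, mul_one, classCount]

lemma RatLam.not_isUnlClass_cls {lam : RatLam} {x : Circle1} (hx : x ∈ ratC) :
    ¬ IsUnlClass lam.rel (lam.cls x) := by
  rintro ⟨θ, -, h⟩
  have hθx : x ∈ {θ' | UnlRel lam.rel θ θ'} := h ▸ RatLam.mem_cls_self hx
  exact hθx.right hx

namespace InvRatLam

variable {d : ℕ} {lam : InvRatLam d} {R S U : Finset (Set Circle1)} {T : Finset Circle1}
  {δ : Set Circle1 → ℕ} {t θ : Circle1}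

lemma exists_isDegreeFun_extending (hδ : ∀ C ∈ S, classDeg d C (δ C))
    (hS : ∀ x ∈ ratC, ¬ InjOn (md d) (lam.cls x) → lam.cls x ∈ S) :
    ∃ δ', lam.IsDegreeFun δ' ∧ (∀ C ∈ S, δ' C = δ C) ∧ ∀ C ∉ S, δ' C = 1 := by
  classical
  refine ⟨fun C => if C ∈ S then δ C else 1, fun x hx => ?_, fun C hC => if_pos hC,
    fun C hC => if_neg hC⟩
  dsimp only
  split_ifs with hxS
  · exact hδ _ hxS
  · exact classDeg_one_of_injOn (not_imp_comm.1 (hS x hx) hxS)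

variable [NeZero d]

lemma IsUniform.image_md_unlClass (h : lam.IsUniform) (θ : Circle1) :
    md d '' {x | UnlRel lam.rel θ x} = {y | UnlRel lam.rel (md d θ) y} := by
  ext y
  constructor
  · rintro ⟨x, hx, rfl⟩
    exact h.unlRel_md hx
  · intro hy
    obtain ⟨x, rfl, hx⟩ := h.exists_unlRel_of_unlRel_md hy
    exact ⟨x, hx, rfl⟩

section CriticalUnlinkedClasses

variable (h : lam.IsUniform) (hU : ∀ L, L ∈ U ↔ IsUnlClass lam.rel L ∧ ¬ InjOn (md d) L)
  (hδ : ∀ L ∈ U, classDeg d L (δ L))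
include h hU hδ

open Classical in
lemma IsUniform.sum_over_unlClass (ht : t ∉ ratC) :
    ∑ L ∈ U with md d '' L = {y | UnlRel lam.rel t y}, (δ L - 1) =
      d - classCount d (UnlRel lam.rel) t := by
  rw [sub_classCount_eq_sum lam.isIrrationalEquiv_unlRel ht]
  have hmem : ∀ L ∈ {L ∈ U | md d '' L = {y | UnlRel lam.rel t y}}, t ∈ md d '' L := fun L hL =>
    (Finset.mem_filter.1 hL).2 ▸ UnlRel.refl ht
  have hterm : ∀ L ∈ {L ∈ U | md d '' L = {y | UnlRel lam.rel t y}},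
      δ L - 1 = {x | x ∈ L ∧ md d x = t}.ncard - 1 := fun L hL => by
    rw [hδ L (Finset.mem_filter.1 hL).1 t (hmem L hL)]
  rw [Finset.sum_congr rfl hterm]
  refine Finset.sum_subset (fun L hL => ?_) fun K hK hKU => ?_
  · obtain ⟨⟨θ, -, rfl⟩, -⟩ := (hU L).1 (Finset.mem_filter.1 hL).1
    obtain ⟨x, hx, rfl⟩ := hmem _ hL
    exact Finset.mem_image.2 ⟨x, mem_fiber.2 rfl,
      ((lam.isIrrationalEquiv_unlRel.setOf_eq_iff hx.right).2 hx).symm⟩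
  · obtain ⟨x, hx, rfl⟩ := Finset.mem_image.1 hK
    have hxr := notMem_ratC_of_mem_fiber ht hx
    rw [mem_fiber] at hx
    have hinj : InjOn (md d) {x' | UnlRel lam.rel x x'} := by
      by_contra hinj
      exact hKU (Finset.mem_filter.2 ⟨(hU _).2 ⟨⟨x, hxr, rfl⟩, hinj⟩, hx ▸ h.image_md_unlClass x⟩)
    rw [classDeg_one_of_injOn hinj t ⟨x, UnlRel.refl hxr, hx⟩, Nat.sub_self]

lemma IsUniform.exists_criticalValues :
    ∃ T : Finset Circle1, (∀ t ∈ T, t ∉ ratC) ∧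
      (∀ t ∈ T, ∀ t' ∈ T, UnlRel lam.rel t t' → t = t') ∧
      (∀ y ∉ ratC, classCount d (UnlRel lam.rel) y ≠ d → ∃ t ∈ T, UnlRel lam.rel y t) ∧
      ∑ L ∈ U, (δ L - 1) = ∑ t ∈ T, (d - classCount d (UnlRel lam.rel) t) := by
  classical
  set V := U.image (md d '' ·)
  have hV : ∀ M ∈ V, ∃ t ∉ ratC, M = {y | UnlRel lam.rel t y} := fun M hM => by
    obtain ⟨L, hL, rfl⟩ := Finset.mem_image.1 hM
    obtain ⟨⟨θ, hθ, rfl⟩, -⟩ := (hU L).1 hL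
    exact ⟨md d θ, md_mem_ratC.not.2 hθ, h.image_md_unlClass θ⟩
  choose! τ hτ hτV using hV
  have hsep : ∀ M ∈ V, ∀ M' ∈ V, UnlRel lam.rel (τ M) (τ M') → M = M' := fun M hM M' hM' hrel => by
    rw [hτV M hM, hτV M' hM']
    exact (lam.isIrrationalEquiv_unlRel.setOf_eq_iff hrel.right).2 hrel
  refine ⟨V.image τ, ?_, ?_, fun y hy hcount => ?_, ?_⟩
  · simpa only [Finset.forall_mem_image] using hτ
  · simp only [Finset.forall_mem_image]
    exact fun M hM M' hM' hrel => congrArg τ (hsep M hM M' hM' hrel)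
  · rw [Ne, classCount_eq_iff lam.isIrrationalEquiv_unlRel hy] at hcount
    push Not at hcount
    obtain ⟨x, hx, x', hx', hxx', hne⟩ := hcount
    have hL : {z | UnlRel lam.rel x z} ∈ U := (hU _).2 ⟨⟨x, hxx'.left, rfl⟩, fun hinj =>
      hne (hinj (UnlRel.refl hxx'.left) hxx' ((mem_fiber.1 hx).trans (mem_fiber.1 hx').symm))⟩
    have hM : {z | UnlRel lam.rel y z} ∈ V :=
      Finset.mem_image.2 ⟨_, hL, mem_fiber.1 hx ▸ h.image_md_unlClass x⟩
    exact ⟨_, Finset.mem_image_of_mem τ hM,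
      (lam.isIrrationalEquiv_unlRel.setOf_eq_iff (hτ _ hM)).1 (hτV _ hM)⟩
  · have hinj : InjOn τ V := fun M hM M' hM' heq =>
      hsep M hM M' hM' (heq ▸ UnlRel.refl (hτ M hM))
    rw [Finset.sum_image hinj,
      ← Finset.sum_fiberwise_of_maps_to fun L hL => Finset.mem_image_of_mem (md d '' ·) hL]
    refine Finset.sum_congr rfl fun M hM => ?_
    rw [← h.sum_over_unlClass hU hδ (hτ M hM), ← hτV M hM]

end CriticalUnlinkedClasses

section Assembly

variable (hR : ∀ A ∈ R, ∃ x ∈ ratC, lam.cls x = A)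
  (hRδ : ∀ x ∈ ratC, lam.cls x ∉ R → δ (lam.cls x) = 1)
include hR hRδ

lemma exists_family_sum_pullback_eq :
    ∃ F₁, lam.IsFamily F₁ ∧ ∀ F, F₁ ⊆ F → ∑ A ∈ lam.pullback F, (δ A - 1) = ∑ A ∈ R, (δ A - 1) := by
  classical
  refine ⟨R.image (md d '' ·), fun B hB => ?_, fun F hF => ?_⟩
  · obtain ⟨A, hA, rfl⟩ := Finset.mem_image.1 hB
    obtain ⟨x, hx, rfl⟩ := hR A hA
    exact ⟨md d x, md_mem_ratC.2 hx, (image_md_cls hx).symm⟩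
  · refine (Finset.sum_subset (fun A hA => ?_) fun A hA hAR => ?_).symm
    · obtain ⟨x, hx, rfl⟩ := hR A hA
      exact (cls_mem_pullback hx).2 (hF (image_md_cls hx ▸ Finset.mem_image_of_mem _ hA))
    · obtain ⟨x, hx, rfl⟩ := isFamily_pullback A hA
      rw [hRδ x hx hAR, Nat.sub_self]

theorem IsDegreeFun.degree_eq [d.AtLeastTwo] (hδ : lam.IsDegreeFun δ) (hTirr : ∀ t ∈ T, t ∉ ratC)
    (hTsep : ∀ t ∈ T, ∀ t' ∈ T, UnlRel lam.rel t t' → t = t')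
    (hT : ∀ y ∉ ratC, classCount d (UnlRel lam.rel) y ≠ d → ∃ t ∈ T, UnlRel lam.rel y t) :
    d = 1 + ∑ A ∈ R, (δ A - 1) + ∑ t ∈ T, (d - classCount d (UnlRel lam.rel) t) := by
  classical
  obtain ⟨F₁, hF₁, hsum⟩ := exists_family_sum_pullback_eq hR hRδ
  obtain ⟨F₂, hF₂, hsep, hcount⟩ := lam.exists_family_classCount_eq hTirr
  have hF₀ := hF₁.union hF₂
  set F₀ := F₁ ∪ F₂
  have hF₁₀ : F₁ ⊆ F₀ := Finset.subset_union_left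
  have hF₂₀ : F₂ ⊆ F₀ := Finset.subset_union_right
  obtain ⟨F, hF, hF₀F, hres⟩ := hδ.isUniform.isResolved_top hF₀ hT
  rw [eventually_top] at hres
  obtain ⟨Y, hTY, hY⟩ := hF.isUnlinkedFamily.exists_isTransversal_superset hTirr
    fun t ht t' ht' htt' => hTsep t ht t' ht' (hsep t ht t' ht' (htt'.mono (hF₂₀.trans hF₀F)))
  have hzero : ∀ y ∈ Y, y ∉ T → d - classCount d (SameRegion (lam.pullback F)) y = 0 :=
    fun y hy hyT => by
      refine Nat.sub_eq_zero_of_le (Eq.ge ?_)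
      refine (hres y (hY.irrational y hy)).elim id fun ⟨t, ht, hyt⟩ => ?_
      refine hδ.classCount_pullback_eq_of_not_sameRegion hF₀
        (fun G _ hG => (hsum G (hF₁₀.trans hG)).trans (hsum F₀ hF₁₀).symm) (hTirr t ht)
        (hY.irrational y hy) (fun G _ hG => (hcount t ht G (hF₂₀.trans hG)).trans
          (hcount t ht F₀ hF₂₀).symm) hyt hF hF₀F fun hyt => hyT ?_
      rwa [hY.eq_of_sameRegion y hy t (hTY ht) hyt]
  calc d = 1 + ∑ A ∈ lam.pullback F, (δ A - 1) +
        ∑ y ∈ Y, (d - classCount d (SameRegion (lam.pullback F)) y) := hδ.riemann_hurwitz hF hY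
    _ = 1 + ∑ A ∈ R, (δ A - 1) +
        ∑ t ∈ T, (d - classCount d (SameRegion (lam.pullback F)) t) := by
      rw [hsum F (hF₁₀.trans hF₀F), Finset.sum_subset hTY hzero]
    _ = _ := congrArg _ <| Finset.sum_congr rfl fun t ht => by
      rw [hcount t ht F (hF₂₀.trans hF₀F)]

end Assembly

end InvRatLam

/-- The degrees of the critical elements of a `d`-invariant rational
lamination satisfy `d = 1 + Σ_{C ∈ Crit(λ)} (δ(C) − 1)`. -/
theorem degree_sum_formula (d : ℕ) (hd : 2 ≤ d) (lam : InvRatLam d)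
    (S : Finset (Set Circle1)) (hS : ∀ C : Set Circle1, C ∈ S ↔ CritElem d lam.rel C)
    (δf : Set Circle1 → ℕ) (hδ : ∀ C ∈ S, classDeg d C (δf C)) :
    d = 1 + ∑ C ∈ S, (δf C - 1) := by
  classical
  have : d.AtLeastTwo := ⟨hd⟩
  obtain ⟨δ, hdeg, hδS, hδone⟩ := InvRatLam.exists_isDegreeFun_extending (lam := lam) hδ
    fun x hx hinj => (hS _).2 (.inl ⟨⟨x, (InvRatLam.setOf_realExt_eq_cls hx).symm⟩, hinj⟩)
  have hcrit := fun C => (hS C).trans hdeg.isUniform.critElem_iff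
  obtain ⟨T, hTirr, hTsep, hT, hsumT⟩ := hdeg.isUniform.exists_criticalValues
    (U := {C ∈ S | IsUnlClass lam.rel C}) (δ := δf)
    (fun L => by rw [Finset.mem_filter, hcrit]; tauto)
    fun L hL => hδ L (Finset.mem_filter.1 hL).1
  have hformula := hdeg.degree_eq (R := {C ∈ S | ¬ IsUnlClass lam.rel C}) (fun A hA => ?_)
    (fun x hx hxR => ?_) hTirr hTsep hT
  · rw [Finset.sum_congr rfl fun A hA => by rw [hδS A (Finset.mem_filter.1 hA).1], ← hsumT,
      add_assoc, add_comm (Finset.sum _ _), Finset.sum_filter_add_sum_filter_not] at hformula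
    exact hformula
  · obtain ⟨hAS, hA⟩ := Finset.mem_filter.1 hA
    obtain ⟨x, hx, rfl⟩ := ((hcrit A).1 hAS).1.resolve_right hA
    exact ⟨x, hx, rfl⟩
  · exact hδone _ fun hxS => hxR (Finset.mem_filter.2 ⟨hxS, RatLam.not_isUnlClass_cls hx⟩)
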